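/- arXiv:math/0511665 — 11 statements merged into one kernel-verified Lean document; each statement's English description precedes it below -/
import Mathlib

section
/- Let k be a field of prime characteristic p and V a k-vector space. Let W = V^{⊗p} be the p-fold tensor power of V over k, regarded as a representation of the cyclic group ℤ/pℤ in which a fixed generator acts by the k-linear cyclic permutation of tensor factors (v₁⊗…⊗v_p ↦ v_p⊗v₁⊗…⊗v_{p−1}). Then for every integer l ≥ 1, the group homology H_l(ℤ/pℤ, W) is isomorphic to V as a k-vector space. -/
open scoped TensorProduct
open CategoryTheory

/-- The cyclic permutation `σ` of the `p`-fold tensor power `V^{⊗p}`, sending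
`v₁⊗…⊗v_p` to `v_p⊗v₁⊗…⊗v_{p−1}`. -/
noncomputable def cyclicPerm (k : Type*) [CommSemiring k] (p : ℕ) (V : Type*)
    [AddCommMonoid V] [Module k V] : (⨂[k]^p V) →ₗ[k] (⨂[k]^p V) :=
  (PiTensorProduct.reindex k (fun _ : Fin p => V) (finRotate p)).toLinearMap

/-!
Let `G = ℤ/pℤ` with generator `g`, `R = k[G]`, `a = g - 1` and `N = ∑ h`. A basis of `V` indexed by
`ι` gives a basis of `W = V^{⊗p}` indexed by `X = (Fin p → ι)`, which `G` permutes by rotation. As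
`p` is prime, every point of `X` is either fixed or has trivial stabilizer, so `W = T ⊕ F`, where
`F` is `R`-free on representatives of the free orbits and `T` is spanned by the fixed basis vectors
(`exists_decomposition`). The fixed points are the constant functions, hence are indexed by `ι`.

The projective summand `F` contributes nothing to `Tor` in positive degrees (`tor_succ_prod`). In
`R`, the annihilator of `a` is `N R` and the annihilator of `N` is `a R`, while `T` is the quotient
of `A = R^(ι)` by `a A`; hence `T` has the periodic resolution
`⋯ ⟶ A ⟶ A ⟶ A ⟶ T` whose differentials are alternately `a` and `N`. On the trivial module `k`
both `a` and `N` act by zero, the latter because `N` has augmentation `p = 0`. So all differentials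
vanish after applying `k ⊗_R -`, and `Tor_l(k, T) ≅ k ⊗_R R^(ι) ≅ k^(ι) ≅ V` for every `l`
(`tor_periodic`).
-/

/-! ### The group algebra of a finite cyclic group -/

section GroupAlgebra
variable {k : Type} [Field k] {G : Type} [CommGroup G]

/-- The augmentation `k[G] → k`, sending every group element to `1`. -/
noncomputable def augmentation (k G : Type) [Field k] [CommGroup G] : MonoidAlgebra k G →ₐ[k] k :=
  MonoidAlgebra.lift k k G 1

@[simp] lemma augmentation_single (g : G) (c : k) :
    augmentation k G (MonoidAlgebra.single g c) = c := by
  simp [augmentation]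

@[simp] lemma augmentation_of (g : G) : augmentation k G (MonoidAlgebra.of k G g) = 1 := by
  simp [augmentation]

variable [Fintype G]

/-- The norm element `∑ h` of `k[G]`. -/
noncomputable def normElt (k G : Type) [Field k] [CommGroup G] [Fintype G] : MonoidAlgebra k G :=
  ∑ h : G, MonoidAlgebra.of k G h

lemma of_mul_normElt (g : G) : MonoidAlgebra.of k G g * normElt k G = normElt k G := by
  simp only [normElt, Finset.mul_sum, ← map_mul]
  exact Fintype.sum_bijective _ (Group.mulLeft_bijective g) _ _ fun _ => rfl

lemma mul_normElt (r : MonoidAlgebra k G) :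
    r * normElt k G = augmentation k G r • normElt k G := by
  induction r using MonoidAlgebra.induction_on with
  | of g => rw [of_mul_normElt, augmentation_of, one_smul]
  | add x y hx hy => simp [add_mul, add_smul, hx, hy]
  | smul c x hx => simp [hx, mul_smul]

lemma coeff_normElt (g : G) : (normElt k G).coeff g = 1 := by
  classical
  simp [normElt, MonoidAlgebra.of_apply, MonoidAlgebra.coeff_single, Finsupp.single_apply]

variable {g : G} (hg : ∀ h : G, ∃ n : ℕ, g ^ n = h)
include hg

omit [Fintype G] in
/-- For `G` cyclic, the augmentation ideal is generated by `g - 1`, since `g - 1` divides each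
`g ^ n - 1`. -/
lemma of_sub_one_dvd_iff (r : MonoidAlgebra k G) :
    MonoidAlgebra.of k G g - 1 ∣ r ↔ augmentation k G r = 0 := by
  constructor
  · rintro ⟨s, rfl⟩
    simp
  · intro hr
    have key : MonoidAlgebra.of k G g - 1 ∣
        r - algebraMap k (MonoidAlgebra k G) (augmentation k G r) := by
      clear hr
      induction r using MonoidAlgebra.induction_on with
      | of h =>
        obtain ⟨n, rfl⟩ := hg h
        rw [augmentation_of, map_one, map_pow]
        exact sub_one_dvd_pow_sub_one _ n
      | add x y hx hy =>
        rw [map_add, map_add, add_sub_add_comm]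
        exact dvd_add hx hy
      | smul c x hx =>
        obtain ⟨s, hs⟩ := hx
        refine ⟨c • s, ?_⟩
        rw [mul_smul_comm, ← hs, map_smul, smul_sub, Algebra.algebraMap_eq_smul_one,
          Algebra.algebraMap_eq_smul_one, smul_assoc]
    simpa [hr] using key

/-- The annihilator of the norm element is the augmentation ideal, because `r * N` is the
augmentation of `r` times `N`. -/
lemma dvd_of_normElt_mul (r : MonoidAlgebra k G) (h : normElt k G * r = 0) :
    MonoidAlgebra.of k G g - 1 ∣ r := by
  rw [of_sub_one_dvd_iff hg]
  rw [mul_comm, mul_normElt] at h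
  simpa [coeff_normElt] using congrArg (fun x => x.coeff g) h

/-- An element fixed by `g` has constant coefficients, so it is a multiple of the norm element. -/
lemma normElt_dvd_of_mul (r : MonoidAlgebra k G) (h : (MonoidAlgebra.of k G g - 1) * r = 0) :
    normElt k G ∣ r := by
  refine ⟨algebraMap k _ (r.coeff 1), ?_⟩
  have h1 : MonoidAlgebra.of k G g * r = r := by simpa [sub_mul, sub_eq_zero] using h
  have h2 : ∀ n : ℕ, MonoidAlgebra.of k G (g ^ n) * r = r := by
    intro n
    induction n with
    | zero => rw [pow_zero, map_one, one_mul]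
    | succ n ih => rw [pow_succ, map_mul, mul_assoc, h1, ih]
  rw [mul_comm, ← Algebra.smul_def]
  ext x
  obtain ⟨n, rfl⟩ := hg x
  have := congrArg (fun y => y.coeff (g ^ n)) (h2 n)
  simp [MonoidAlgebra.of_apply, MonoidAlgebra.coeff_single_mul_apply] at this
  simp [coeff_normElt, this]

end GroupAlgebra

/-! ### Permutation modules -/

/-- Induction on `k[G]^(S)` from the elements with a single coefficient at a single basis vector. -/
lemma comb_induction {k G S : Type} [Field k] {P : (S →₀ MonoidAlgebra k G) → Prop}
    (f : S →₀ MonoidAlgebra k G) (h0 : P 0) (hadd : ∀ f g, P f → P g → P (f + g))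
    (hs : ∀ s g c, P (Finsupp.single s (MonoidAlgebra.single g c))) : P f := by
  induction f using Finsupp.induction_linear with
  | zero => exact h0
  | add f g hf hg => exact hadd f g hf hg
  | single s r =>
    induction r using MonoidAlgebra.induction_linear with
    | zero => simpa using h0
    | add x y hx hy => rw [Finsupp.single_add]; exact hadd _ _ hx hy
    | single g c => exact hs s g c

section PermutationModule
variable {k : Type} [Field k] {G : Type} [CommGroup G]
  {X : Type} [MulAction G X] {W : Type} [AddCommGroup W] [Module k W] [Module (MonoidAlgebra k G) W]
  [IsScalarTower k (MonoidAlgebra k G) W] (b : Module.Basis X k W)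
  (hb : ∀ (g : G) (x : X), MonoidAlgebra.of k G g • b x = b (g • x))

/-- The `k[G]`-linear map `k[G]^(S) → W` determined by the basis vectors of `W` indexed by a family
`f : S → X`. -/
noncomputable abbrev comb {S : Type} (f : S → X) :
    (S →₀ MonoidAlgebra k G) →ₗ[MonoidAlgebra k G] W :=
  Finsupp.linearCombination _ fun s => b (f s)

include hb

lemma comb_single {S : Type} (f : S → X) (s : S) (g : G) (c : k) :
    comb b f (Finsupp.single s (MonoidAlgebra.single g c)) = c • b (g • f s) := by
  have : (MonoidAlgebra.single g c : MonoidAlgebra k G) = c • MonoidAlgebra.of k G g := by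
    simp
  simp [comb, this, -MonoidAlgebra.of_apply, hb, -MonoidAlgebra.smul_single]

lemma repr_comb_fixed (f : MulAction.fixedPoints G X →₀ MonoidAlgebra k G)
    (x : MulAction.fixedPoints G X) :
    b.repr (comb b Subtype.val f) x = augmentation k G (f x) := by
  classical
  induction f using comb_induction with
  | h0 => simp
  | hadd f g hf hg => simp_all
  | hs s g c =>
    rw [comb_single b hb, s.2 g]
    by_cases h : s = x <;> simp_all [Finsupp.single_apply, Subtype.ext_iff]

lemma repr_comb_fixed_of_not (f : MulAction.fixedPoints G X →₀ MonoidAlgebra k G)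
    (x : X) (hx : x ∉ MulAction.fixedPoints G X) :
    b.repr (comb b Subtype.val f) x = 0 := by
  classical
  induction f using comb_induction with
  | h0 => simp
  | hadd f g hf hg => simp_all
  | hs s g c =>
    rw [comb_single b hb, s.2 g]
    have : (s : X) ≠ x := by rintro rfl; exact hx s.2
    simp [this]

/-- If the points `h • i s` are pairwise distinct, the coordinates of `comb b i f` at them are the
coefficients of `f`; in particular `comb b i` is then injective. -/
lemma repr_comb_free {S : Type} (i : S → X)
    (hi : ∀ s s' (h h' : G), h • i s = h' • i s' → s = s' ∧ h = h')
    (f : S →₀ MonoidAlgebra k G) (s : S) (h : G) :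
    b.repr (comb b i f) (h • i s) = (f s).coeff h := by
  classical
  induction f using comb_induction with
  | h0 => simp
  | hadd f g hf hg => simp_all
  | hs s' h' c =>
    rw [comb_single b hb]
    by_cases hs : s' = s
    · subst hs
      by_cases hh : h' = h
      · simp [hh]
      · have : h' • i s' ≠ h • i s' := fun e => hh (hi _ _ _ _ e).2
        simp [this, hh, MonoidAlgebra.coeff_single]
    · have : h' • i s' ≠ h • i s := fun e => hs (hi _ _ _ _ e).1
      simp [this, hs]

/-- If every point of `X` is fixed or has trivial stabilizer, then `W` is the direct sum of the span
of the fixed basis vectors and a free module. -/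
lemma exists_decomposition
    (hfree : ∀ x : X, x ∈ MulAction.fixedPoints G X ∨ ∀ h : G, h • x = x → h = 1) :
    ∃ S : Type, Nonempty ((LinearMap.range (comb (G := G) b
      (Subtype.val : MulAction.fixedPoints G X → X)) × (S →₀ MonoidAlgebra k G))
        ≃ₗ[MonoidAlgebra k G] W) := by
  classical
  let Ω := MulAction.orbitRel.Quotient G X
  -- one representative for each orbit that is not a fixed point
  let S := {ω : Ω // ω.out ∉ MulAction.fixedPoints G X}
  let i : S → X := fun ω => ω.1.out
  have hmk : ∀ (ω : Ω) (h : G), (Quotient.mk'' (h • ω.out) : Ω) = ω := fun ω h =>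
    (MulAction.orbitRel.Quotient.quotient_smul_eq).trans (Quotient.out_eq' ω)
  have hi : ∀ s s' (h h' : G), h • i s = h' • i s' → s = s' ∧ h = h' := by
    intro s s' h h' e
    have hs : s = s' := by
      apply Subtype.ext
      rw [← hmk s.1 h, ← hmk s'.1 h']
      exact congrArg _ e
    subst hs
    refine ⟨rfl, ?_⟩
    have := (hfree (i s)).resolve_left s.2 (h'⁻¹ * h) (by rw [mul_smul, e, inv_smul_smul])
    exact (inv_mul_eq_one.1 this).symm
  have hnf : ∀ (s : S) (h : G), h • i s ∉ MulAction.fixedPoints G X := by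
    intro s h hx
    apply s.2
    have := hx h⁻¹
    rw [inv_smul_smul] at this
    change i s ∈ _
    rw [this]
    exact hx
  let Q := comb (G := G) b (Subtype.val : MulAction.fixedPoints G X → X)
  let L := comb (G := G) b i
  refine ⟨S, ⟨LinearEquiv.ofBijective (LinearMap.coprod (LinearMap.range Q).subtype L) ⟨?_, ?_⟩⟩⟩
  · rw [injective_iff_map_eq_zero]
    rintro ⟨⟨_, f', rfl⟩, f⟩ h
    have h : Q f' + L f = 0 := by simpa using h
    have hf : f = 0 := by
      ext s x
      have := DFunLike.congr_fun (congrArg b.repr h) (x • i s)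
      rw [map_add, Finsupp.add_apply, repr_comb_fixed_of_not b hb _ _ (hnf s x),
        repr_comb_free b hb i hi] at this
      simpa using this
    subst hf
    simp at h
    simp [h]
  · rw [← LinearMap.range_eq_top, LinearMap.range_coprod, Submodule.range_subtype]
    rw [← Submodule.restrictScalars_eq_top_iff k, eq_top_iff, ← b.span_eq, Submodule.span_le]
    rintro _ ⟨x, rfl⟩
    by_cases hx : x ∈ MulAction.fixedPoints G X
    · exact Submodule.mem_sup_left ⟨Finsupp.single ⟨x, hx⟩ 1, by simp [Q, comb]⟩
    · apply Submodule.mem_sup_right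
      obtain ⟨h, hh⟩ : ∃ h : G, h • (Quotient.mk'' x : Ω).out = x := by
        have := Quotient.exact' (Quotient.out_eq' (Quotient.mk'' x : Ω)).symm
        exact MulAction.orbitRel_apply.1 this
      have hs : (Quotient.mk'' x : Ω).out ∉ MulAction.fixedPoints G X := by
        intro hf
        rw [← hf h, hh] at hf
        exact hx hf
      refine ⟨Finsupp.single ⟨_, hs⟩ (MonoidAlgebra.single h 1), ?_⟩
      rw [comb_single b hb]
      simp [i, hh]
end PermutationModule

/-! ### Periodic resolutions and `Tor` -/

section Tor
variable {R : Type} [CommRing R] {a N : R}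

lemma exists_smul_eq_of_forall_dvd {ι : Type} (c : R) (f : ι →₀ R) (h : ∀ i, c ∣ f i) :
    ∃ f' : ι →₀ R, c • f' = f := by
  classical
  choose r hr using h
  refine ⟨∑ i ∈ f.support, Finsupp.single i (r i), ?_⟩
  rw [Finset.smul_sum]
  conv_rhs => rw [← f.sum_single]
  refine Finset.sum_congr rfl fun i _ => ?_
  simp [hr i]

/-- Multiplication by `c` on the free module `R^(ι)`. -/
noncomputable abbrev smulEnd (ι : Type) (c : R) :
    ModuleCat.of R (ι →₀ R) ⟶ ModuleCat.of R (ι →₀ R) :=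
  ModuleCat.ofHom (c • LinearMap.id)

lemma smulEnd_comp (ι : Type) {c d : R} (h : c * d = 0) :
    smulEnd ι c ≫ smulEnd ι d = 0 := by
  ext
  simp [smulEnd, mul_comm d, h]

/-- The complex `⋯ ⟶ R^(ι) ⟶ R^(ι) ⟶ R^(ι)`, with `a` leaving odd degrees and `N` leaving even
ones. -/
noncomputable abbrev periodicComplex (ι : Type) (haN : a * N = 0) : ChainComplex (ModuleCat R) ℕ :=
  HomologicalComplex.alternatingConst (ModuleCat.of R (ι →₀ R)) (φ := smulEnd ι N)
    (ψ := smulEnd ι a) (smulEnd_comp ι (by rw [mul_comm, haN])) (smulEnd_comp ι haN)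
    fun _ _ => ComplexShape.down_nat_odd_add

/-- The augmentation of the periodic complex by a map `q` whose kernel is `a R^(ι)`. -/
noncomputable def periodicπ {ι T : Type} [AddCommGroup T] [Module R T] (haN : a * N = 0)
    (q : (ι →₀ R) →ₗ[R] T) (hq : ∀ f, q f = 0 ↔ ∀ i, a ∣ f i) :
    periodicComplex ι haN ⟶ (ChainComplex.single₀ (ModuleCat R)).obj (ModuleCat.of R T) :=
  ((periodicComplex ι haN).toSingle₀Equiv _).symm ⟨ModuleCat.ofHom q, by
    have h : ∀ f : ι →₀ R, q (a • f) = 0 := fun f => (hq _).2 fun j => by simp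
    apply ModuleCat.hom_ext
    apply LinearMap.ext
    intro f
    simpa using! h f⟩

/-- If `a` and `N` generate each other's annihilators in `R`, the periodic complex is exact in
positive degrees, as exactness can be tested in each coordinate of `R^(ι)`. -/
lemma periodic_quasiIso {ι T : Type} [AddCommGroup T] [Module R T] (haN : a * N = 0)
    (ha : ∀ r, a * r = 0 → N ∣ r) (hN : ∀ r, N * r = 0 → a ∣ r)
    (q : (ι →₀ R) →ₗ[R] T) (hq : ∀ f, q f = 0 ↔ ∀ i, a ∣ f i) (hs : Function.Surjective q) :
    QuasiIso (periodicπ haN q hq) where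
  quasiIsoAt m := by
    have key : ∀ {c d : R}, c * d = 0 → (∀ r, d * r = 0 → c ∣ r) → ∀ f : ι →₀ R,
      d • f = 0 → ∃ f' : ι →₀ R, c • f' = f := fun _ h f hf =>
        exists_smul_eq_of_forall_dvd _ f fun i => h _ (by simpa using DFunLike.congr_fun hf i)
    induction m with
    | zero =>
      simp only [periodicπ]
      rw [ChainComplex.quasiIsoAt₀_iff, ShortComplex.quasiIso_iff_of_zeros' _ rfl rfl rfl]
      constructor
      · rw [ShortComplex.moduleCat_exact_iff]
        intro f hf
        have hf' : q f = 0 := by simpa [ChainComplex.toSingle₀Equiv] using! hf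
        obtain ⟨f', h⟩ := exists_smul_eq_of_forall_dvd a f ((hq f).1 hf')
        refine ⟨f', ?_⟩
        simpa [HomologicalComplex.alternatingConst] using! h
      · rw [ModuleCat.epi_iff_surjective]
        intro x
        obtain ⟨y, hy⟩ := hs x
        exact ⟨y, by simpa [ChainComplex.toSingle₀Equiv] using! hy⟩
    | succ m _ =>
      rw [quasiIsoAt_iff_exactAt' (hL := ChainComplex.exactAt_succ_single_obj ..),
          HomologicalComplex.exactAt_iff' _ (m + 2) (m + 1) m (by simp) (by simp)]
      rw [ShortComplex.moduleCat_exact_iff]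
      intro f hf
      by_cases hm : Odd (m + 1)
      · obtain ⟨f', h⟩ := key (by rw [mul_comm, haN]) ha f (by
          simpa [if_neg (Nat.not_even_iff_odd.2 hm)] using! hf)
        exact ⟨f', by simpa [if_pos (Nat.even_add_one.2 (Nat.not_even_iff_odd.2 hm))] using! h⟩
      · obtain ⟨f', h⟩ := key haN hN f (by
          simpa [if_pos (Nat.not_odd_iff_even.1 hm)] using! hf)
        exact ⟨f', by simpa [if_neg (Nat.not_even_iff_odd.2 <| Nat.odd_add_one.2 hm)] using! h⟩

/-- The periodic complex as a projective resolution of `R^(ι) / a R^(ι) ≅ T`. -/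
noncomputable def periodicResolution {ι T : Type} [AddCommGroup T] [Module R T] (haN : a * N = 0)
    (ha : ∀ r, a * r = 0 → N ∣ r) (hN : ∀ r, N * r = 0 → a ∣ r)
    (q : (ι →₀ R) →ₗ[R] T) (hq : ∀ f, q f = 0 ↔ ∀ i, a ∣ f i) (hs : Function.Surjective q) :
    ProjectiveResolution (ModuleCat.of R T) where
  complex := periodicComplex ι haN
  projective _ := ModuleCat.projective_of_free (M := ModuleCat.of R (ι →₀ R))
    (Finsupp.basisSingleOne)
  π := periodicπ haN q hq
  quasiIso := periodic_quasiIso haN ha hN q hq hs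

/-- If `a` and `N` act by zero on `M`, the periodic resolution of `T` has zero differentials after
applying `M ⊗ -`, so each `Tor` group is a full term of the complex. -/
lemma tor_periodic {ι T M : Type} [AddCommGroup T] [Module R T] [AddCommGroup M] [Module R M]
    (haN : a * N = 0)
    (ha : ∀ r, a * r = 0 → N ∣ r) (hN : ∀ r, N * r = 0 → a ∣ r)
    (q : (ι →₀ R) →ₗ[R] T) (hq : ∀ f, q f = 0 ↔ ∀ i, a ∣ f i) (hs : Function.Surjective q)
    (haM : ∀ m : M, a • m = 0) (hNM : ∀ m : M, N • m = 0) (l : ℕ) :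
    Nonempty (((Tor (ModuleCat R) l).obj (ModuleCat.of R M)).obj (ModuleCat.of R T) ≅
      ModuleCat.of R (M ⊗[R] (ι →₀ R))) := by
  have hd : ∀ c : R, (∀ m : M, c • m = 0) →
      ((MonoidalCategory.tensoringLeft (ModuleCat R)).obj (ModuleCat.of R M)).map
        (smulEnd ι c) = 0 := by
    intro c hc
    apply ModuleCat.MonoidalCategory.tensor_ext
    intro m n
    change m ⊗ₜ[R] (c • n) = 0
    rw [← TensorProduct.smul_tmul, hc, TensorProduct.zero_tmul]
  let P := periodicResolution haN ha hN q hq hs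
  refine ⟨P.isoLeftDerivedObj _ l ≪≫ ?_⟩
  let K := (((MonoidalCategory.tensoringLeft (ModuleCat R)).obj (ModuleCat.of R
    M)).mapHomologicalComplex
    (ComplexShape.down ℕ)).obj P.complex
  have hK : ∀ i j, K.d i j = 0 := by
    intro i j
    change ((MonoidalCategory.tensoringLeft (ModuleCat R)).obj (ModuleCat.of R M)).map
      ((periodicComplex ι haN).d i j) = 0
    simp only [HomologicalComplex.alternatingConst_d]
    split_ifs
    · exact hd _ hNM
    · exact hd _ haM
    · exact Functor.map_zero _ _ _
  have h₁ := K.isIso_homologyι l _ rfl (hK _ _)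
  have h₂ := K.isIso_pOpcycles _ l rfl (hK _ _)
  exact (@asIso _ _ _ _ (K.homologyι l) h₁) ≪≫ (@asIso _ _ _ _ (K.pOpcycles l) h₂).symm

/-- The sum of lifts of `f` and `g` to projective resolutions is a lift of `f + g`. -/
lemma leftDerived_additive {C D : Type*} [Category* C] [Abelian C] [HasProjectiveResolutions C]
    [Category* D] [Abelian D] (F : C ⥤ D) [F.Additive] (n : ℕ) : (F.leftDerived n).Additive where
  map_add {X Y} f g := by
    let P := projectiveResolution X
    let Q := projectiveResolution Y
    rw [F.leftDerived_map_eq n f (P := P) (Q := Q) (ProjectiveResolution.lift f P Q) (by simp),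
      F.leftDerived_map_eq n g (P := P) (Q := Q) (ProjectiveResolution.lift g P Q) (by simp),
      F.leftDerived_map_eq n (f + g) (P := P) (Q := Q)
        (ProjectiveResolution.lift f P Q + ProjectiveResolution.lift g P Q)
        (by simp [Functor.map_add])]
    simp only [Functor.map_add, Preadditive.add_comp, Preadditive.comp_add]

/-- A projective direct summand of the second argument does not affect higher `Tor`. -/
lemma tor_succ_prod {T F W M : Type} [AddCommGroup T] [Module R T] [AddCommGroup M] [Module R M]
    [AddCommGroup F] [Module R F] [AddCommGroup W] [Module R W]
    [Module.Projective R F] (e : (T × F) ≃ₗ[R] W) (l : ℕ) :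
    Nonempty (((Tor (ModuleCat R) (l+1)).obj (ModuleCat.of R M)).obj (ModuleCat.of R W) ≅
      ((Tor (ModuleCat R) (l+1)).obj (ModuleCat.of R M)).obj (ModuleCat.of R T)) := by
  let D := ((Tor (ModuleCat R) (l+1)).obj (ModuleCat.of R M))
  have : D.Additive := leftDerived_additive _ _
  have : Projective (ModuleCat.of R F) := ModuleCat.projective_of_categoryTheory_projective _
  have hz : Limits.IsZero (D.obj (ModuleCat.of R F)) := isZero_Tor_succ_of_projective _ _ _ _
  let i : ModuleCat.of R T ⟶ ModuleCat.of R W :=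
    ModuleCat.ofHom (e.toLinearMap ∘ₗ LinearMap.inl R T F)
  let r : ModuleCat.of R W ⟶ ModuleCat.of R T :=
    ModuleCat.ofHom (LinearMap.fst R T F ∘ₗ e.symm.toLinearMap)
  let j : ModuleCat.of R F ⟶ ModuleCat.of R W :=
    ModuleCat.ofHom (e.toLinearMap ∘ₗ LinearMap.inr R T F)
  let s : ModuleCat.of R W ⟶ ModuleCat.of R F :=
    ModuleCat.ofHom (LinearMap.snd R T F ∘ₗ e.symm.toLinearMap)
  refine ⟨⟨D.map r, D.map i, ?_, ?_⟩⟩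
  · have h : 𝟙 _ = r ≫ i + s ≫ j := by
      ext w
      simp [r, i, s, j, ← map_add]
    rw [← D.map_id, h, D.map_add, D.map_comp s j, hz.eq_of_tgt (D.map s) 0]
    simp
  · have h : i ≫ r = 𝟙 _ := by
      ext w
      simp [r, i]
    rw [← D.map_comp, h, D.map_id]

end Tor

/-! ### The cyclic action on the basis of the tensor power -/

section Cyclic

lemma exists_cyclic_action {X : Type} {p : ℕ} (τ : Equiv.Perm X) (hτ : τ ^ p = 1) :
    ∃ _ : MulAction (Multiplicative (ZMod p)) X,
      ∀ x : X, (Multiplicative.ofAdd (1 : ZMod p)) • x = τ x := by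
  let φ : Multiplicative (ZMod p) →* Equiv.Perm X :=
    AddMonoidHom.toMultiplicativeLeft (ZMod.lift p ⟨zmultiplesHom _ (Additive.ofMul τ), by
      simp [← ofMul_pow, hτ]⟩)
  refine ⟨MulAction.compHom X φ, fun x => ?_⟩
  have h : φ (Multiplicative.ofAdd (1 : ZMod p)) = τ := by
    have := ZMod.lift_coe p (⟨zmultiplesHom _ (Additive.ofMul τ), by
      simp [← ofMul_pow, hτ]⟩ : {f : ℤ →+ Additive (Equiv.Perm X) // f p = 0}) 1
    simp at this
    simp [φ, this]
  change φ _ x = _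
  rw [h]

lemma cyclic_generator {p : ℕ} [NeZero p] (h : Multiplicative (ZMod p)) :
    ∃ n : ℕ, (Multiplicative.ofAdd (1 : ZMod p)) ^ n = h :=
  ⟨h.toAdd.val, by rw [← ofAdd_nsmul]; simp⟩

/-- A stabilizer is a subgroup of a group of prime order, hence trivial or everything. -/
lemma fixed_or_free {p : ℕ} [Fact p.Prime] {X : Type} [MulAction (Multiplicative (ZMod p)) X]
    (x : X) : x ∈ MulAction.fixedPoints (Multiplicative (ZMod p)) X ∨
      ∀ h : Multiplicative (ZMod p), h • x = x → h = 1 := by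
  have : Fact (Nat.card (Multiplicative (ZMod p))).Prime := ⟨by simpa using Fact.out⟩
  rcases (MulAction.stabilizer (Multiplicative (ZMod p)) x).eq_bot_or_eq_top_of_prime_card
    with h | h
  · refine Or.inr fun y hy => ?_
    have : y ∈ MulAction.stabilizer (Multiplicative (ZMod p)) x := hy
    simpa [h] using this
  · refine Or.inl fun y => ?_
    have : y ∈ MulAction.stabilizer (Multiplicative (ZMod p)) x := by simp [h]
    exact this

/-- A rotation-invariant function on `Fin p` is constant. -/
lemma rotate_fixed {p : ℕ} [NeZero p] {ι : Type} (x : Fin p → ι)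
    (hx : ∀ i, x ((finRotate p).symm i) = x i) (i : Fin p) : x i = x 0 := by
  obtain ⟨n, rfl⟩ := Nat.exists_eq_succ_of_ne_zero (NeZero.ne p)
  induction i using Fin.induction with
  | zero => rfl
  | succ i ih =>
    rw [← ih, ← hx i.succ]
    congr 1
    rw [Equiv.symm_apply_eq, finRotate_apply, Fin.coeSucc_eq_succ]

/-- The tensor power has a `k`-basis permuted by the group, whose fixed points correspond to the
basis of `V`: the constant pure tensors `v i ⊗ ⋯ ⊗ v i`. -/
lemma exists_smul_basis_tensorPower (k : Type) [Field k] (p : ℕ) [Fact p.Prime]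
    (V : Type) [AddCommGroup V] [Module k V]
    [Module (MonoidAlgebra k (Multiplicative (ZMod p))) (⨂[k]^p V)]
    (hgen : ∀ w : ⨂[k]^p V,
      MonoidAlgebra.of k (Multiplicative (ZMod p)) (Multiplicative.ofAdd (1 : ZMod p)) • w
        = cyclicPerm k p V w) {ι : Type} (v : Module.Basis ι k V) :
    ∃ (X : Type) (_ : MulAction (Multiplicative (ZMod p)) X) (b : Module.Basis X k (⨂[k]^p V)),
      (∀ (g : Multiplicative (ZMod p)) (x : X),
        MonoidAlgebra.of k (Multiplicative (ZMod p)) g • b x = b (g • x)) ∧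
      Nonempty (MulAction.fixedPoints (Multiplicative (ZMod p)) X ≃ ι) := by
  let b : Module.Basis (Fin p → ι) k (⨂[k]^p V) := Basis.piTensorProduct fun _ => v
  let τ : Equiv.Perm (Fin p → ι) := (finRotate p).arrowCongr (Equiv.refl ι)
  have hτ : ∀ x, MonoidAlgebra.of k (Multiplicative (ZMod p))
      (Multiplicative.ofAdd (1 : ZMod p)) • b x = b (τ x) := by
    intro x
    rw [hgen]
    simp only [b, Basis.piTensorProduct_apply]
    exact PiTensorProduct.reindex_tprod _ _
  have hpow : ∀ (n : ℕ) x, MonoidAlgebra.of k (Multiplicative (ZMod p))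
      (Multiplicative.ofAdd (1 : ZMod p) ^ n) • b x = b ((τ ^ n) x) := by
    intro n
    induction n with
    | zero => intro x; rw [pow_zero, map_one, one_smul, pow_zero]; rfl
    | succ n ih =>
      intro x
      rw [pow_succ, map_mul, mul_smul, hτ, ih, pow_succ]; rfl
  -- `τ ^ p = 1` follows from `g ^ p = 1` in the group, as distinct basis vectors differ
  have hτp : τ ^ p = 1 := by
    ext1 x
    apply b.injective
    rw [← hpow, ← ofAdd_nsmul]
    simp only [nsmul_eq_mul, CharP.cast_eq_zero, zero_mul, ofAdd_zero, map_one, one_smul]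
    rfl
  obtain ⟨act, hact⟩ := exists_cyclic_action τ hτp
  have hn : ∀ (n : ℕ) x, Multiplicative.ofAdd (1 : ZMod p) ^ n • x = (τ ^ n) x := by
    intro n
    induction n with
    | zero => intro x; simp
    | succ n ih => intro x; rw [pow_succ, mul_smul, hact, ih, pow_succ]; rfl
  refine ⟨_, act, b, fun g x => ?_, ⟨?_⟩⟩
  · obtain ⟨n, rfl⟩ := cyclic_generator g
    rw [hpow, hn]
  · exact
    { toFun := fun x => x.1 0
      invFun := fun i => ⟨fun _ => i, fun g => by
        obtain ⟨n, rfl⟩ := cyclic_generator g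
        rw [hn]
        have hi : Function.IsFixedPt τ (fun _ => i) := rfl
        exact hi.perm_pow n⟩
      left_inv := fun x => by
        apply Subtype.ext
        funext i
        refine (rotate_fixed x.1 (fun j => ?_) i).symm
        exact congrFun ((hact x.1).symm.trans (x.2 _)) j
      right_inv := fun i => rfl }

lemma trivial_smul {k G : Type} [Field k] [CommGroup G] (r : MonoidAlgebra k G)
    (m : (Representation.trivial k (G := G) (V := k)).asModule) :
    r • m = augmentation k G r • m := by
  induction r using MonoidAlgebra.induction_linear with
  | zero => simp
  | add x y hx hy => simp [add_smul, hx, hy]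
  | single g c =>
    rw [Representation.single_smul, augmentation_single]
    rfl

/-- The augmentation of the norm element is the group order `p`, which vanishes in `k`. -/
lemma augmentation_normElt (k : Type) [Field k] (p : ℕ) [NeZero p] [CharP k p] :
    augmentation k (Multiplicative (ZMod p)) (normElt k (Multiplicative (ZMod p))) = 0 := by
  simp only [normElt, map_sum, augmentation_of]
  simp

/-- Let `k` be a field of prime characteristic `p` and `V` a `k`-vector
space.  Regard `W = V^{⊗p}` as a representation of `ℤ/pℤ` in which a fixed generator acts by
the cyclic permutation `σ` of tensor factors, i.e. as a module over the group algebra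
`k[ℤ/pℤ] = MonoidAlgebra k (Multiplicative (ZMod p))`.  Then for every `l ≥ 1` the group
homology `H_l(ℤ/pℤ, W) = Tor_l^{k[ℤ/pℤ]}(k, W)` (with `k` the trivial module) is isomorphic
to `V` as a `k`-vector space. -/
theorem group_homology_tensor_power_cyclic
    (k : Type) [Field k] (p : ℕ) (hp : p.Prime) [CharP k p]
    (V : Type) [AddCommGroup V] [Module k V]
    [Module (MonoidAlgebra k (Multiplicative (ZMod p))) (⨂[k]^p V)]
    [IsScalarTower k (MonoidAlgebra k (Multiplicative (ZMod p))) (⨂[k]^p V)]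
    (hgen : ∀ w : ⨂[k]^p V,
      MonoidAlgebra.of k (Multiplicative (ZMod p)) (Multiplicative.ofAdd (1 : ZMod p)) • w
        = cyclicPerm k p V w)
    (l : ℕ) (hl : 1 ≤ l) :
    let H := ((Tor (ModuleCat (MonoidAlgebra k (Multiplicative (ZMod p)))) l).obj
        (ModuleCat.of _
          (Representation.trivial k (G := Multiplicative (ZMod p)) (V := k)).asModule)).obj
      (ModuleCat.of _ (⨂[k]^p V))
    letI : Module k H :=
      Module.compHom H (algebraMap k (MonoidAlgebra k (Multiplicative (ZMod p))))
    Nonempty (H ≃ₗ[k] V) := by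
  intro H
  classical
  have : Fact p.Prime := ⟨hp⟩
  obtain ⟨n, rfl⟩ : ∃ n, l = n + 1 := ⟨l - 1, by omega⟩
  let v := Module.Basis.ofVectorSpace k V
  obtain ⟨X, _, b, hb, ⟨eι⟩⟩ := exists_smul_basis_tensorPower k p V hgen v
  obtain ⟨S, ⟨e⟩⟩ := exists_decomposition b hb fixed_or_free
  have hg := cyclic_generator (p := p)
  let M := (Representation.trivial k (G := Multiplicative (ZMod p)) (V := k)).asModule
  let R := MonoidAlgebra k (Multiplicative (ZMod p))
  let Q := comb (G := Multiplicative (ZMod p)) b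
    (Subtype.val : MulAction.fixedPoints (Multiplicative (ZMod p)) X → X)
  have hQ : ∀ f, Q.rangeRestrict f = 0 ↔ ∀ i,
      MonoidAlgebra.of k (Multiplicative (ZMod p)) (Multiplicative.ofAdd 1) - 1 ∣ f i := by
    intro f
    simp only [of_sub_one_dvd_iff hg, ← repr_comb_fixed b hb f]
    rw [Subtype.ext_iff, LinearMap.codRestrict_apply, ZeroMemClass.coe_zero,
      ← b.repr.map_eq_zero_iff, Finsupp.ext_iff]
    refine ⟨fun h i => h i, fun h x => ?_⟩
    by_cases hx : x ∈ MulAction.fixedPoints (Multiplicative (ZMod p)) X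
    · exact h ⟨x, hx⟩
    · exact repr_comb_fixed_of_not b hb f x hx
  obtain ⟨i₁⟩ := tor_succ_prod (M := M) e n
  obtain ⟨i₂⟩ := tor_periodic (M := M)
    (a := MonoidAlgebra.of k (Multiplicative (ZMod p)) (Multiplicative.ofAdd 1) - 1)
    (N := normElt k _) (by rw [sub_mul, of_mul_normElt, one_mul, sub_self])
    (normElt_dvd_of_mul hg) (dvd_of_normElt_mul hg) Q.rangeRestrict hQ Q.surjective_rangeRestrict
    (fun m => by rw [trivial_smul]; simp)
    (fun m => by rw [trivial_smul, augmentation_normElt, zero_smul])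
    (n + 1)
  let E : H ≃ₗ[R] (MulAction.fixedPoints (Multiplicative (ZMod p)) X →₀ M) :=
    (i₁ ≪≫ i₂).toLinearEquiv ≪≫ₗ TensorProduct.finsuppScalarRight R R M _
  let E' : (MulAction.fixedPoints (Multiplicative (ZMod p)) X →₀ M) ≃ₗ[k] V :=
    Finsupp.domLCongr eι ≪≫ₗ Finsupp.mapRange.linearEquiv
      (Representation.asModuleEquiv _) ≪≫ₗ v.repr.symm
  let _ : Module k H :=
    Module.compHom H (algebraMap k (MonoidAlgebra k (Multiplicative (ZMod p))))
  refine ⟨{ toAddEquiv := E.toAddEquiv.trans E'.toAddEquiv, map_smul' := fun c x => ?_ }⟩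
  change E' (E (algebraMap k R c • x)) = c • E' (E x)
  rw [map_smul E, algebraMap_smul, map_smul E']

end Cyclic
end

section
/- Let k be a perfect field of prime characteristic p, V a k-vector space, W = V^{⊗p} with the cyclic permutation automorphism σ and norm operator N = 1 + σ + … + σ^{p−1}. Then: (a) for every v ∈ V the element v⊗v⊗…⊗v lies in the invariant subspace W^σ = ker(σ − 1), and N(W) ⊆ W^σ; (b) the map e : V → W^σ ⧸ N(W) sending v to the class of v⊗…⊗v is additive, satisfies e(λ·v) = λ^p·e(v) for all λ ∈ k and v ∈ V, and is bijective. -/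
/-!
Fix a basis `b` of `V` indexed by `ι`. The pure tensors `b f₁ ⊗ … ⊗ b f_p` form a basis of
`W = V^{⊗p}` indexed by `f : Fin p → ι`, and `σ` acts on coordinates by rotating the index. As `p`
is prime, an index is either constant, and then fixed by rotation, or has exactly `p` distinct
rotations.

Consequently an invariant tensor lies in `N(W)` if and only if its coordinates at the constant
indices vanish: `N` multiplies those coordinates by `p = 0`
(`repr_normOp_const`), and conversely the free orbits are removed one at a time by subtracting norms
of multiples of basis tensors (`mem_range_normOp`). So `W^σ ⧸ N(W)` is detected by the coordinates
at constant indices. The coordinate of `v ⊗ … ⊗ v` at the constant index `i` is the `p`-th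
power of the `i`-th coordinate of `v`, so that additivity, semilinearity and bijectivity of `e` all
reduce to the corresponding properties of the Frobenius of the perfect field `k`.
-/

open scoped TensorProduct

/-- The norm operator `N = 1 + σ + … + σ^{p−1}` on `V^{⊗p}`. -/
noncomputable def normOp (k : Type*) [CommSemiring k] (p : ℕ) (V : Type*)
    [AddCommMonoid V] [Module k V] : (⨂[k]^p V) →ₗ[k] (⨂[k]^p V) :=
  ∑ i ∈ Finset.range p, (cyclicPerm k p V) ^ i

/-- The diagonal tensor `v ⊗ v ⊗ … ⊗ v ∈ V^{⊗p}`. -/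
noncomputable def diagTensor (k : Type*) [CommSemiring k] (p : ℕ) (V : Type*)
    [AddCommMonoid V] [Module k V] (v : V) : ⨂[k]^p V :=
  PiTensorProduct.tprod k (fun _ : Fin p => v)

/-- The invariant subspace `W^σ = ker (σ − 1)` of `W = V^{⊗p}`. -/
noncomputable def sigmaInvariants (k : Type*) [CommRing k] (p : ℕ) (V : Type*)
    [AddCommGroup V] [Module k V] : Submodule k (⨂[k]^p V) :=
  LinearMap.ker (cyclicPerm k p V - LinearMap.id)

namespace TateQuotient

open Module Function

/-- Rotation of a multi-index, the action on coordinates induced by `cyclicPerm`. -/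
def rot {ι : Type*} (p : ℕ) (g : Fin p → ι) : Fin p → ι := g ∘ finRotate p

section Rotation

variable {ι : Type*} {p : ℕ}

lemma rot_iterate_apply [NeZero p] (i : ℕ) (g : Fin p → ι) (j : Fin p) :
    ((rot p)^[i] g) j = g (j + Fin.ofNat p i) := by
  induction i generalizing g j with
  | zero => simp
  | succ n ih =>
    rw [iterate_succ_apply, ih, rot, comp_apply, finRotate_apply, add_assoc]
    congr 2
    ext
    simp [Fin.val_add]

lemma rot_iterate_self [NeZero p] (g : Fin p → ι) : (rot p)^[p] g = g := by
  ext j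
  rw [rot_iterate_apply]
  congr 1
  ext
  simp

@[simp]
lemma rot_iterate_const (i : ℕ) (x : ι) : (rot p)^[i] (fun _ => x) = fun _ => x :=
  iterate_fixed rfl i

lemma eq_const_of_rot_eq [NeZero p] {g : Fin p → ι} (h : rot p g = g) : g = fun _ => g 0 := by
  ext j
  have := rot_iterate_apply (j : ℕ) g 0
  rw [iterate_fixed h] at this
  simpa using this.symm

/-- A nonconstant index of prime length has trivial stabilizer under rotation. -/
lemma rot_iterate_ne [NeZero p] (hp : p.Prime) {g : Fin p → ι} (hg : ∀ x, g ≠ fun _ => x)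
    {i : ℕ} (h0 : i ≠ 0) (hi : i < p) : (rot p)^[i] g ≠ g := by
  intro h
  have h1 : IsPeriodicPt (rot p) (i.gcd p) g :=
    IsPeriodicPt.gcd (f := rot p) h (rot_iterate_self g)
  rw [((hp.coprime_iff_not_dvd.2 (Nat.not_dvd_of_pos_of_lt (Nat.pos_of_ne_zero h0) hi)).symm : i.gcd p = 1)] at h1
  exact hg _ (eq_const_of_rot_eq h1)

end Rotation

section Coordinates

variable {k : Type*} [Field k] {p : ℕ} {V : Type*} [AddCommGroup V] [Module k V]
  {ι : Type*} (b : Basis ι k V)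

/-- The basis of `V^{⊗p}` made of the pure tensors of vectors of a basis of `V`. -/
noncomputable def tensorBasis (p : ℕ) : Basis (Fin p → ι) k (⨂[k]^p V) :=
  Basis.piTensorProduct fun _ : Fin p => b

lemma repr_diagTensor (v : V) (x : ι) :
    (tensorBasis b p).repr (diagTensor k p V v) (fun _ => x) = (b.repr v x) ^ p := by
  simp [tensorBasis, diagTensor]

lemma repr_cyclicPerm (w : ⨂[k]^p V) (g : Fin p → ι) :
    (tensorBasis b p).repr (cyclicPerm k p V w) g = (tensorBasis b p).repr w (rot p g) := by
  induction w using PiTensorProduct.induction_on with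
  | smul_tprod r f =>
    simp only [cyclicPerm, tensorBasis, map_smul, LinearEquiv.coe_coe, Finsupp.smul_apply]
    rw [PiTensorProduct.reindex_tprod]
    congr 1
    simp only [Basis.piTensorProduct_repr_tprod_apply]
    rw [← Equiv.prod_comp (finRotate p)]
    refine Finset.prod_congr rfl fun i _ => ?_
    exact congrArg (fun j => b.repr (f j) (g (finRotate p i)))
      ((finRotate p).symm_apply_apply i)
  | add x y hx hy => simp [hx, hy]

lemma repr_cyclicPerm_pow (i : ℕ) (w : ⨂[k]^p V) (g : Fin p → ι) :
    (tensorBasis b p).repr ((cyclicPerm k p V ^ i) w) g =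
      (tensorBasis b p).repr w ((rot p)^[i] g) := by
  induction i generalizing g with
  | zero => simp
  | succ n ih => rw [pow_succ', Module.End.mul_apply, repr_cyclicPerm, ih, iterate_succ_apply]

lemma repr_normOp (w : ⨂[k]^p V) (g : Fin p → ι) :
    (tensorBasis b p).repr (normOp k p V w) g =
      ∑ i ∈ Finset.range p, (tensorBasis b p).repr w ((rot p)^[i] g) := by
  simp [normOp, LinearMap.sum_apply, Finsupp.finsetSum_apply, repr_cyclicPerm_pow]

lemma repr_normOp_const [CharP k p] (w : ⨂[k]^p V) (x : ι) :
    (tensorBasis b p).repr (normOp k p V w) (fun _ => x) = 0 := by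
  simp [repr_normOp]

lemma mem_sigmaInvariants_iff (w : ⨂[k]^p V) :
    w ∈ sigmaInvariants k p V ↔
      ∀ g, (tensorBasis b p).repr w (rot p g) = (tensorBasis b p).repr w g := by
  rw [sigmaInvariants, LinearMap.mem_ker, LinearMap.sub_apply, LinearMap.id_apply, sub_eq_zero,
    ← (tensorBasis b p).repr.injective.eq_iff, Finsupp.ext_iff]
  simp only [repr_cyclicPerm]

lemma repr_rot_iterate {w : ⨂[k]^p V} (hw : w ∈ sigmaInvariants k p V) (i : ℕ) (g : Fin p → ι) :
    (tensorBasis b p).repr w ((rot p)^[i] g) = (tensorBasis b p).repr w g := by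
  induction i with
  | zero => rfl
  | succ n ih => rw [iterate_succ_apply', (mem_sigmaInvariants_iff b w).1 hw, ih]

/-- Induction on the number of nonzero coordinates: subtracting the norm of `c • b_f`, with `c` the
coordinate at an index `f` in the support, kills the coordinates on the orbit of `f` and leaves the
other ones unchanged. -/
lemma mem_range_normOp [NeZero p] (hp : p.Prime)
    (hN : ∀ w : ⨂[k]^p V, normOp k p V w ∈ sigmaInvariants k p V)
    (w : ⨂[k]^p V) (hw : w ∈ sigmaInvariants k p V)
    (h0 : ∀ x, (tensorBasis b p).repr w (fun _ => x) = 0) :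
    w ∈ LinearMap.range (normOp k p V) := by
  induction hn : ((tensorBasis b p).repr w).support.card using Nat.strong_induction_on
    generalizing w with
  | _ n ih =>
  by_cases hz : w = 0
  · exact hz ▸ zero_mem _
  obtain ⟨f, hf⟩ : ∃ f, (tensorBasis b p).repr w f ≠ 0 := by
    by_contra! h
    exact hz ((tensorBasis b p).ext_elem (by simpa using h))
  have hfc : ∀ x, f ≠ fun _ => x := by
    rintro x rfl
    exact hf (h0 x)
  set c := (tensorBasis b p).repr w f with hc
  set u := normOp k p V (c • tensorBasis b p f) with hu
  have hcoord (g : Fin p → ι) : (tensorBasis b p).repr u g =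
      ∑ i ∈ Finset.range p, Finsupp.single f c ((rot p)^[i] g) := by
    rw [hu, repr_normOp]
    simp
  -- An index outside the support of `w` is not in the orbit of `f`.
  have hzero (g : Fin p → ι) (hg : (tensorBasis b p).repr w g = 0) :
      (tensorBasis b p).repr u g = 0 := by
    rw [hcoord]
    refine Finset.sum_eq_zero fun i _ => Finsupp.single_eq_of_ne fun h => hf ?_
    rw [hc, ← h, repr_rot_iterate b hw, hg]
  have hself : (tensorBasis b p).repr u f = c := by
    rw [hcoord, Finset.sum_eq_single 0]
    · simp
    · intro i hi hi0
      exact Finsupp.single_eq_of_ne (rot_iterate_ne hp hfc hi0 (Finset.mem_range.1 hi))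
    · intro h
      exact absurd (Finset.mem_range.2 hp.pos) h
  have hlt : ((tensorBasis b p).repr (w - u)).support.card < n := by
    rw [← hn]
    refine Finset.card_lt_card (Finset.ssubset_iff_of_subset ?_ |>.2 ⟨f, ?_, ?_⟩)
    · intro g hg
      rw [Finsupp.mem_support_iff] at hg ⊢
      intro h
      exact hg (by simp [h, hzero g h])
    · simpa using hf
    · simp [hself, hc]
  have := ih _ hlt (w - u) (sub_mem hw (hN _)) (fun x => by simp [h0, hzero _ (h0 x)]) rfl
  simpa using add_mem this (⟨_, rfl⟩ : u ∈ LinearMap.range (normOp k p V))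

end Coordinates

end TateQuotient

/-- Let `k` be a perfect field of prime characteristic `p`, `V` a `k`-vector
space, `W = V^{⊗p}` with cyclic permutation `σ` and norm operator `N = 1 + σ + … + σ^{p−1}`.
Then: (a) every diagonal tensor `v⊗…⊗v` lies in `W^σ = ker(σ − 1)`, and `N(W) ⊆ W^σ`;
(b) the map `e : V → W^σ ⧸ N(W)` sending `v` to the class of `v⊗…⊗v` is additive, satisfies
`e(λ·v) = λ^p·e(v)`, and is bijective. -/
theorem frobenius_diagonal_iso_tate_quotient
    (k : Type*) [Field k] [PerfectField k] (p : ℕ) (hp : p.Prime) [CharP k p]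
    (V : Type*) [AddCommGroup V] [Module k V] :
    (∀ v : V, diagTensor k p V v ∈ sigmaInvariants k p V) ∧
    (∀ w : ⨂[k]^p V, normOp k p V w ∈ sigmaInvariants k p V) ∧
    ∃ e : V → (sigmaInvariants k p V ⧸
        (LinearMap.range (normOp k p V)).comap (sigmaInvariants k p V).subtype),
      (∀ (v : V) (h : diagTensor k p V v ∈ sigmaInvariants k p V),
          e v = Submodule.Quotient.mk ⟨diagTensor k p V v, h⟩) ∧
      (∀ v w : V, e (v + w) = e v + e w) ∧
      (∀ (c : k) (v : V), e (c • v) = c ^ p • e v) ∧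
      Function.Bijective e := by
  classical
  have : NeZero p := ⟨hp.ne_zero⟩
  have : Fact p.Prime := ⟨hp⟩
  have : ExpChar k p := ExpChar.prime hp
  have : PerfectRing k p := PerfectField.toPerfectRing p
  let b := Module.Basis.ofVectorSpace k V
  have hD (v : V) : diagTensor k p V v ∈ sigmaInvariants k p V := by
    rw [sigmaInvariants, LinearMap.mem_ker, LinearMap.sub_apply, LinearMap.id_apply, sub_eq_zero]
    simp only [cyclicPerm, diagTensor, LinearEquiv.coe_coe]
    exact PiTensorProduct.reindex_tprod _ _
  have hN (w : ⨂[k]^p V) : normOp k p V w ∈ sigmaInvariants k p V := by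
    rw [TateQuotient.mem_sigmaInvariants_iff b]
    intro g
    rw [TateQuotient.repr_normOp, TateQuotient.repr_normOp]
    simp only [← Function.iterate_succ_apply]
    -- Shifting the summation range replaces the term `i = 0` by the equal term `i = p`.
    have h := (Finset.sum_range_succ' (fun i => (TateQuotient.tensorBasis b p).repr w
      ((TateQuotient.rot p)^[i] g)) p).symm.trans (Finset.sum_range_succ _ p)
    rw [TateQuotient.rot_iterate_self] at h
    exact add_right_cancel h
  have key (x y : sigmaInvariants k p V) :
      (Submodule.Quotient.mk x : sigmaInvariants k p V ⧸
        (LinearMap.range (normOp k p V)).comap (sigmaInvariants k p V).subtype) =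
        Submodule.Quotient.mk y ↔
      ∀ i, (TateQuotient.tensorBasis b p).repr (x : ⨂[k]^p V) (fun _ => i) =
        (TateQuotient.tensorBasis b p).repr (y : ⨂[k]^p V) (fun _ => i) := by
    rw [Submodule.Quotient.eq, Submodule.mem_comap]
    constructor
    · rintro ⟨z, hz⟩ i
      have h := TateQuotient.repr_normOp_const b z i
      rw [hz] at h
      simpa [sub_eq_zero] using h
    · intro h
      refine TateQuotient.mem_range_normOp b hp hN _ (x - y).2 fun i => ?_
      simp [h i]
  refine ⟨hD, hN, fun v => Submodule.Quotient.mk ⟨diagTensor k p V v, hD v⟩,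
    fun _ _ => rfl, fun v w => ?_, fun c v => ?_, fun v w h => ?_, fun q => ?_⟩
  · rw [← Submodule.Quotient.mk_add, key]
    intro i
    simp [TateQuotient.repr_diagTensor, add_pow_expChar]
  · rw [← Submodule.Quotient.mk_smul, key]
    intro i
    simp [TateQuotient.repr_diagTensor, mul_pow]
  · rw [key] at h
    refine b.ext_elem fun i => frobenius_inj k p ?_
    simpa [TateQuotient.repr_diagTensor, frobenius_def] using h i
  · obtain ⟨w, rfl⟩ := Submodule.Quotient.mk_surjective _ q
    -- The coordinates of a preimage are the `p`-th roots of the coordinates at constant indices.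
    refine ⟨b.repr.symm ((((TateQuotient.tensorBasis b p).repr (w : ⨂[k]^p V)).comapDomain
      (fun i _ => i) (Function.const_injective (α := Fin p)).injOn).mapRange
      (frobeniusEquiv k p).symm (map_zero _)), ?_⟩
    rw [key]
    intro i
    simp [TateQuotient.repr_diagTensor]
    rfl
end

section
/- Let k be a field of prime characteristic p, V a k-vector space, W = V^{⊗p} with the cyclic permutation automorphism σ and norm operator N = 1 + σ + … + σ^{p−1}. Then: (a) N(w) = 0 for every w ∈ W^σ, and N(u) ∈ (σ−1)W for every u ∈ W, so there are well-defined induced maps q : W^σ⧸N(W) → W⧸(σ−1)W (induced by the inclusion W^σ ⊆ W) and T̄ : W⧸(σ−1)W → W^σ (induced by N); (b) q is injective and its image equals ker(T̄). (In the terminology of the paper: the ℤ/pℤ-module V^{⊗p} is tight, i.e. the map φ : H₀(κ(V^{⊗p})) → H₁(κ(V^{⊗p})) between the cokernel and the kernel of the Tate trace map from coinvariants to invariants is an isomorphism.) -/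
/-!
A basis of `V` gives a basis of `W = V^{⊗p}` which `σ` permutes, and since `σ ^ p = 1` with `p`
prime, every `⟨σ⟩`-orbit of basis vectors is either a fixed point or free of size `p`. On the span of
the fixed basis vectors `σ = 1` and `N = p = 0`. On the span of the free orbits both
`ker (σ - 1) = im N` and `ker N = im (σ - 1)` hold, because `W_free` is an induced module.

Both facts are read off from one operator identity (`exists_fixed_add_norm_decomposition`):
`1 = f + ∑_{i<p} σ^{p-i} e σ^i`, where `f` is the projection onto the span of the fixed basis vectors
and `e` the projection onto the span of a set of representatives of the free orbits. It yields
`W^σ ∩ (σ - 1)W ⊆ N W`, which is the injectivity of `q`, and `ker N ⊆ W^σ + (σ - 1)W`, which is the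
inclusion `ker T̄ ⊆ im q`. The reverse inclusion is `N = 0` on `W^σ`.
-/

open scoped TensorProduct

/-- The subspace `(σ − 1)W ⊆ W = V^{⊗p}`, i.e. the image of `σ − 1`; the quotient
`W ⧸ (σ−1)W` is the space of coinvariants. -/
noncomputable def sigmaAugRange (k : Type*) [CommRing k] (p : ℕ) (V : Type*)
    [AddCommGroup V] [Module k V] : Submodule k (⨂[k]^p V) :=
  LinearMap.range (cyclicPerm k p V - LinearMap.id)

/-- A permutation `τ` with `τ ^ p = 1`, `p` prime, admits a set `D` of representatives of its nontrivial
orbits: each non-fixed point meets `D` exactly once along its orbit `x, τ x, …, τ^{p-1} x`. -/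
lemma exists_orbit_representatives {X : Type*} (τ : Equiv.Perm X) (p : ℕ) (hp : p.Prime)
    (hτ : τ ^ p = 1) :
    ∃ D : Set X, (∀ x ∈ D, τ x ≠ x) ∧
      ∀ x, τ x ≠ x → ∃ i ∈ Finset.range p, ∀ j ∈ Finset.range p, (τ ^ j) x ∈ D ↔ j = i := by
  have : Fact p.Prime := ⟨hp⟩
  let r : X → X := fun x => (Quotient.mk (Equiv.Perm.SameCycle.setoid τ) x).out
  have hr : ∀ x, τ.SameCycle x (r x) := fun x => by
    have h : (Equiv.Perm.SameCycle.setoid τ).r (r x) x := Quotient.mk_out x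
    exact Equiv.Perm.SameCycle.symm h
  have hr' : ∀ x y, τ.SameCycle x y → r x = r y := fun x y h => by
    have : Quotient.mk (Equiv.Perm.SameCycle.setoid τ) x = Quotient.mk _ y := Quotient.sound h
    simp only [r, this]
  refine ⟨{x | τ x ≠ x ∧ r x = x}, fun x hx => hx.1, fun x hx => ?_⟩
  have hmin : Function.minimalPeriod τ x = p := by
    apply Function.minimalPeriod_eq_prime
    · change τ^[p] x = x
      rw [← Equiv.Perm.coe_pow, hτ]
      rfl
    · exact hx
  obtain ⟨n, hn⟩ := hr x
  have hp0 : (p : ℤ) ≠ 0 := by exact_mod_cast hp.ne_zero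
  obtain ⟨i, hi⟩ := Int.eq_ofNat_of_zero_le (Int.emod_nonneg n hp0)
  have hip : i < p := by
    have := Int.emod_lt_of_pos n (by exact_mod_cast hp.pos : (0 : ℤ) < p)
    omega
  have hix : (τ ^ i) x = r x := by
    have h : τ ^ n = τ ^ i := by
      rw [← Int.emod_add_mul_ediv n p, hi, zpow_add, zpow_mul]
      simp [hτ]
    rw [← hn, h]
  refine ⟨i, Finset.mem_range.2 hip, fun j hj => ?_⟩
  have hrj : r ((τ ^ j) x) = r x := hr' _ _ (Equiv.Perm.SameCycle.symm ⟨j, by simp⟩)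
  have hmove : τ ((τ ^ j) x) ≠ (τ ^ j) x := by
    intro h
    apply hx
    apply (τ ^ j).injective
    rw [← h, ← Equiv.Perm.mul_apply, ← Equiv.Perm.mul_apply, ← pow_succ, ← pow_succ']
  have key : (τ ^ j) x = (τ ^ i) x ↔ j = i := by
    rw [Equiv.Perm.coe_pow, Equiv.Perm.coe_pow]
    apply Function.iterate_eq_iterate_iff_of_lt_minimalPeriod
    · rw [hmin]; exact Finset.mem_range.1 hj
    · rw [hmin]; exact hip
  rw [← key, hix]
  constructor
  · rintro ⟨-, h⟩
    rw [← h, hrj]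
  · intro h
    exact ⟨hmove, by rw [hrj, h]⟩

/-- For `σ` permuting a basis through a permutation `τ` of order dividing the prime `p`: `σ ^ p = 1`,
and there is an operator identity `1 = f + ∑_{i<p} σ^{p-i} e σ^i` with `σ f = f = f σ`. The witnesses are
the projections `f` onto the span of the fixed basis vectors and `e` onto the span of
representatives of the free orbits, both along the remaining basis vectors. -/
lemma exists_fixed_add_norm_decomposition {k W X : Type*} [Field k] [AddCommGroup W] [Module k W]
    (b : Module.Basis X k W) (s : Module.End k W) (τ : Equiv.Perm X) (p : ℕ) (hp : p.Prime)
    (hτ : τ ^ p = 1) (hs : ∀ x, s (b x) = b (τ x)) :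
    s ^ p = 1 ∧ ∃ f e : Module.End k W, s * f = f ∧ f * s = f ∧
      f + ∑ i ∈ Finset.range p, s ^ (p - i) * e * s ^ i = 1 := by
  classical
  obtain ⟨D, hD, hD'⟩ := exists_orbit_representatives τ p hp hτ
  have hpow : ∀ (i : ℕ) x, (s ^ i) (b x) = b ((τ ^ i) x) := by
    intro i
    induction i with
    | zero => intro x; simp
    | succ i ih => intro x; rw [pow_succ, Module.End.mul_apply, hs, ih, pow_succ]; rfl
  let f : Module.End k W := b.constr k fun x => if τ x = x then b x else 0
  let e : Module.End k W := b.constr k fun x => if x ∈ D then b x else 0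
  have hf : ∀ x, f (b x) = if τ x = x then b x else 0 := fun x => b.constr_basis k _ x
  have he : ∀ x, e (b x) = if x ∈ D then b x else 0 := fun x => b.constr_basis k _ x
  refine ⟨b.ext fun x => by rw [hpow, hτ]; rfl, f, e, b.ext fun x => ?_, b.ext fun x => ?_, b.ext fun x => ?_⟩
  · rw [Module.End.mul_apply, hf]
    split_ifs with h
    · rw [hs, h]
    · simp
  · rw [Module.End.mul_apply, hs, hf, hf]
    by_cases h : τ x = x
    · simp [h]
    · simp [h]
  · have hterm : ∀ i ∈ Finset.range p,
        (s ^ (p - i) * e * s ^ i) (b x) = if (τ ^ i) x ∈ D then b x else 0 := by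
      intro i hi
      rw [Module.End.mul_apply, Module.End.mul_apply, hpow, he]
      split_ifs
      · rw [hpow, ← Equiv.Perm.mul_apply, ← pow_add,
          Nat.sub_add_cancel (Finset.mem_range.1 hi).le, hτ]
        rfl
      · simp
    rw [LinearMap.add_apply, LinearMap.sum_apply, Finset.sum_congr rfl hterm, hf]
    by_cases h : τ x = x
    · have hfix : ∀ i : ℕ, (τ ^ i) x = x := fun i => by
        rw [Equiv.Perm.coe_pow]
        exact Function.iterate_fixed h i
      have hx : x ∉ D := fun hx => hD x hx h
      simp [h, hfix, hx]
    · obtain ⟨i, hi, hi'⟩ := hD' x h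
      rw [Finset.sum_congr rfl fun j hj => by rw [if_congr (hi' j hj) rfl rfl]]
      rw [Finset.sum_ite_eq' _ i, if_pos hi, if_neg h]
      simp

lemma finRotate_pow_self (p : ℕ) : finRotate p ^ p = 1 := by
  rcases p with _ | n
  · simp
  have h : ∀ (m : ℕ) (i : Fin (n + 1)), (finRotate (n + 1) ^ m) i = i + m • (1 : Fin (n + 1)) := by
    intro m
    induction m with
    | zero => intro i; simp
    | succ m ih =>
      intro i
      rw [pow_succ', Equiv.Perm.mul_apply, ih, finRotate_apply, succ_nsmul, add_assoc]
  have h0 : (n + 1) • (1 : Fin (n + 1)) = 0 := by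
    simpa using card_nsmul_eq_zero (G := Fin (n + 1)) (x := 1)
  ext i
  rw [h, h0, add_zero]
  rfl

/-- `σ ^ p = 1` and the decomposition `1 = f + ∑_{i<p} σ^{p-i} e σ^i` on `V^{⊗p}`,
where `σ` permutes the basis of pure tensors of basis vectors of `V`. -/
lemma cyclicPerm_decomposition (k : Type*) [Field k] (p : ℕ) (hp : p.Prime)
    (V : Type*) [AddCommGroup V] [Module k V] :
    cyclicPerm k p V ^ p = 1 ∧ ∃ f e : Module.End k (⨂[k]^p V),
      cyclicPerm k p V * f = f ∧ f * cyclicPerm k p V = f ∧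
      f + ∑ i ∈ Finset.range p, cyclicPerm k p V ^ (p - i) * e * cyclicPerm k p V ^ i = 1 := by
  let b := Module.Basis.ofVectorSpace k V
  let τ : Equiv.Perm (Fin p → Module.Basis.ofVectorSpaceIndex k V) :=
    (finRotate p).arrowCongr (Equiv.refl _)
  refine exists_fixed_add_norm_decomposition (Basis.piTensorProduct fun _ : Fin p => b) _ τ p hp
    ?_ ?_
  · have h : ∀ (m : ℕ) g, (τ ^ m) g = g ∘ ⇑((finRotate p ^ m)⁻¹) := by
      intro m
      induction m with
      | zero => intro g; rfl
      | succ m ih =>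
        intro g
        rw [pow_succ', Equiv.Perm.mul_apply, ih, pow_succ, mul_inv_rev, ← inv_pow, ← pow_succ',
          pow_succ, Equiv.Perm.coe_mul, ← Function.comp_assoc]
        rfl
    ext1 g
    rw [h, finRotate_pow_self]
    rfl
  · intro g
    rw [Basis.piTensorProduct_apply, Basis.piTensorProduct_apply]
    exact PiTensorProduct.reindex_tprod _ _

/-- Let `k` be a field of prime characteristic `p`, `V` a `k`-vector space,
`W = V^{⊗p}` with cyclic permutation `σ` and norm `N = 1 + σ + … + σ^{p−1}`.  Then:
(a) `N w = 0` for every `w ∈ W^σ`, and `N u ∈ (σ−1)W` for every `u ∈ W`, so there are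
well-defined induced maps `q : W^σ⧸N(W) → W⧸(σ−1)W` (induced by the inclusion) and
`T̄ : W⧸(σ−1)W → W^σ` (induced by `N`);
(b) `q` is injective and its image equals `ker T̄`.  (The ℤ/pℤ-module `V^{⊗p}` is *tight*.) -/
theorem tensor_power_is_tight
    (k : Type*) [Field k] (p : ℕ) (hp : p.Prime) [CharP k p]
    (V : Type*) [AddCommGroup V] [Module k V] :
    -- (a)
    (∀ w ∈ sigmaInvariants k p V, normOp k p V w = 0) ∧
    (∀ u : ⨂[k]^p V, normOp k p V u ∈ sigmaAugRange k p V) ∧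
    -- (b): the induced maps exist, `q` is injective and its image is `ker T̄`
    ∃ q : (sigmaInvariants k p V ⧸
            (LinearMap.range (normOp k p V)).comap (sigmaInvariants k p V).subtype) →ₗ[k]
          ((⨂[k]^p V) ⧸ sigmaAugRange k p V),
      ∃ T : ((⨂[k]^p V) ⧸ sigmaAugRange k p V) →ₗ[k] sigmaInvariants k p V,
        (∀ x : sigmaInvariants k p V,
            q (Submodule.Quotient.mk x) = Submodule.Quotient.mk (x : ⨂[k]^p V)) ∧
        (∀ u : ⨂[k]^p V,
            (T (Submodule.Quotient.mk u) : ⨂[k]^p V) = normOp k p V u) ∧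
        Function.Injective q ∧
        LinearMap.range q = LinearMap.ker T := by
  set s : Module.End k (⨂[k]^p V) := cyclicPerm k p V with hs
  obtain ⟨hps, f, e, hsf, hfs, hfe⟩ := cyclicPerm_decomposition k p hp V
  have hN : normOp k p V = ∑ i ∈ Finset.range p, s ^ i := rfl
  have hinv : ∀ w, w ∈ sigmaInvariants k p V ↔ s w = w := fun w => by
    simp only [sigmaInvariants, LinearMap.mem_ker, LinearMap.sub_apply, LinearMap.id_apply,
      sub_eq_zero, hs]
  have hpowinv : ∀ w, s w = w → ∀ i : ℕ, (s ^ i) w = w := fun w hw i => by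
    rw [Module.End.pow_apply]
    exact Function.iterate_fixed hw i
  have hpk : ∀ w : ⨂[k]^p V, (p : ℕ) • w = 0 := fun w => by
    rw [← Nat.cast_smul_eq_nsmul k, CharP.cast_eq_zero, zero_smul]
  have haug : ∀ (i : ℕ) u, (s ^ i) u - u ∈ sigmaAugRange k p V := by
    intro i u
    induction i with
    | zero => simp
    | succ i ih =>
      have h : (s ^ (i + 1)) u - u = (s ((s ^ i) u) - (s ^ i) u) + ((s ^ i) u - u) := by
        rw [pow_succ', Module.End.mul_apply]
        abel
      rw [h]
      exact add_mem ⟨(s ^ i) u, rfl⟩ ih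
  have hN0 : ∀ w ∈ sigmaInvariants k p V, normOp k p V w = 0 := fun w hw => by
    rw [hN, LinearMap.sum_apply,
      Finset.sum_congr rfl fun i _ => hpowinv w ((hinv w).1 hw) i, Finset.sum_const,
      Finset.card_range, hpk]
  have hNaug : ∀ u, normOp k p V u ∈ sigmaAugRange k p V := fun u => by
    -- In characteristic `p`, `N = N - p = ∑ (σ^i - 1)`.
    have h : normOp k p V u = ∑ i ∈ Finset.range p, ((s ^ i) u - u) := by
      rw [Finset.sum_sub_distrib, Finset.sum_const, Finset.card_range, hpk, sub_zero, hN,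
        LinearMap.sum_apply]
    rw [h]
    exact sum_mem fun i _ => haug i u
  have hsN : s * normOp k p V = normOp k p V := by
    have h := mul_geom_sum s p
    rw [hps, sub_self, sub_mul, one_mul, sub_eq_zero] at h
    exact h
  have hNs : normOp k p V * s = normOp k p V := by
    have h := geom_sum_mul s p
    rw [hps, sub_self, mul_sub, mul_one, sub_eq_zero] at h
    exact h
  have hdecomp : ∀ w, f w + ∑ i ∈ Finset.range p, (s ^ (p - i)) (e ((s ^ i) w)) = w := fun w => by
    simpa using LinearMap.congr_fun hfe w
  -- `W^σ ∩ (σ - 1)W ⊆ N W`: for such `w`, `f w = 0` and `w = N (σ (e w))`.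
  have hinj : ∀ w, w ∈ sigmaInvariants k p V → w ∈ sigmaAugRange k p V →
      w ∈ LinearMap.range (normOp k p V) := by
    rintro w hw ⟨v, hv⟩
    have hfw : f w = 0 := by
      rw [← hv, LinearMap.sub_apply, map_sub, ← Module.End.mul_apply f, hfs, LinearMap.id_apply,
        sub_self]
    refine ⟨s (e w), ?_⟩
    have h := hdecomp w
    rw [hfw, zero_add, Finset.sum_congr rfl fun i _ => by
      rw [hpowinv w ((hinv w).1 hw) i]] at h
    conv_rhs => rw [← h]
    rw [hN, LinearMap.sum_apply, ← Finset.sum_range_reflect]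
    refine Finset.sum_congr rfl fun i hi => ?_
    have hi := Finset.mem_range.1 hi
    rw [← Module.End.mul_apply, ← pow_succ]
    congr 2
    omega
  -- `ker N ⊆ W^σ + (σ - 1)W`: modulo `(σ - 1)W`, `u ≡ f u + e (N u)`.
  have hker : ∀ u, normOp k p V u = 0 → u - f u ∈ sigmaAugRange k p V := by
    intro u hu
    have hsum : ∑ i ∈ Finset.range p, e ((s ^ i) u) = 0 := by
      rw [← map_sum, ← LinearMap.sum_apply, ← hN, hu, map_zero]
    have h : u - f u =
        ∑ i ∈ Finset.range p, ((s ^ (p - i)) (e ((s ^ i) u)) - e ((s ^ i) u)) := by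
      rw [Finset.sum_sub_distrib, hsum, sub_zero, sub_eq_iff_eq_add, add_comm]
      exact (hdecomp u).symm
    rw [h]
    exact sum_mem fun i _ => haug _ _
  refine ⟨hN0, hNaug,
    Submodule.mapQ _ _ (sigmaInvariants k p V).subtype (Submodule.comap_mono ?_),
    Submodule.liftQ _ ((normOp k p V).codRestrict (sigmaInvariants k p V) fun u => ?_) ?_,
    fun x => rfl, fun u => rfl, ?_, ?_⟩
  · rintro _ ⟨u, rfl⟩
    exact hNaug u
  · rw [hinv, ← Module.End.mul_apply, hsN]
  · rintro _ ⟨v, rfl⟩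
    rw [LinearMap.mem_ker]
    refine Subtype.ext ?_
    change normOp k p V (s v - v) = 0
    rw [map_sub, ← Module.End.mul_apply, hNs, sub_self]
  · rw [injective_iff_map_eq_zero]
    intro x hx
    induction x using Submodule.Quotient.induction_on with
    | _ x =>
      rw [Submodule.Quotient.mk_eq_zero, Submodule.mem_comap]
      exact hinj _ x.2 ((Submodule.Quotient.mk_eq_zero _).1 hx)
  · apply le_antisymm
    · rintro _ ⟨x, rfl⟩
      induction x using Submodule.Quotient.induction_on with
      | _ x => exact Subtype.ext (hN0 _ x.2)
    · intro y hy
      induction y using Submodule.Quotient.induction_on with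
      | _ u =>
        have hu : normOp k p V u = 0 := congrArg Subtype.val hy
        refine ⟨Submodule.Quotient.mk ⟨f u, (hinv _).2 ?_⟩, ?_⟩
        · rw [← Module.End.mul_apply, hsf]
        · refine ((Submodule.Quotient.eq _).2 ?_).symm
          exact hker u hu
end

section
/- Let k be a field of prime characteristic p and let M be a module over the group algebra k[ℤ/pℤ]; write σ for the action of a fixed generator of ℤ/pℤ on M and N = 1 + σ + … + σ^{p−1} for the norm operator. Then the following are equivalent: (a) ker(N : M → M) = (σ−1)M; (b) ker(σ−1 : M → M) = N(M); (c) M is free as a k[ℤ/pℤ]-module. Moreover, when these conditions hold, the map M⧸(σ−1)M → ker(σ−1) induced by N (the Tate trace map from coinvariants to invariants) is bijective. -/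
/-!
Put `A = k[ℤ/pℤ]` and `t = σ - 1 ∈ A`. In characteristic `p` the norm element is `t ^ (p - 1)`
and `t ^ p = 0`; moreover every `a ∈ A` is a scalar plus a multiple of `t` (augmentation), so `A`
is a truncated polynomial ring in `t`. All conditions thus speak about multiplication by `t` on `M`.

* `ker (t ^ (p - 1)) = tM` (tightness) and `ker t = t ^ (p - 1) M` imply each other by induction on
  powers of `t` (`mem_norm_of_tight`, `tight_of_mem_norm`). Together they say that `N` induces a
  bijection `M / tM → ker t`.
* Tightness gives freeness (`free_of_tight`): lift a `k`-basis of `M / tM` to a family `e` in `M`.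
  It spans by Nakayama for the nilpotent `t`. If `∑ aᵢ eᵢ = 0` then the coefficient vector `a` is
  divisible by every power of `t`: from `a = t ^ j y` with `j < p` one gets
  `t ^ (p - 1) ∑ yᵢ eᵢ = 0`, hence `∑ yᵢ eᵢ ∈ tM` and `y` is divisible by `t`, the `eᵢ` being
  independent modulo `tM`. Since `t ^ p = 0`, the vector `a` vanishes.
* A free module is tight (`tight_of_free`) because `A` is: writing `a = c + t b`, the equation
  `t ^ (p - 1) a = 0` reads `c t ^ (p - 1) = 0`, so `c = 0`.
-/

/-- The group-algebra element corresponding to a fixed generator of `ℤ/pℤ`. -/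
noncomputable def cyclicGen (k : Type*) [CommRing k] (p : ℕ) :
    MonoidAlgebra k (Multiplicative (ZMod p)) :=
  MonoidAlgebra.of k (Multiplicative (ZMod p)) (Multiplicative.ofAdd (1 : ZMod p))

/-- The norm element `1 + g + … + g^{p−1}` of the group algebra `k[ℤ/pℤ]`. -/
noncomputable def cyclicNorm (k : Type*) [CommRing k] (p : ℕ) :
    MonoidAlgebra k (Multiplicative (ZMod p)) :=
  ∑ i ∈ Finset.range p, cyclicGen k p ^ i

/-- `σ − 1` as an additive endomorphism of a `k[ℤ/pℤ]`-module `M`, where `σ` is the action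
of the fixed generator. -/
noncomputable def sigmaSubOne (k : Type*) [CommRing k] (p : ℕ) (M : Type*) [AddCommGroup M]
    [Module (MonoidAlgebra k (Multiplicative (ZMod p))) M] : M →+ M :=
  DistribMulAction.toAddMonoidHom M (cyclicGen k p) - AddMonoidHom.id M

/-- The norm operator `N = 1 + σ + … + σ^{p−1}` as an additive endomorphism of a
`k[ℤ/pℤ]`-module `M`. -/
noncomputable def tateNormHom (k : Type*) [CommRing k] (p : ℕ) (M : Type*) [AddCommGroup M]
    [Module (MonoidAlgebra k (Multiplicative (ZMod p))) M] : M →+ M :=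
  DistribMulAction.toAddMonoidHom M (cyclicNorm k p)

section NilpotentElement

variable {A M : Type*} [CommRing A] [AddCommGroup M] [Module A M]

lemma mem_norm_of_tight {t : A} {p : ℕ}
    (h : ∀ m : M, t ^ (p - 1) • m = 0 → ∃ n : M, t • n = m) {m : M} (hm : t • m = 0) :
    ∃ n : M, t ^ (p - 1) • n = m := by
  have key : ∀ j ≤ p - 1, ∃ n : M, t ^ j • n = m := by
    intro j
    induction j with
    | zero => exact fun _ => ⟨m, by simp⟩
    | succ j ih =>
      intro hj
      obtain ⟨n, rfl⟩ := ih (by omega)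
      obtain ⟨n', rfl⟩ := h n (by
        rw [show p - 1 = (p - 1 - (j + 1)) + (j + 1) by omega, pow_add, mul_smul, pow_succ',
          mul_smul, hm, smul_zero])
      exact ⟨n', by rw [pow_succ, mul_smul]⟩
  exact key _ le_rfl

lemma tight_of_mem_norm {t : A} {p : ℕ}
    (h : ∀ m : M, t • m = 0 → ∃ n : M, t ^ (p - 1) • n = m) {m : M}
    (hm : t ^ (p - 1) • m = 0) : ∃ n : M, t • n = m := by
  have key : ∀ j ≤ p - 1, ∀ m : M, t ^ j • m = 0 → ∃ n : M, t • n = m := by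
    intro j
    induction j with
    | zero => exact fun _ m hm => ⟨0, by simpa using hm.symm⟩
    | succ j ih =>
      intro hj m hm
      obtain ⟨n, hn⟩ := h (t ^ j • m) (by rwa [← mul_smul, ← pow_succ'])
      -- `p - 1 - j ≥ 1`, so correcting `m` by `t ^ (p - 1 - j) • n` keeps its class modulo `tM`.
      obtain ⟨q, hq⟩ : ∃ q, p - 1 = j + (q + 1) := ⟨p - 1 - j - 1, by omega⟩
      obtain ⟨n', hn'⟩ := ih (by omega) (m - t ^ (q + 1) • n) (by
        rw [smul_sub, ← hn, ← mul_smul, ← pow_add, ← hq, sub_self])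
      exact ⟨n' + t ^ q • n, by rw [smul_add, hn', ← mul_smul, ← pow_succ', sub_add_cancel]⟩
  exact key _ le_rfl m hm

/-- The condition `s a = 0 → t ∣ a` passes from `A` to free modules, coordinatewise. -/
lemma tight_of_free [Module.Free A M] {t s : A}
    (h : ∀ a : A, s * a = 0 → t ∣ a) {m : M} (hm : s • m = 0) : ∃ n : M, t • n = m := by
  let b := Module.Free.chooseBasis A M
  have hrange : m ∈ LinearMap.range (LinearMap.lsmul A M t) := by
    rw [← b.linearCombination_repr m, Finsupp.linearCombination_apply]
    refine Submodule.sum_mem _ fun i _ => ?_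
    obtain ⟨c, hc⟩ := h (b.repr m i) (by
      have := congrArg (fun x => b.repr x i) hm
      simpa using this)
    exact ⟨c • b i, by simp [hc, smul_smul, mul_comm]⟩
  obtain ⟨n, hn⟩ := hrange
  exact ⟨n, by simpa using hn⟩

/-- If the residue ring of `A` modulo the nilpotent `t` is covered by the field `K`, then
tightness of `M` forces freeness: a lift of a `K`-basis of `M / tM` is an `A`-basis of `M`. -/
lemma free_of_tight {K : Type*} [Field K] [Algebra K A] [Module K M] [IsScalarTower K A M]
    {t : A} {p : ℕ} (htp : t ^ p = 0)
    (hres : ∀ a : A, ∃ (c : K) (b : A), a = algebraMap K A c + t * b)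
    (h : ∀ m : M, t ^ (p - 1) • m = 0 → ∃ n : M, t • n = m) : Module.Free A M := by
  let W : Submodule K M := (LinearMap.range (LinearMap.lsmul A M t)).restrictScalars K
  have hW : ∀ m : M, m ∈ W ↔ ∃ n : M, t • n = m := fun m => Iff.rfl
  let b := Module.Basis.ofVectorSpace K (M ⧸ W)
  choose e he using fun i => W.mkQ_surjective (b i)
  choose c d hcd using hres
  have hmk : ∀ y : _ →₀ A, W.mkQ (Finsupp.linearCombination A e y) =
      y.sum fun i a => c a • b i := by
    intro y
    rw [Finsupp.linearCombination_apply, Finsupp.sum, map_sum, Finsupp.sum]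
    refine Finset.sum_congr rfl fun i _ => ?_
    rw [← he, ← map_smul, ← sub_eq_zero, ← map_sub, Submodule.mkQ_apply,
      Submodule.Quotient.mk_eq_zero, hW]
    refine ⟨d (y i) • e i, ?_⟩
    rw [eq_sub_iff_add_eq, ← mul_smul, ← algebraMap_smul A (c (y i)) (e i), ← add_smul, add_comm,
      ← hcd]
  have hdiv : ∀ y : _ →₀ A, (∃ n : M, t • n = Finsupp.linearCombination A e y) →
      ∃ z : _ →₀ A, y = t • z := by
    classical
    intro y hy
    have h0 : (y.sum fun i a => c a • b i) = 0 := by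
      rw [← hmk, Submodule.mkQ_apply, Submodule.Quotient.mk_eq_zero, hW]
      exact hy
    have hc0 : ∀ i ∈ y.support, c (y i) = 0 :=
      linearIndependent_iff'.1 b.linearIndependent y.support (fun i => c (y i)) h0
    refine ⟨Finsupp.onFinset y.support (fun i => if i ∈ y.support then d (y i) else 0)
      (by intro i hi; by_contra hn; simp [hn] at hi), ?_⟩
    ext i
    by_cases hi : i ∈ y.support
    · have := hcd (y i)
      rw [hc0 i hi, map_zero, zero_add] at this
      simpa [Finsupp.mem_support_iff.1 hi] using this
    · simp [Finsupp.notMem_support_iff.1 hi]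
  have hli : LinearIndependent A e := by
    rw [linearIndependent_iff]
    intro x hx
    have key : ∀ j ≤ p, ∃ y, x = t ^ j • y := by
      intro j
      induction j with
      | zero => exact fun _ => ⟨x, by simp⟩
      | succ j ih =>
        intro hj
        obtain ⟨y, hy⟩ := ih (by omega)
        obtain ⟨z, hz⟩ := hdiv y (by
          apply h
          rw [hy, map_smul] at hx
          rw [show p - 1 = (p - 1 - j) + j by omega, pow_add, mul_smul, hx, smul_zero])
        exact ⟨z, by rw [hy, hz, pow_succ, mul_smul]⟩
    obtain ⟨y, hy⟩ := key p le_rfl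
    rw [hy, htp, zero_smul]
  have hspan : ⊤ ≤ Submodule.span A (Set.range e) := by
    have base : ∀ m : M, ∃ r ∈ Submodule.span A (Set.range e), ∃ n, m = r + t • n := by
      intro m
      refine ⟨(b.repr (W.mkQ m)).sum fun i a => algebraMap K A a • e i,
        Submodule.sum_mem _ fun i _ => Submodule.smul_mem _ _ (Submodule.subset_span ⟨i, rfl⟩), ?_⟩
      have : m - ((b.repr (W.mkQ m)).sum fun i a => algebraMap K A a • e i) ∈ W := by
        rw [← Submodule.Quotient.mk_eq_zero, ← Submodule.mkQ_apply, map_sub, sub_eq_zero]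
        conv_lhs => rw [← b.linearCombination_repr (W.mkQ m)]
        rw [Finsupp.linearCombination_apply, Finsupp.sum, Finsupp.sum, map_sum]
        exact Finset.sum_congr rfl fun i _ => by rw [algebraMap_smul, map_smul, he]
      obtain ⟨n, hn⟩ := (hW _).1 this
      exact ⟨n, by rw [hn]; abel⟩
    have key : ∀ j : ℕ, ∀ m : M, ∃ r ∈ Submodule.span A (Set.range e), ∃ n, m = r + t ^ j • n := by
      intro j
      induction j with
      | zero => exact fun m => ⟨0, zero_mem _, m, by simp⟩
      | succ j ih =>
        intro m
        obtain ⟨r, hr, n, rfl⟩ := ih m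
        obtain ⟨r', hr', n', rfl⟩ := base n
        exact ⟨r + t ^ j • r', add_mem hr (Submodule.smul_mem _ _ hr'), n', by
          rw [smul_add, pow_succ, mul_smul, add_assoc]⟩
    intro m _
    obtain ⟨r, hr, n, rfl⟩ := key p m
    rwa [htp, zero_smul, add_zero]
  exact Module.Free.of_basis (Module.Basis.mk hli hspan)

end NilpotentElement

section GroupAlgebra

variable (k : Type*) [Field k] (p : ℕ)

lemma cyclicGen_pow (i : ℕ) : cyclicGen k p ^ i =
    MonoidAlgebra.of k (Multiplicative (ZMod p)) (Multiplicative.ofAdd (i : ZMod p)) := by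
  rw [cyclicGen, ← map_pow, ← ofAdd_nsmul, nsmul_one]

/-- The geometric sum `1 + X + … + X ^ (p - 1)` equals `(X - 1) ^ (p - 1)` over `k`, by cancelling
`X - 1` from `X ^ p - 1 = (X - 1) ^ p`. -/
lemma cyclicNorm_eq (hp : p.Prime) [CharP k p] :
    cyclicNorm k p = (cyclicGen k p - 1) ^ (p - 1) := by
  have := Fact.mk hp
  have hX : (∑ i ∈ Finset.range p, (Polynomial.X : Polynomial k) ^ i) =
      (Polynomial.X - 1) ^ (p - 1) := by
    have hne : (Polynomial.X - 1 : Polynomial k) ≠ 0 := by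
      simpa using Polynomial.X_sub_C_ne_zero (1 : k)
    apply mul_right_cancel₀ hne
    rw [geom_sum_mul, ← pow_succ, Nat.sub_add_cancel hp.one_le, sub_pow_char, one_pow]
  have := congrArg (Polynomial.aeval (cyclicGen k p)) hX
  simpa [cyclicNorm] using this

lemma cyclicGen_sub_one_pow (hp : p.Prime) [CharP k p] : (cyclicGen k p - 1) ^ p = 0 := by
  rw [← pow_sub_one_mul hp.ne_zero, ← cyclicNorm_eq k p hp, cyclicNorm, geom_sum_mul,
    cyclicGen_pow, ZMod.natCast_self, ofAdd_zero, map_one, sub_self]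

/-- Modulo `σ - 1` every element is a scalar: for a group element `σ ^ i` this is
`σ ^ i - 1 = (σ - 1) (1 + … + σ ^ (i - 1))`. -/
lemma exists_eq_algebraMap_add (hp : p.Prime) (a : MonoidAlgebra k (Multiplicative (ZMod p))) :
    ∃ (c : k) (b : MonoidAlgebra k (Multiplicative (ZMod p))),
      a = algebraMap k _ c + (cyclicGen k p - 1) * b := by
  have := Fact.mk hp
  induction a using MonoidAlgebra.induction_on with
  | of g =>
    obtain ⟨i, hi⟩ : ∃ i : ℕ, (i : ZMod p) = g.toAdd := ⟨_, ZMod.natCast_zmod_val _⟩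
    refine ⟨1, ∑ j ∈ Finset.range i, cyclicGen k p ^ j, ?_⟩
    rw [mul_geom_sum, cyclicGen_pow, hi, map_one, add_sub_cancel]
    rfl
  | add x y hx hy =>
    obtain ⟨c, b, rfl⟩ := hx
    obtain ⟨c', b', rfl⟩ := hy
    exact ⟨c + c', b + b', by rw [map_add]; ring⟩
  | smul r x hx =>
    obtain ⟨c, b, rfl⟩ := hx
    exact ⟨r * c, r • b, by rw [smul_add, map_mul, Algebra.smul_def, mul_smul_comm]⟩

lemma cyclicNorm_ne_zero (hp : p.Prime) : cyclicNorm k p ≠ 0 := by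
  intro h
  have h1 : (cyclicNorm k p).coeff 1 = 1 := by
    rw [cyclicNorm, MonoidAlgebra.coeff_sum, Finsupp.finsetSum_apply,
      Finset.sum_eq_single_of_mem 0 (Finset.mem_range.2 hp.pos)]
    · simp [MonoidAlgebra.one_def]
    · intro i hi hi0
      rw [cyclicGen_pow, MonoidAlgebra.of_apply, MonoidAlgebra.coeff_single,
        Finsupp.single_eq_of_ne]
      intro h1
      rw [eq_comm, ofAdd_eq_one, ZMod.natCast_eq_zero_iff] at h1
      exact hi0 (Nat.eq_zero_of_dvd_of_lt h1 (Finset.mem_range.1 hi))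
  rw [h] at h1
  simp at h1

lemma dvd_of_cyclicNorm_mul (hp : p.Prime) [CharP k p]
    (a : MonoidAlgebra k (Multiplicative (ZMod p)))
    (ha : (cyclicGen k p - 1) ^ (p - 1) * a = 0) : cyclicGen k p - 1 ∣ a := by
  obtain ⟨c, b, rfl⟩ := exists_eq_algebraMap_add k p hp a
  rw [mul_add, ← mul_assoc, ← pow_succ, Nat.sub_add_cancel hp.one_le,
    cyclicGen_sub_one_pow k p hp, zero_mul, add_zero, mul_comm, ← Algebra.smul_def,
    ← cyclicNorm_eq k p hp, smul_eq_zero_iff_left (cyclicNorm_ne_zero k p hp)] at ha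
  exact ⟨b, by rw [ha, map_zero, zero_add]⟩

end GroupAlgebra

/-- Let `k` be a field of prime characteristic `p` and `M` a module over the
group algebra `k[ℤ/pℤ]`, with `σ` the action of a fixed generator and `N = 1 + σ + … + σ^{p−1}`.
The following are equivalent: (a) `ker N = (σ−1)M`; (b) `ker (σ−1) = N(M)`; (c) `M` is free
over `k[ℤ/pℤ]`.  Moreover, when these conditions hold the Tate trace map
`M⧸(σ−1)M → ker(σ−1)` induced by `N` is bijective. -/
theorem tight_iff_free_cyclic_module
    (k : Type*) [Field k] (p : ℕ) (hp : p.Prime) [CharP k p]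
    (M : Type*) [AddCommGroup M] [Module (MonoidAlgebra k (Multiplicative (ZMod p))) M] :
    List.TFAE
      [(tateNormHom k p M).ker = (sigmaSubOne k p M).range,
       (sigmaSubOne k p M).ker = (tateNormHom k p M).range,
       Module.Free (MonoidAlgebra k (Multiplicative (ZMod p))) M] ∧
    ((tateNormHom k p M).ker = (sigmaSubOne k p M).range →
      ∃ T : M ⧸ (sigmaSubOne k p M).range → (sigmaSubOne k p M).ker,
        (∀ m : M, (T (QuotientAddGroup.mk m) : M) = tateNormHom k p M m) ∧
        Function.Bijective T) := by
  set t := cyclicGen k p - 1 with ht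
  have hs : ∀ m : M, sigmaSubOne k p M m = t • m := fun m => by
    rw [ht, sub_smul, one_smul]; rfl
  have hN : ∀ m : M, tateNormHom k p M m = t ^ (p - 1) • m := fun m => by
    rw [ht, ← cyclicNorm_eq k p hp]; rfl
  have htp : t ^ p = 0 := cyclicGen_sub_one_pow k p hp
  have htp' : t ^ (p - 1) * t = 0 := by rw [← pow_succ, Nat.sub_add_cancel hp.one_le, htp]
  have ha : (tateNormHom k p M).ker = (sigmaSubOne k p M).range ↔
      ∀ m : M, t ^ (p - 1) • m = 0 → ∃ n : M, t • n = m := by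
    simp only [← hs, ← hN]
    refine ⟨fun h m hm => h.le hm, fun h => le_antisymm h ?_⟩
    rintro _ ⟨n, rfl⟩
    rw [AddMonoidHom.mem_ker, hs, hN, ← mul_smul, htp', zero_smul]
  have hb : (sigmaSubOne k p M).ker = (tateNormHom k p M).range ↔
      ∀ m : M, t • m = 0 → ∃ n : M, t ^ (p - 1) • n = m := by
    simp only [← hs, ← hN]
    refine ⟨fun h m hm => h.le hm, fun h => le_antisymm h ?_⟩
    rintro _ ⟨n, rfl⟩
    rw [AddMonoidHom.mem_ker, hs, hN, ← mul_smul, mul_comm, htp', zero_smul]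
  refine ⟨?_, fun h => ?_⟩
  · rw [ha, hb]
    tfae_have 1 → 2 := fun h m hm => mem_norm_of_tight h hm
    tfae_have 2 → 1 := fun h m hm => tight_of_mem_norm h hm
    tfae_have 1 → 3 := fun h => by
      let _ : Module k M :=
        Module.compHom M (algebraMap k (MonoidAlgebra k (Multiplicative (ZMod p))))
      have : IsScalarTower k (MonoidAlgebra k (Multiplicative (ZMod p))) M :=
        IsScalarTower.of_algebraMap_smul fun _ _ => rfl
      exact free_of_tight (K := k) htp (exists_eq_algebraMap_add k p hp) h
    tfae_have 3 → 1 := fun h m hm => tight_of_free (dvd_of_cyclicNorm_mul k p hp) hm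
    tfae_finish
  · have hnorm := fun m hm => mem_norm_of_tight (ha.1 h) (m := m) hm
    let T := QuotientAddGroup.lift (sigmaSubOne k p M).range
      ((tateNormHom k p M).codRestrict (sigmaSubOne k p M).ker fun m => by
        rw [AddMonoidHom.mem_ker, hs, hN, ← mul_smul, mul_comm, htp', zero_smul])
      (fun m hm => Subtype.ext (h.ge hm))
    refine ⟨T, fun m => rfl, ?_, ?_⟩
    · rw [injective_iff_map_eq_zero]
      intro x hx
      induction x using QuotientAddGroup.induction_on with
      | H m => exact (QuotientAddGroup.eq_zero_iff m).2 (h.le (congrArg Subtype.val hx))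
    · rintro ⟨m, hm⟩
      obtain ⟨n, hn⟩ := hnorm m (by rw [← hs]; exact hm)
      exact ⟨QuotientAddGroup.mk n, Subtype.ext ((hN n).trans hn)⟩
end

section
/- Let k be a field of prime characteristic p and let c ∈ (ℤ/pℤ)ˣ be a unit. Let ψ_c : ℤ/pℤ → ℤ/pℤ be the group automorphism x ↦ c·x. For every l ≥ 0, the endomorphism of the group cohomology H^l(ℤ/pℤ, k) (with trivial coefficients k) induced by ψ_c is scalar multiplication by c̄^{⌈l/2⌉}, where c̄ ∈ k is the image of c under the canonical ring homomorphism ℤ/pℤ → k and ⌈l/2⌉ denotes the least integer ≥ l/2. -/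
/-!
Each `H^l(ℤ/pℤ, k)` is at most a line, so `φ` acts on it by a scalar, which can be read off from a
cocycle `F` and a linear functional `T` on cochains that vanishes on coboundaries and has `T F = 1`:
the scalar is `T (φ F)` (`homologyMap_eq_smul`).

Write `g` for the generator `1`, `χ : ℤ/pℤ → k` for the canonical map, a `1`-cocycle, and `β` for
the carry `2`-cocycle. In degree `2m` take `F = β ∪ ⋯ ∪ β`, and for `T` evaluation on the bar chain
`∑ [a₁ | g | ⋯ | aₘ | g]`, summed over `a₁, …, aₘ`; in degree `2m + 1` take `F = χ ∪ β ∪ ⋯ ∪ β` and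
evaluation on `∑ [g | a₁ | g | ⋯ | aₘ | g]`. These chains are cycles modulo `p`
(`evalEven_cobd`, `evalEven_consMap_cobd`).

The value of `T` on the pullback of `F` along `a ↦ c a` is a product: every `β` contributes
`∑ₐ β(c a, c) = ∑ₐ β(a, c)`, which is the residue of `c` (`sum_carry`), and `χ` contributes
`χ(c) = c`. Hence the scalar is `c^m` in degree `2m` and `c^(m+1)` in degree `2m + 1`; for `c = 1`
this is the normalisation `T F = 1`.
-/

open CategoryTheory groupCohomology

namespace CyclicDilation

/-! ### Endomorphisms of one-dimensional homology -/

/-- If the homology in degree `l` is at most a line, `T` is a functional vanishing on boundaries and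
`F` is a cycle with `T F = 1`, then `F` spans the homology, and any endomorphism acts on it by the
scalar `T (φ F)`. The proof descends `T` to homology through the opcycles. -/
theorem homologyMap_eq_smul {k : Type} [Field k] {K : CochainComplex (ModuleCat.{0} k) ℕ}
    (φ : K ⟶ K) (l : ℕ) (T : K.X l →ₗ[k] k) (hT : ∀ i (f : K.X i), T (K.d i l f) = 0)
    (F : K.X l) (hF : K.d l (l + 1) F = 0) (hTF : T F = 1)
    (hdim : ∀ u v : K.homology l, u ≠ 0 → ∃ r : k, r • u = v) (s : k)
    (hs : T (φ.f l F) = s) :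
    HomologicalComplex.homologyMap φ l = s • 𝟙 (K.homology l) := by
  let T' : K.homology l ⟶ ModuleCat.of k k :=
    K.homologyι l ≫ K.descOpcycles (ModuleCat.ofHom T) _ rfl (by ext f; exact hT _ f)
  have hT' : ∀ z : K.cycles l, T' (K.homologyπ l z) = T (K.iCycles l z) := by
    intro z
    have : K.homologyπ l ≫ T' = K.iCycles l ≫ ModuleCat.ofHom T := by simp [T']
    exact congr($this z)
  let z : K.cycles l := K.cyclesMk F (l + 1) (by simp) hF
  have hz : K.iCycles l z = F := K.i_cyclesMk F (l + 1) (by simp) hF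
  have hu : T' (K.homologyπ l z) = 1 := by rw [hT', hz, hTF]
  have hu0 : K.homologyπ l z ≠ 0 := fun h => by simp [h] at hu
  have hmap : HomologicalComplex.homologyMap φ l (K.homologyπ l z) =
      K.homologyπ l (HomologicalComplex.cyclesMap φ l z) :=
    congr($(HomologicalComplex.homologyπ_naturality φ l) z)
  have hi : K.iCycles l (HomologicalComplex.cyclesMap φ l z) = φ.f l F := by
    rw [← hz]
    exact congr($(HomologicalComplex.cyclesMap_i φ l) z)
  obtain ⟨t, ht⟩ := hdim _ (HomologicalComplex.homologyMap φ l (K.homologyπ l z)) hu0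
  have hts : t = s := by
    have := congr(T' $ht)
    rw [hmap, hT', hi, hs, map_smul, hu] at this
    simpa using this
  ext v
  obtain ⟨r, rfl⟩ := hdim _ v hu0
  rw [map_smul, ← ht, hts]
  exact smul_comm r s _

theorem homology_line {k : Type} [Field k] (S : ShortComplex (ModuleCat.{0} k))
    (hS : ∀ a b : S.X₂, a ≠ 0 → ∃ r : k, r • a = b) (u v : S.homology) (hu : u ≠ 0) :
    ∃ r : k, r • u = v := by
  have hinj : Function.Injective S.iCycles := (ModuleCat.mono_iff_injective _).1 inferInstance
  have hsurj : Function.Surjective S.homologyπ := (ModuleCat.epi_iff_surjective _).1 inferInstance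
  obtain ⟨x, rfl⟩ := hsurj u
  obtain ⟨y, rfl⟩ := hsurj v
  have hx : S.iCycles x ≠ 0 := fun h => hu <| by
    rw [hinj (h.trans (map_zero _).symm), map_zero]
  obtain ⟨r, hr⟩ := hS _ (S.iCycles y) hx
  refine ⟨r, ?_⟩
  rw [← map_smul, hinj ((map_smul _ r x).trans hr)]

theorem line_of_iso {k : Type} [Field k] {M N : ModuleCat.{0} k} (e : M ≅ N)
    (hN : ∀ a b : N, a ≠ 0 → ∃ r : k, r • a = b) (u v : M) (hu : u ≠ 0) :
    ∃ r : k, r • u = v := by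
  obtain ⟨r, hr⟩ := hN (e.toLinearEquiv u) (e.toLinearEquiv v)
    (by simpa only [ne_eq, map_eq_zero_iff _ e.toLinearEquiv.injective] using hu)
  exact ⟨r, e.toLinearEquiv.injective (by rw [map_smul, hr])⟩

theorem field_line {k : Type} [Field k] (a b : k) (ha : a ≠ 0) : ∃ r : k, r • a = b :=
  ⟨b * a⁻¹, by simp [ha]⟩

/-- The cohomology of a finite cyclic group with trivial coefficients in a field is at most
one-dimensional in each degree, being a subquotient of the field by the periodic resolution. -/
theorem groupCohomology_line {k : Type} [Field k] {G : Type} [CommGroup G] [Fintype G] (g : G)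
    (hg : ∀ x, x ∈ Subgroup.zpowers g) (l : ℕ)
    (u v : groupCohomology (Rep.trivial k G k) l) (hu : u ≠ 0) : ∃ r : k, r • u = v := by
  rcases Nat.even_or_odd l with hl | hl
  · rcases eq_or_ne l 0 with rfl | h0
    · refine homology_line ((inhomogeneousCochains (Rep.trivial k G k)).sc 0)
        (fun (a b : (Fin 0 → G) → k) ha => ?_) u v hu
      have ha' : a default ≠ 0 := fun h => ha <| funext fun x => by
        rw [Subsingleton.elim x default, h]; rfl
      obtain ⟨r, hr⟩ := field_line _ (b default) ha'
      exact ⟨r, funext fun x => by rw [Subsingleton.elim x default]; exact hr⟩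
    · have : NeZero l := ⟨h0⟩
      exact line_of_iso
        (Rep.FiniteCyclicGroup.groupCohomologyIsoEven (Rep.trivial k G k) g hg l hl)
        (homology_line _ field_line) u v hu
  · exact line_of_iso (Rep.FiniteCyclicGroup.groupCohomologyIsoOdd (Rep.trivial k G k) g hg l hl)
      (homology_line _ field_line) u v hu

/-! ### Bar chains and cocycles for trivial coefficients -/

section Bar
variable {k G : Type} [Field k]

theorem exists_cons {n : ℕ} (v : Fin (n + 1) → G) :
    ∃ (a : G) (w : Fin n → G), v = Fin.cons a w :=
  ⟨v 0, Fin.tail v, (Fin.cons_self_tail v).symm⟩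

/-- Insertion of `a` in the first slot: `(consMap a f) v = f (a, v)`. -/
def consMap {n : ℕ} (a : G) : ((Fin (n + 1) → G) → k) →ₗ[k] ((Fin n → G) → k) :=
  LinearMap.funLeft k k fun v => Fin.cons (α := fun _ => G) a v

theorem consMap_apply {n : ℕ} (a : G) (f : (Fin (n + 1) → G) → k) (v : Fin n → G) :
    consMap a f v = f (Fin.cons a v) := rfl

/-- Evaluation of a `2m`-cochain on the bar chain `∑ [a₁ | g | a₂ | g | ⋯ | aₘ | g]`, the sum being
over all `a₁, …, aₘ ∈ G`. Then `evalEven g m ∘ₗ consMap g` is the evaluation of a `(2m+1)`-cochain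
on `∑ [g | a₁ | g | ⋯ | aₘ | g]`. -/
def evalEven [Fintype G] (g : G) : (m : ℕ) → ((Fin (2 * m) → G) → k) →ₗ[k] k
  | 0 => LinearMap.proj Fin.elim0
  | m + 1 => evalEven g m ∘ₗ consMap g ∘ₗ ∑ a : G, consMap (n := 2 * m + 1) a

theorem evalEven_succ [Fintype G] (g : G) (m : ℕ) (f : (Fin (2 * m + 2) → G) → k) :
    evalEven g (m + 1) f = evalEven g m (consMap g (∑ a : G, consMap a f)) := by
  simp [evalEven]

/-- The `m`-th cup power of a function `β` of two variables:
`(v₀, …, v₂ₘ₋₁) ↦ β(v₀, v₁) β(v₂, v₃) ⋯`. -/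
def evenCocycle (β : G → G → k) : (m : ℕ) → (Fin (2 * m) → G) → k
  | 0 => fun _ => 1
  | m + 1 => fun v : Fin (2 * m + 2) → G => β (v 0) (v 1) * evenCocycle β m (Fin.tail (Fin.tail v))

/-- The cup product of `χ` with the `m`-th cup power of `β`. -/
def oddCocycle (χ : G → k) (β : G → G → k) (m : ℕ) : (Fin (2 * m + 1) → G) → k :=
  fun v => χ (v 0) * evenCocycle β m (Fin.tail v)

theorem evenCocycle_cons (β : G → G → k) (m : ℕ) (a b : G) (v : Fin (2 * m) → G) :
    evenCocycle β (m + 1) (Fin.cons a (Fin.cons b v) : Fin (2 * m + 2) → G) =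
      β a b * evenCocycle β m v := rfl

theorem oddCocycle_cons (χ : G → k) (β : G → G → k) (m : ℕ) (a : G) (v : Fin (2 * m) → G) :
    oddCocycle χ β m (Fin.cons a v) = χ a * evenCocycle β m v := rfl

/-- The value of the functional on the pullback of the `2m`-cocycle along `ψ`. Each pair of
consecutive arguments contributes an independent factor `∑ₐ β(ψ a, ψ g)`. -/
theorem evalEven_evenCocycle [Fintype G] (β : G → G → k) (g : G) (ψ : G → G) (m : ℕ) :
    evalEven g m (fun v => evenCocycle β m (fun i => ψ (v i))) = (∑ a : G, β (ψ a) (ψ g)) ^ m := by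
  induction m with
  | zero => simp [evalEven, evenCocycle]
  | succ m ih =>
    have : consMap g (∑ a : G, consMap a
        (fun v : Fin (2 * m + 2) → G => evenCocycle β (m + 1) (fun i => ψ (v i)))) =
        (∑ a : G, β (ψ a) (ψ g)) • fun v => evenCocycle β m (fun i => ψ (v i)) := by
      ext v
      simp only [map_sum, Finset.sum_apply, Pi.smul_apply, smul_eq_mul, Finset.sum_mul]
      rfl
    refine (evalEven_succ g m _).trans ?_
    refine (congrArg (evalEven g m) this).trans ?_
    rw [map_smul, ih, pow_succ', smul_eq_mul]

theorem evalEven_oddCocycle [Fintype G] (χ : G → k) (β : G → G → k) (g : G) (ψ : G → G) (m : ℕ) :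
    evalEven g m (consMap g (fun v => oddCocycle χ β m (fun i => ψ (v i)))) =
      χ (ψ g) * (∑ a : G, β (ψ a) (ψ g)) ^ m := by
  have h : consMap g (fun v : Fin (2 * m + 1) → G => oddCocycle χ β m (fun i => ψ (v i))) =
      χ (ψ g) • fun v => evenCocycle β m (fun i => ψ (v i)) := rfl
  rw [h, map_smul, evalEven_evenCocycle, smul_eq_mul]

variable [CommGroup G]

/-- The inhomogeneous coboundary operator for trivial coefficients, as a linear map between
function spaces. -/
def cobd (n : ℕ) : ((Fin n → G) → k) →ₗ[k] ((Fin (n + 1) → G) → k) where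
  toFun f g :=
    f (Fin.tail g) + ∑ j : Fin (n + 1), (-1 : k) ^ ((j : ℕ) + 1) * f (Fin.contractNth j (· * ·) g)
  map_add' f g := by
    ext
    simp only [Pi.add_apply, mul_add, Finset.sum_add_distrib]
    ring
  map_smul' r f := by
    ext
    simp only [Pi.smul_apply, smul_eq_mul, RingHom.id_apply, mul_add, Finset.mul_sum, mul_left_comm]

theorem cobd_apply (n : ℕ) (f : (Fin n → G) → k) (g : Fin (n + 1) → G) :
    cobd n f g = f (Fin.tail g) +
      ∑ j : Fin (n + 1), (-1 : k) ^ ((j : ℕ) + 1) * f (Fin.contractNth j (· * ·) g) := rfl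

theorem d_eq_cobd (n : ℕ) (f : (Fin n → G) → k) :
    inhomogeneousCochains.d (Rep.trivial k G k) n f = cobd n f := by
  ext g
  simp [inhomogeneousCochains.d_hom_apply, cobd_apply]
  rfl

theorem contractNth_zero {n : ℕ} (a b : G) (v : Fin n → G) :
    Fin.contractNth 0 (· * ·) (Fin.cons a (Fin.cons b v) : Fin (n + 2) → G) =
      Fin.cons (a * b) v := by
  ext i
  refine Fin.cases ?_ (fun i => ?_) i <;> simp [Fin.contractNth]

theorem contractNth_succ {n : ℕ} (a : G) (v : Fin (n + 1) → G) (j : Fin (n + 1)) :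
    Fin.contractNth j.succ (· * ·) (Fin.cons a v : Fin (n + 2) → G) =
      Fin.cons a (Fin.contractNth j (· * ·) v) := by
  ext i
  refine Fin.cases ?_ (fun i => ?_) i <;> simp [Fin.contractNth]

/-- The recursive form of the coboundary: fixing the first argument `a` anticommutes with the
coboundary up to the terms that involve `a`. -/
theorem cobd_cons {n : ℕ} (f : (Fin (n + 1) → G) → k) (a b : G) (v : Fin n → G) :
    cobd (n + 1) f (Fin.cons a (Fin.cons b v)) =
      f (Fin.cons b v) - f (Fin.cons (a * b) v) + f (Fin.cons a v)
        - cobd n (consMap a f) (Fin.cons b v) := by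
  rw [cobd_apply, cobd_apply, Fin.sum_univ_succ]
  simp only [contractNth_zero, contractNth_succ, Fin.tail_cons, consMap_apply, Fin.val_zero,
    Fin.val_succ, pow_succ (-1 : k) (_ + 1)]
  simp only [mul_neg_one, neg_mul, Finset.sum_neg_distrib, pow_one, zero_add]
  ring

theorem cobd_zero (f : (Fin 0 → G) → k) : cobd 0 f = 0 := by
  ext g
  simp [cobd_apply, Subsingleton.elim _ (Fin.tail g)]

section Cycle
variable [Fintype G]

/-- Summing over the first argument anticommutes with the coboundary: the two correction terms
`f (a * b, v)` and `f (a, v)` have equal sums over `a`, and the remaining one is multiplied by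
`|G| = 0`. -/
theorem sum_consMap_cobd (hG : (Fintype.card G : k) = 0) {n : ℕ} (f : (Fin (n + 1) → G) → k) :
    ∑ a : G, consMap a (cobd (n + 1) f) = - cobd n (∑ a : G, consMap a f) := by
  ext v
  obtain ⟨b, v, rfl⟩ := exists_cons v
  have h : ∑ a : G, f (Fin.cons (a * b) v) = ∑ a : G, f (Fin.cons a v) :=
    Fintype.sum_equiv (Equiv.mulRight b) _ _ fun _ => rfl
  simp only [map_sum, Finset.sum_apply, Pi.neg_apply, consMap_apply, cobd_cons, Finset.sum_sub_distrib,
    Finset.sum_add_distrib, h]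
  simp [hG]

/-- The defect of anticommutation of `consMap g` with the coboundary is killed by summing over the
next argument. -/
theorem sum_consMap_consMap_cobd (hG : (Fintype.card G : k) = 0) {n : ℕ} (g : G)
    (f : (Fin (n + 1) → G) → k) :
    ∑ a : G, consMap a (consMap g (cobd (n + 1) f) + cobd n (consMap g f)) = 0 := by
  ext v
  have h : ∑ a : G, f (Fin.cons (g * a) v) = ∑ a : G, f (Fin.cons a v) :=
    Fintype.sum_equiv (Equiv.mulLeft g) _ _ fun _ => rfl
  simp only [Finset.sum_apply, consMap_apply, Pi.add_apply, cobd_cons, sub_add_cancel,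
    Finset.sum_sub_distrib, Finset.sum_add_distrib, h]
  simp [hG]

/-- The functional on `(2m+1)`-cochains vanishes on coboundaries. -/
theorem evalEven_consMap_cobd (hG : (Fintype.card G : k) = 0) (g : G) (m : ℕ)
    (f : (Fin (2 * m) → G) → k) :
    evalEven g m (consMap g (cobd (2 * m) f)) = 0 := by
  induction m with
  | zero => rw [cobd_zero, map_zero, map_zero]
  | succ m ih =>
    have h1 : evalEven g (m + 1)
        (consMap g (cobd (2 * m + 2) f) + cobd (2 * m + 1) (consMap g f)) = 0 := by
      rw [evalEven_succ, sum_consMap_consMap_cobd hG, map_zero, map_zero]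
    have h2 : evalEven g (m + 1) (cobd (2 * m + 1) (consMap g f)) = 0 := by
      rw [evalEven_succ, sum_consMap_cobd hG, map_neg, map_neg, ih, neg_zero]
    rw [map_add, h2, add_zero] at h1
    exact h1

/-- The functional on `(2m+2)`-cochains vanishes on coboundaries. -/
theorem evalEven_cobd (hG : (Fintype.card G : k) = 0) (g : G) (m : ℕ)
    (f : (Fin (2 * m + 1) → G) → k) :
    evalEven g (m + 1) (cobd (2 * m + 1) f) = 0 := by
  rw [evalEven_succ, sum_consMap_cobd hG, map_neg, map_neg, evalEven_consMap_cobd hG, neg_zero]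

end Cycle

section Cocycle
variable {χ : G → k} {β : G → G → k}

theorem cobd_evenCocycle (hβ : ∀ a b c, β a b + β (a * b) c = β b c + β a (b * c)) (m : ℕ) :
    cobd (2 * m) (evenCocycle β m) = 0 := by
  induction m with
  | zero => exact cobd_zero _
  | succ m ih =>
    have hp : ∀ a b, consMap b (consMap (n := 2 * m + 1) a (evenCocycle β (m + 1))) =
        β a b • evenCocycle β m :=
      fun a b => rfl
    ext v
    obtain ⟨a, v, rfl⟩ := exists_cons v
    obtain ⟨b, v, rfl⟩ := exists_cons v
    obtain ⟨c, v, rfl⟩ := exists_cons v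
    erw [cobd_cons, cobd_cons, hp, map_smul, ih]
    simp only [consMap_apply, evenCocycle_cons]
    simp only [smul_zero, Pi.zero_apply]
    linear_combination (- evenCocycle β m v) * hβ a b c

theorem cobd_oddCocycle (hχ : ∀ a b, χ (a * b) = χ a + χ b)
    (hβ : ∀ a b c, β a b + β (a * b) c = β b c + β a (b * c)) (m : ℕ) :
    cobd (2 * m + 1) (oddCocycle χ β m) = 0 := by
  have hp : ∀ a, consMap a (oddCocycle χ β m) = χ a • evenCocycle β m := fun a => rfl
  ext v
  obtain ⟨a, v, rfl⟩ := exists_cons v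
  obtain ⟨b, v, rfl⟩ := exists_cons v
  rw [cobd_cons, hp, map_smul, cobd_evenCocycle hβ, oddCocycle_cons, oddCocycle_cons,
    oddCocycle_cons, hχ]
  simp
  ring

end Cocycle
end Bar

/-! ### The carry cocycle of `ℤ/pℤ` -/

section Carry
variable {p : ℕ} [NeZero p]

/-- The carry when adding the representatives of `a` and `b` in `{0, …, p - 1}`: the `2`-cocycle of
the extension of `ℤ/pℤ` by `ℤ` with middle term `ℤ`. -/
def carry (a b : ZMod p) : ℕ := (a.val + b.val) / p

theorem carry_eq (a b : ZMod p) : (a + b).val + p * carry a b = a.val + b.val := by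
  rw [ZMod.val_add, carry, Nat.mod_add_div]

theorem carry_cocycle (a b c : ZMod p) :
    carry a b + carry (a + b) c = carry b c + carry a (b + c) := by
  have h1 := carry_eq a b
  have h2 := carry_eq (a + b) c
  have h3 := carry_eq b c
  have h4 := carry_eq a (b + c)
  rw [← add_assoc] at h4
  apply Nat.eq_of_mul_eq_mul_left (NeZero.pos p)
  linarith

/-- Adding `c` permutes `ℤ/pℤ`, so the sum over `a` of `(a + c).val + p * carry a c = a.val + c.val`
leaves `p * ∑ carry a c = p * c.val`. -/
theorem sum_carry (c : ZMod p) : ∑ a : ZMod p, carry a c = c.val := by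
  have h := Finset.sum_congr rfl fun a (_ : a ∈ Finset.univ) => carry_eq a c
  have h' : ∑ a : ZMod p, (a + c).val = ∑ a : ZMod p, a.val :=
    Fintype.sum_equiv (Equiv.addRight c) _ _ fun _ => rfl
  simp only [Finset.sum_add_distrib, h', ← Finset.mul_sum, Finset.sum_const, Finset.card_univ,
    ZMod.card, smul_eq_mul] at h
  exact Nat.eq_of_mul_eq_mul_left (NeZero.pos p) (Nat.add_left_cancel h)

end Carry

end CyclicDilation

open CyclicDilation

/-- Let `k` be a field of prime characteristic `p` and `c ∈ (ℤ/pℤ)ˣ` a unit.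
Let `ψ_c : ℤ/pℤ → ℤ/pℤ` be the automorphism `x ↦ c·x`.  The endomorphism of the group
cohomology `H^l(ℤ/pℤ, k)` (trivial coefficients) induced by `ψ_c` — i.e. the map on cohomology
induced by precomposition with `ψ_c` on the complex of inhomogeneous cochains — is scalar
multiplication by `c̄^{⌈l/2⌉}`, where `c̄ ∈ k` is the image of `c` under the canonical ring
homomorphism `ℤ/pℤ → k` and `⌈l/2⌉ = (l+1)/2`. -/
theorem dilation_acts_on_cyclic_group_cohomology_by_ceil_half_power
    (k : Type) [Field k] (p : ℕ) (hp : p.Prime) [CharP k p]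
    (c : (ZMod p)ˣ) (l : ℕ)
    (φ : inhomogeneousCochains (Rep.trivial k (Multiplicative (ZMod p)) k) ⟶
         inhomogeneousCochains (Rep.trivial k (Multiplicative (ZMod p)) k))
    (hφ : ∀ (n : ℕ) (f : (Fin n → Multiplicative (ZMod p)) → k)
        (v : Fin n → Multiplicative (ZMod p)),
        (φ.f n) f v
          = f (fun i => Multiplicative.ofAdd ((c : ZMod p) * Multiplicative.toAdd (v i)))) :
    HomologicalComplex.homologyMap φ l
      = (ZMod.castHom (dvd_refl p) k (c : ZMod p) ^ ((l + 1) / 2)) •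
          𝟙 (groupCohomology (Rep.trivial k (Multiplicative (ZMod p)) k) l) := by
  have : Fact p.Prime := ⟨hp⟩
  let g : Multiplicative (ZMod p) := Multiplicative.ofAdd 1
  have hg : ∀ x, x ∈ Subgroup.zpowers g := fun x =>
    ⟨(Multiplicative.toAdd x).val, by
      apply Multiplicative.toAdd.injective
      simp [g, toAdd_zpow]⟩
  have hG : (Fintype.card (Multiplicative (ZMod p)) : k) = 0 := by simp
  let ι := ZMod.castHom (dvd_refl p) k
  let χ : Multiplicative (ZMod p) → k := fun a => ι a.toAdd
  let β : Multiplicative (ZMod p) → Multiplicative (ZMod p) → k :=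
    fun a b => (carry a.toAdd b.toAdd : ℕ)
  have hχ : ∀ a b, χ (a * b) = χ a + χ b := fun a b => by simp [χ]
  have hβ : ∀ a b c, β a b + β (a * b) c = β b c + β a (b * c) := fun a b c => by
    simp only [β, toAdd_mul, ← Nat.cast_add, carry_cocycle]
  let ψ : (ZMod p)ˣ → Multiplicative (ZMod p) → Multiplicative (ZMod p) :=
    fun u a => Multiplicative.ofAdd ((u : ZMod p) * a.toAdd)
  have hψ1 : ∀ a, ψ 1 a = a := fun a => by simp [ψ]
  have hsum : ∀ u : (ZMod p)ˣ, ∑ a : Multiplicative (ZMod p), β (ψ u a) (ψ u g) = ι u := by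
    intro u
    have h1 : ∑ a : Multiplicative (ZMod p), β (ψ u a) (ψ u g) =
        ∑ a : ZMod p, (carry a (u : ZMod p) : k) :=
      Fintype.sum_equiv (Multiplicative.toAdd.trans (Units.mulLeft u)) _ _ fun a => by
        simp [β, ψ, g]
    rw [h1, ← Nat.cast_sum, sum_carry, ← map_natCast ι, ZMod.natCast_zmod_val]
  have hχg : ∀ u : (ZMod p)ˣ, χ (ψ u g) = ι u := fun u => by simp [χ, ψ, g]
  rcases Nat.even_or_odd' l with ⟨m, rfl | rfl⟩
  · have hval : ∀ u, evalEven g m (fun v => evenCocycle β m (fun i => ψ u (v i))) = ι u ^ m := by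
      intro u
      rw [evalEven_evenCocycle, hsum]
    -- The case `ψ = id` normalises the functional.
    have h1 := hval 1
    simp only [hψ1, Units.val_one, map_one, one_pow] at h1
    rw [show (2 * m + 1) / 2 = m by omega]
    refine homologyMap_eq_smul φ _ (evalEven g m) (fun i f => ?_) (evenCocycle β m) ?_ h1
      (groupCohomology_line g hg _) _ ?_
    · by_cases hi : i + 1 = 2 * m
      · obtain ⟨m, rfl⟩ : ∃ n, m = n + 1 := ⟨m - 1, by omega⟩
        obtain rfl : i = 2 * m + 1 := by omega
        erw [inhomogeneousCochains.d_def, d_eq_cobd]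
        exact evalEven_cobd hG g m f
      · rw [HomologicalComplex.shape _ _ _ (by simpa using hi)]
        exact map_zero (evalEven g m)
    · erw [inhomogeneousCochains.d_def, d_eq_cobd]
      exact cobd_evenCocycle hβ m
    · rw [← hval]
      congr 1
      ext v
      exact hφ _ _ v
  · have hval : ∀ u,
        evalEven g m (consMap g (fun v => oddCocycle χ β m (fun i => ψ u (v i)))) = ι u ^ (m + 1) :=
      fun u => by rw [evalEven_oddCocycle, hsum, hχg, pow_succ']
    -- The case `ψ = id` normalises the functional.
    have h1 := hval 1
    simp only [hψ1, Units.val_one, map_one, one_pow] at h1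
    rw [show (2 * m + 1 + 1) / 2 = m + 1 by omega]
    refine homologyMap_eq_smul φ _ (evalEven g m ∘ₗ consMap g) (fun i f => ?_) (oddCocycle χ β m) ?_ h1
      (groupCohomology_line g hg _) _ ?_
    · by_cases hi : i + 1 = 2 * m + 1
      · obtain rfl : i = 2 * m := by omega
        erw [inhomogeneousCochains.d_def, d_eq_cobd]
        exact evalEven_consMap_cobd hG g m f
      · rw [HomologicalComplex.shape _ _ _ (by simpa using hi)]
        exact map_zero (evalEven g m ∘ₗ consMap g)
    · erw [inhomogeneousCochains.d_def, d_eq_cobd]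
      exact cobd_oddCocycle hχ hβ m
    · rw [← hval]
      refine congrArg (evalEven g m ∘ₗ consMap g) ?_
      ext v
      exact hφ _ _ v
end

section
/- Let k be a field of odd prime characteristic p and let c be a generator of the cyclic group (ℤ/pℤ)ˣ of units. Let ψ_c : ℤ/pℤ → ℤ/pℤ be the group automorphism x ↦ c·x, and let ψ_c^* be the induced endomorphism of the group cohomology H^l(ℤ/pℤ, k) with trivial coefficients k. Then for every l with 0 < l ≤ 2(p−2), the only fixed vector of ψ_c^* in H^l(ℤ/pℤ, k) is zero: if ψ_c^*(v) = v then v = 0. -/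
/-!
For `l > 0` the space `H^l(ℤ/pℤ, k)` is one-dimensional, and `ψ_c^*` acts on it by the scalar
`c ^ ⌈l/2⌉`. Since `1 ≤ ⌈l/2⌉ ≤ p - 2` and `c` has order `p - 1`, this scalar is not `1`, so there is
no nonzero fixed vector.

One-dimensionality comes from the periodic resolution (`exists_spanning`). The scalar is found with
explicit cochains: a generator of `H^l` is the cocycle `κ ∪ ⋯ ∪ κ` for `l` even and
`χ ∪ κ ∪ ⋯ ∪ κ` for `l` odd, where `κ` is the carry 2-cocycle and `χ : ℤ/pℤ → k` the canonical
homomorphism. Its class is detected by evaluation on the bar chain coming from the periodic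
resolution, `f ↦ ∑ f(i₁, 1, i₂, 1, …)` (with an additional leading argument `1` for `l` odd). This
evaluation kills coboundaries (`evenPairing_cobd`, `oddPairing_cobd`), takes the value `1` on the
cocycle, and takes the value `c ^ ⌈l/2⌉` on its pullback along `ψ_c`, because `χ(c) = c` and
`∑ i, κ(c i, c) = c` (`sum_carry`). These facts suffice by `eq_zero_of_pairing`.
-/

open CategoryTheory groupCohomology

/-! ### Explicit cochains and their pairing with cycles -/

section Cochains
variable {G k : Type} [Field k]

/-- The cochain `v ↦ κ(v₀, v₁) κ(v₂, v₃) ⋯ κ(v₂ₘ₋₂, v₂ₘ₋₁)` of degree `2m`, that is, the `m`-fold cup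
power of the 2-cochain `κ`. -/
def evenCochain (κ : G → G → k) : ∀ m : ℕ, (Fin (2 * m) → G) → k
  | 0, _ => 1
  | m + 1, v => κ ((v : Fin (2 * m + 2) → G) 0) ((v : Fin (2 * m + 2) → G) 1) *
      evenCochain κ m (fun i => (v : Fin (2 * m + 2) → G) i.succ.succ)

theorem evenCochain_cons (κ : G → G → k) (m : ℕ) (a b : G) (w : Fin (2 * m) → G) :
    evenCochain κ (m + 1) (Fin.cons a (Fin.cons b w : Fin (2 * m + 1) → G) : Fin (2 * m + 2) → G)
      = κ a b * evenCochain κ m w := rfl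

theorem evenCochain_comp (κ : G → G → k) (ψ : G → G) (m : ℕ) (v : Fin (2 * m) → G) :
    evenCochain κ m (fun i => ψ (v i)) = evenCochain (fun a b => κ (ψ a) (ψ b)) m v := by
  induction m with
  | zero => rfl
  | succ m ih => exact congrArg _ (ih _)

/-- The cochain `v ↦ χ(v₀) κ(v₁, v₂) ⋯ κ(v₂ₘ₋₁, v₂ₘ)` of degree `2m + 1`: the cup product of the
1-cochain `χ` with the `m`-fold cup power of `κ`. -/
def oddCochain (χ : G → k) (κ : G → G → k) (m : ℕ) (v : Fin (2 * m + 1) → G) : k :=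
  χ (v 0) * evenCochain κ m (fun i => v i.succ)

theorem oddCochain_cons (χ : G → k) (κ : G → G → k) (m : ℕ) (a : G) (w : Fin (2 * m) → G) :
    oddCochain χ κ m (Fin.cons a w : Fin (2 * m + 1) → G) = χ a * evenCochain κ m w := rfl

section Pairing
variable [Fintype G]

/-- The functional `f ↦ ∑ f(i₁, g, i₂, g, …, iₘ, g)`, summed over all `i₁, …, iₘ : G`. When `g`
generates `G`, this is evaluation on the bar chain that corresponds to the generator in degree `2m`
of the periodic resolution of the cyclic group `G`; the generator in degree `2m + 1` gives
`f ↦ evenPairing k g m (f(g, ·))`. -/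
def evenPairing (k : Type) [Field k] (g : G) : ∀ m : ℕ, ((Fin (2 * m) → G) → k) →ₗ[k] k
  | 0 => LinearMap.proj Fin.elim0
  | m + 1 => ∑ i : G, evenPairing k g m ∘ₗ LinearMap.funLeft k k
      (fun w : Fin (2 * m) → G =>
        (Fin.cons i (Fin.cons g w : Fin (2 * m + 1) → G) : Fin (2 * m + 2) → G))

theorem evenPairing_succ (g : G) (m : ℕ) (f : (Fin (2 * m + 2) → G) → k) :
    evenPairing k g (m + 1) f = ∑ i : G, evenPairing k g m (fun w =>
      f (Fin.cons i (Fin.cons g w : Fin (2 * m + 1) → G) : Fin (2 * m + 2) → G)) := by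
  simp only [evenPairing, LinearMap.sum_apply, LinearMap.comp_apply]
  rfl

theorem evenPairing_evenCochain (g : G) (κ : G → G → k) (m : ℕ) :
    evenPairing k g m (evenCochain κ m) = (∑ i, κ i g) ^ m := by
  induction m with
  | zero => simp [evenPairing, evenCochain]
  | succ m ih =>
    rw [evenPairing_succ]
    simp only [evenCochain_cons]
    have (i : G) : evenPairing k g m (fun w => κ i g * evenCochain κ m w)
        = κ i g * (∑ i, κ i g) ^ m := by
      exact ((evenPairing k g m).map_smul (κ i g) (evenCochain κ m)).trans
        (congrArg (κ i g * ·) ih)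
    simp only [this, ← Finset.sum_mul, pow_succ']

end Pairing

variable [CommGroup G]

/-- The differential of inhomogeneous cochains with trivial coefficients, as a plain function. -/
def cobd {n : ℕ} (f : (Fin n → G) → k) (v : Fin (n + 1) → G) : k :=
  f (fun i => v i.succ) +
    ∑ j : Fin (n + 1), (-1 : k) ^ ((j : ℕ) + 1) * f (Fin.contractNth j (· * ·) v)

theorem cobd_degree_zero (f : (Fin 0 → G) → k) (v : Fin 1 → G) : cobd f v = 0 := by
  unfold cobd
  rw [Subsingleton.elim (fun i : Fin 0 => v i.succ) (Fin.contractNth default (· * ·) v)]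
  simp

theorem contractNth_zero_cons {n : ℕ} (a b : G) (u : Fin n → G) :
    Fin.contractNth 0 (· * ·) (Fin.cons a (Fin.cons b u : Fin (n + 1) → G) : Fin (n + 2) → G)
      = (Fin.cons (a * b) u : Fin (n + 1) → G) := by
  funext i
  refine Fin.cases ?_ (fun i => ?_) i
  · simp [Fin.contractNth]
  · simp [Fin.contractNth]

theorem contractNth_succ_cons {n : ℕ} (a : G) (w : Fin (n + 1) → G) (j : Fin (n + 1)) :
    Fin.contractNth j.succ (· * ·) (Fin.cons a w : Fin (n + 2) → G)
      = (Fin.cons a (Fin.contractNth j (· * ·) w) : Fin (n + 1) → G) := by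
  funext i
  refine Fin.cases ?_ (fun i => ?_) i
  · simp [Fin.contractNth]
  · simp [Fin.contractNth]

/-- A recursion in the first variable for the differential; every computation with `cobd` in
positive degree below is an application of it. -/
theorem cobd_cons {n : ℕ} (f : (Fin (n + 1) → G) → k) (a b : G) (u : Fin n → G) :
    cobd f (Fin.cons a (Fin.cons b u : Fin (n + 1) → G) : Fin (n + 2) → G)
      = f (Fin.cons b u) - f (Fin.cons (a * b) u) + f (Fin.cons a u)
        - cobd (fun w : Fin n → G => f (Fin.cons a w)) (Fin.cons b u : Fin (n + 1) → G) := by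
  unfold cobd
  rw [Fin.sum_univ_succ]
  simp only [contractNth_zero_cons, contractNth_succ_cons, Fin.cons_succ, Fin.val_zero,
    Fin.val_succ, pow_succ, pow_zero]
  simp only [mul_neg, neg_mul, one_mul, mul_one, neg_neg, Finset.sum_neg_distrib]
  ring

theorem cobd_const_mul {n : ℕ} (r : k) (f : (Fin n → G) → k) (v : Fin (n + 1) → G) :
    cobd (fun w => r * f w) v = r * cobd f v := by
  simp only [cobd, mul_add, Finset.mul_sum]
  congr 1
  exact Finset.sum_congr rfl fun j _ => by ring

theorem cobd_evenCochain {κ : G → G → k}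
    (hκ : ∀ a b c, κ b c - κ (a * b) c + κ a (b * c) - κ a b = 0) (m : ℕ)
    (v : Fin (2 * m + 1) → G) : cobd (evenCochain κ m) v = 0 := by
  induction m with
  | zero => exact cobd_degree_zero _ _
  | succ m ih =>
    revert v
    change ∀ v : Fin (2 * m + 3) → G, cobd (n := 2 * m + 2) (evenCochain κ (m + 1)) v = 0
    intro v
    obtain ⟨a, v, rfl⟩ : ∃ a w, v = (Fin.cons a w : Fin (2 * m + 3) → G) :=
      ⟨_, _, (Fin.cons_self_tail v).symm⟩
    obtain ⟨b, v, rfl⟩ : ∃ a w, v = (Fin.cons a w : Fin (2 * m + 2) → G) :=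
      ⟨_, _, (Fin.cons_self_tail v).symm⟩
    obtain ⟨c, u, rfl⟩ : ∃ a w, v = (Fin.cons a w : Fin (2 * m + 1) → G) :=
      ⟨_, _, (Fin.cons_self_tail v).symm⟩
    rw [cobd_cons, cobd_cons]
    simp only [evenCochain_cons, cobd_const_mul, ih]
    linear_combination evenCochain κ m u * hκ a b c

theorem cobd_oddCochain {χ : G → k} {κ : G → G → k} (hχ : ∀ a b, χ (a * b) = χ a + χ b)
    (hκ : ∀ a b c, κ b c - κ (a * b) c + κ a (b * c) - κ a b = 0) (m : ℕ)
    (v : Fin (2 * m + 2) → G) : cobd (oddCochain χ κ m) v = 0 := by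
  obtain ⟨a, v, rfl⟩ : ∃ a w, v = (Fin.cons a w : Fin (2 * m + 2) → G) :=
    ⟨_, _, (Fin.cons_self_tail v).symm⟩
  obtain ⟨b, u, rfl⟩ : ∃ a w, v = (Fin.cons a w : Fin (2 * m + 1) → G) :=
    ⟨_, _, (Fin.cons_self_tail v).symm⟩
  rw [cobd_cons]
  simp only [oddCochain_cons, cobd_const_mul, cobd_evenCochain hκ, hχ]
  ring

variable [Fintype G]

/-- Induction step from degree `2m + 1` to degree `2m + 2`. In the recursion for `cobd f` at
`(i, g, w)`, the terms `f(i g, w)` and `f(i, w)` cancel after summing over `i`, while `f(g, w)` does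
not depend on `i` and is therefore multiplied by `|G| = 0`. -/
theorem evenPairing_cobd_of_odd (hG : (Fintype.card G : k) = 0) (g : G) (m : ℕ)
    (H : ∀ h : (Fin (2 * m) → G) → k,
      evenPairing k g m (fun w => cobd h (Fin.cons g w : Fin (2 * m + 1) → G)) = 0)
    (f : (Fin (2 * m + 1) → G) → k) : evenPairing k g (m + 1) (cobd f) = 0 := by
  have key (i : G) : evenPairing k g m (fun w =>
      cobd f (Fin.cons i (Fin.cons g w : Fin (2 * m + 1) → G) : Fin (2 * m + 2) → G))
      = evenPairing k g m (fun w => f (Fin.cons g w))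
        - evenPairing k g m (fun w => f (Fin.cons (i * g) w))
        + evenPairing k g m (fun w => f (Fin.cons i w)) := by
    refine (congrArg (evenPairing k g m) (funext fun w => cobd_cons f i g w)).trans ?_
    refine (map_sub (evenPairing k g m) (fun w => f (Fin.cons g w) - f (Fin.cons (i * g) w)
      + f (Fin.cons i w)) (fun w => cobd (fun w => f (Fin.cons i w)) (Fin.cons g w))).trans ?_
    rw [H, sub_zero]
    exact (map_add (evenPairing k g m) _ _).trans
      (congrArg (· + _) (map_sub (evenPairing k g m) _ _))
  rw [evenPairing_succ]
  simp only [key, Finset.sum_add_distrib, Finset.sum_sub_distrib]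
  have shift : ∑ i, evenPairing k g m (fun w => f (Fin.cons (i * g) w))
      = ∑ i, evenPairing k g m (fun w => f (Fin.cons i w)) :=
    Equiv.sum_comp (Equiv.mulRight g) (fun i => evenPairing k g m (fun w => f (Fin.cons i w)))
  rw [shift]
  simp [hG]

/-- The functional in degree `2m + 1` kills coboundaries. The step from degree `2m` to degree
`2m + 1` is by the same cancellations as in `evenPairing_cobd_of_odd`. -/
theorem oddPairing_cobd (hG : (Fintype.card G : k) = 0) (g : G) (m : ℕ)
    (h : (Fin (2 * m) → G) → k) :
    evenPairing k g m (fun w => cobd h (Fin.cons g w : Fin (2 * m + 1) → G)) = 0 := by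
  induction m with
  | zero =>
    simp only [cobd_degree_zero]
    exact map_zero _
  | succ m ih =>
    revert h
    change ∀ h : (Fin (2 * m + 2) → G) → k,
      evenPairing k g (m + 1) (fun w => cobd h (Fin.cons g w : Fin (2 * m + 3) → G)) = 0
    intro h
    have hE := evenPairing_cobd_of_odd hG g m ih (fun w => h (Fin.cons g w))
    rw [evenPairing_succ] at hE ⊢
    have key (i : G) : evenPairing k g m (fun w => cobd h
        (Fin.cons g (Fin.cons i (Fin.cons g w : Fin (2 * m + 1) → G) : Fin (2 * m + 2) → G) :
          Fin (2 * m + 3) → G))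
        = evenPairing k g m (fun w => h (Fin.cons i (Fin.cons g w : Fin (2 * m + 1) → G)))
        - evenPairing k g m (fun w => h (Fin.cons (g * i) (Fin.cons g w : Fin (2 * m + 1) → G)))
        + evenPairing k g m (fun w => h (Fin.cons g (Fin.cons g w : Fin (2 * m + 1) → G)))
        - evenPairing k g m (fun w => cobd (fun w => h (Fin.cons g w))
          (Fin.cons i (Fin.cons g w : Fin (2 * m + 1) → G) : Fin (2 * m + 2) → G)) := by
      refine (congrArg (evenPairing k g m) (funext fun w => cobd_cons h g i _)).trans ?_
      refine (map_sub (evenPairing k g m) _ _).trans (congrArg (· - _) ?_)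
      exact (map_add (evenPairing k g m) _ _).trans
        (congrArg (· + _) (map_sub (evenPairing k g m) _ _))
    simp only [key, Finset.sum_add_distrib, Finset.sum_sub_distrib]
    have shift : ∑ i, evenPairing k g m
          (fun w => h (Fin.cons (g * i) (Fin.cons g w : Fin (2 * m + 1) → G)))
        = ∑ i, evenPairing k g m
          (fun w => h (Fin.cons i (Fin.cons g w : Fin (2 * m + 1) → G))) :=
      Equiv.sum_comp (Equiv.mulLeft g) (fun i => evenPairing k g m
        (fun w => h (Fin.cons i (Fin.cons g w : Fin (2 * m + 1) → G))))
    rw [hE, shift]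
    simp [hG]

/-- The functional in degree `2m + 2` kills coboundaries. -/
theorem evenPairing_cobd (hG : (Fintype.card G : k) = 0) (g : G) (m : ℕ)
    (f : (Fin (2 * m + 1) → G) → k) : evenPairing k g (m + 1) (cobd f) = 0 :=
  evenPairing_cobd_of_odd hG g m (oddPairing_cobd hG g m) f

end Cochains

/-! ### The cohomology of a finite cyclic group -/

theorem d_apply_eq_cobd {G k : Type} [CommGroup G] [Field k] {n : ℕ} (f : (Fin n → G) → k) :
    (inhomogeneousCochains.d (Rep.trivial k G k) n).hom f = cobd f := by
  funext v
  simp [inhomogeneousCochains.d_hom_apply, cobd]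

/-- A cocycle whose cohomology class vanishes is a coboundary, on the level of functions. -/
theorem exists_d_eq {G k : Type} [CommGroup G] [Field k] {n : ℕ}
    (x : cocycles (Rep.trivial k G k) (n + 1)) (hx : groupCohomology.π _ (n + 1) x = 0) :
    ∃ h : (Fin n → G) → k, iCocycles (Rep.trivial k G k) (n + 1) x = cobd h := by
  have hex := ShortComplex.exact_of_g_is_cokernel
    (ShortComplex.mk _ _
      ((inhomogeneousCochains (Rep.trivial k G k)).toCycles_comp_homologyπ n (n + 1)))
    ((inhomogeneousCochains (Rep.trivial k G k)).homologyIsCokernel n (n + 1) (by simp))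
  obtain ⟨h, hh⟩ := (ShortComplex.moduleCat_exact_iff _).1 hex x hx
  refine ⟨h, ?_⟩
  rw [← d_apply_eq_cobd, ← hh, ← inhomogeneousCochains.d_def]
  exact ConcreteCategory.congr_hom ((inhomogeneousCochains (Rep.trivial k G k)).toCycles_i n (n + 1)) h

/-- If `Hⁿ⁺¹` is at most one-dimensional and a functional `E` on cochains kills coboundaries, then a
cocycle `z` with `E z ≠ 0` spans `Hⁿ⁺¹`; if moreover `E (φ z) ≠ E z`, then `φ` moves the class of
`z`, so it fixes only zero. -/
theorem eq_zero_of_pairing {G k : Type} [CommGroup G] [Field k] {n : ℕ}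
    (φ : inhomogeneousCochains (Rep.trivial k G k) ⟶ inhomogeneousCochains (Rep.trivial k G k))
    (hdim : ∃ u : groupCohomology (Rep.trivial k G k) (n + 1), ∀ v, ∃ r : k, r • u = v)
    (z : (Fin (n + 1) → G) → k) (hz : ∀ v, cobd z v = 0)
    (E : ((Fin (n + 1) → G) → k) →ₗ[k] k) (hE : ∀ h : (Fin n → G) → k, E (cobd h) = 0)
    (hEz : E z ≠ 0) (hφ : E (φ.f (n + 1) z) ≠ E z)
    (v : groupCohomology (Rep.trivial k G k) (n + 1))
    (hv : HomologicalComplex.homologyMap φ (n + 1) v = v) : v = 0 := by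
  have hz' : inhomogeneousCochains.d (Rep.trivial k G k) (n + 1) z = 0 :=
    (d_apply_eq_cobd z).trans (funext hz)
  let y : cocycles (Rep.trivial k G k) (n + 1) := cocyclesMk z hz'
  have hy : iCocycles (Rep.trivial k G k) (n + 1) y = z :=
    iCocycles_mk (A := Rep.trivial k G k) z hz'
  have hw : groupCohomology.π _ (n + 1) y ≠ 0 := by
    intro h0
    obtain ⟨h, hh⟩ := exists_d_eq y h0
    exact hEz (by rw [← hy, hh, hE])
  have hw' : HomologicalComplex.homologyMap φ (n + 1) (groupCohomology.π _ (n + 1) y)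
      ≠ groupCohomology.π _ (n + 1) y := by
    intro h0
    have nat : HomologicalComplex.homologyMap φ (n + 1) (groupCohomology.π _ (n + 1) y)
        = groupCohomology.π _ (n + 1) (HomologicalComplex.cyclesMap φ (n + 1) y) :=
      ConcreteCategory.congr_hom (HomologicalComplex.homologyπ_naturality φ (n + 1)) y
    obtain ⟨h, hh⟩ := exists_d_eq (HomologicalComplex.cyclesMap φ (n + 1) y - y)
      (by rw [map_sub, ← nat, h0, sub_self])
    have hi : iCocycles (Rep.trivial k G k) (n + 1) (HomologicalComplex.cyclesMap φ (n + 1) y)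
        = φ.f (n + 1) z := by
      rw [← hy]
      exact ConcreteCategory.congr_hom (HomologicalComplex.cyclesMap_i φ (n + 1)) y
    rw [map_sub, hi, hy] at hh
    apply hφ
    rw [← sub_eq_zero, ← hE h, ← hh]
    exact (map_sub E _ _).symm
  obtain ⟨u, hu⟩ := hdim
  obtain ⟨s, hs⟩ := hu (groupCohomology.π _ (n + 1) y)
  obtain ⟨t, ht⟩ := hu v
  have hs0 : s ≠ 0 := by
    rintro rfl
    exact hw (by rw [← hs, zero_smul])
  obtain ⟨r, rfl⟩ : ∃ r : k, r • groupCohomology.π _ (n + 1) y = v :=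
    ⟨t * s⁻¹, by rw [← hs, smul_smul, mul_assoc, inv_mul_cancel₀ hs0, mul_one, ht]⟩
  let F : groupCohomology (Rep.trivial k G k) (n + 1) →ₗ[k]
      groupCohomology (Rep.trivial k G k) (n + 1) :=
    (HomologicalComplex.homologyMap φ (n + 1)).hom
  have hF : F (r • groupCohomology.π _ (n + 1) y) = r • groupCohomology.π _ (n + 1) y := hv
  rw [map_smul, ← sub_eq_zero, ← smul_sub, smul_eq_zero, sub_eq_zero] at hF
  rw [hF.resolve_right hw', zero_smul]

/-- In positive degrees the cohomology of a finite cyclic group with trivial coefficients in a field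
is spanned by one class, as it is a subquotient of `k` by the periodic resolution. -/
theorem exists_spanning {G k : Type} [CommGroup G] [Fintype G] [Field k] (g : G)
    (hg : ∀ x, x ∈ Subgroup.zpowers g) (l : ℕ) (hl : l ≠ 0) :
    ∃ u : groupCohomology (Rep.trivial k G k) l, ∀ v, ∃ r : k, r • u = v := by
  have main (S : Submodule k k) (f : ModuleCat.of k S ⟶ groupCohomology (Rep.trivial k G k) l)
      (hf : Epi f) : ∃ u : groupCohomology (Rep.trivial k G k) l, ∀ v, ∃ r : k, r • u = v := by
    have hf := (ModuleCat.epi_iff_surjective f).1 hf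
    obtain ⟨u, hu⟩ := finrank_le_one_iff.1 ((S.finrank_le).trans (Module.finrank_self k).le)
    refine ⟨f u, fun v => ?_⟩
    obtain ⟨w, rfl⟩ := hf v
    obtain ⟨r, rfl⟩ := hu w
    exact ⟨r, (map_smul f.hom r u).symm⟩
  rcases Nat.even_or_odd l with h | h
  · have : NeZero l := ⟨hl⟩
    exact main _ (Rep.FiniteCyclicGroup.groupCohomologyπEven (Rep.trivial k G k) g hg l h)
      (epi_comp' (Iso.isIso_inv (ShortComplex.moduleCatCyclesIso
        (Rep.FiniteCyclicGroup.normHomCompSub (Rep.trivial k G k) g))).epi_of_iso inferInstance)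
  · exact main _ (Rep.FiniteCyclicGroup.groupCohomologyπOdd (Rep.trivial k G k) g hg l h)
      (epi_comp' (Iso.isIso_inv (ShortComplex.moduleCatCyclesIso
        (Rep.FiniteCyclicGroup.subCompNormHom (Rep.trivial k G k) g))).epi_of_iso inferInstance)

section Fixed
variable {G k : Type} [CommGroup G] [Fintype G] [Field k]

/-- `hκg` normalizes `κ` to pair to `1` with the generator in degree 2, so the sum in `hm` is the
scalar by which `ψ^*` acts on `H²`. -/
theorem eq_zero_of_fixed_even (hG : (Fintype.card G : k) = 0) (g : G)
    (hg : ∀ x, x ∈ Subgroup.zpowers g) {κ : G → G → k}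
    (hκ : ∀ a b c, κ b c - κ (a * b) c + κ a (b * c) - κ a b = 0)
    (hκg : ∑ i, κ i g = 1) (ψ : G → G)
    (φ : inhomogeneousCochains (Rep.trivial k G k) ⟶ inhomogeneousCochains (Rep.trivial k G k))
    (hφ : ∀ (n : ℕ) (f : (Fin n → G) → k) (v : Fin n → G), (φ.f n) f v = f (fun i => ψ (v i)))
    (m : ℕ) (hm : (∑ i, κ (ψ i) (ψ g)) ^ (m + 1) ≠ 1)
    (v : groupCohomology (Rep.trivial k G k) (2 * m + 2))
    (hv : HomologicalComplex.homologyMap φ (2 * m + 2) v = v) : v = 0 := by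
  let z : (Fin (2 * m + 2) → G) → k := evenCochain κ (m + 1)
  let E : ((Fin (2 * m + 2) → G) → k) →ₗ[k] k := evenPairing k g (m + 1)
  have hEz : E z = 1 := (evenPairing_evenCochain g κ (m + 1)).trans (by rw [hκg, one_pow])
  have hEφ : E (φ.f (2 * m + 2) z) = (∑ i, κ (ψ i) (ψ g)) ^ (m + 1) := by
    have e : φ.f (2 * m + 2) z = evenCochain (fun a b => κ (ψ a) (ψ b)) (m + 1) :=
      funext fun v => (hφ _ _ v).trans (evenCochain_comp κ ψ (m + 1) v)
    rw [e]
    exact evenPairing_evenCochain g _ (m + 1)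
  exact eq_zero_of_pairing (n := 2 * m + 1) φ (exists_spanning g hg _ (by omega)) z
    (cobd_evenCochain hκ (m + 1)) E (evenPairing_cobd hG g m)
    (by rw [hEz]; exact one_ne_zero) (by rwa [hEφ, hEz]) v hv

/-- In addition to the even case, `hχg` normalizes `χ` to pair to `1` with the generator in degree 1,
so `χ (ψ g)` is the scalar by which `ψ^*` acts on `H¹`. -/
theorem eq_zero_of_fixed_odd (hG : (Fintype.card G : k) = 0) (g : G)
    (hg : ∀ x, x ∈ Subgroup.zpowers g) {χ : G → k} (hχ : ∀ a b, χ (a * b) = χ a + χ b)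
    {κ : G → G → k} (hκ : ∀ a b c, κ b c - κ (a * b) c + κ a (b * c) - κ a b = 0)
    (hχg : χ g = 1) (hκg : ∑ i, κ i g = 1) (ψ : G → G)
    (φ : inhomogeneousCochains (Rep.trivial k G k) ⟶ inhomogeneousCochains (Rep.trivial k G k))
    (hφ : ∀ (n : ℕ) (f : (Fin n → G) → k) (v : Fin n → G), (φ.f n) f v = f (fun i => ψ (v i)))
    (m : ℕ) (hm : χ (ψ g) * (∑ i, κ (ψ i) (ψ g)) ^ m ≠ 1)
    (v : groupCohomology (Rep.trivial k G k) (2 * m + 1))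
    (hv : HomologicalComplex.homologyMap φ (2 * m + 1) v = v) : v = 0 := by
  let z : (Fin (2 * m + 1) → G) → k := oddCochain χ κ m
  let E : ((Fin (2 * m + 1) → G) → k) →ₗ[k] k :=
    evenPairing k g m ∘ₗ LinearMap.funLeft k k (fun w => Fin.cons g w)
  have hE (χ' : G → k) (κ' : G → G → k) :
      E (oddCochain χ' κ' m) = χ' g * (∑ i, κ' i g) ^ m := by
    rw [← evenPairing_evenCochain]
    exact (evenPairing k g m).map_smul (χ' g) (evenCochain κ' m)
  have hEz : E z = 1 := (hE χ κ).trans (by rw [hχg, hκg, one_pow, one_mul])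
  have hEφ : E (φ.f (2 * m + 1) z) = χ (ψ g) * (∑ i, κ (ψ i) (ψ g)) ^ m := by
    have e : φ.f (2 * m + 1) z
        = oddCochain (fun a => χ (ψ a)) (fun a b => κ (ψ a) (ψ b)) m :=
      funext fun v => (hφ _ _ v).trans
        (congrArg (_ * ·) (evenCochain_comp κ ψ m (fun i => v i.succ)))
    rw [e, hE]
  exact eq_zero_of_pairing (n := 2 * m) φ (exists_spanning g hg _ (by omega)) z
    (cobd_oddCochain hχ hκ m) E (oddPairing_cobd hG g m)
    (by rw [hEz]; exact one_ne_zero) (by rwa [hEφ, hEz]) v hv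

end Fixed

/-! ### The carry cocycle of `ℤ/pℤ` -/

section ZModp
variable {k : Type} [Field k] {p : ℕ}

/-- The carry cocycle in `Z²(ℤ/pℤ, k)`: `1` if adding the representatives of `a` and `b` in `[0, p)`
produces a carry modulo `p`, and `0` otherwise. For `k = ℤ/pℤ` it represents the extension
`ℤ/p²ℤ` of `ℤ/pℤ` by `ℤ/pℤ`. -/
def carry (k : Type) [Field k] {p : ℕ} (a b : Multiplicative (ZMod p)) : k :=
  ((((Multiplicative.toAdd a).val + (Multiplicative.toAdd b).val) / p : ℕ) : k)

theorem val_add_val [NeZero p] (a b : ZMod p) :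
    a.val + b.val = (a + b).val + p * ((a.val + b.val) / p) := by
  rw [ZMod.val_add, Nat.mod_add_div]

theorem carry_cocycle [NeZero p] (a b c : Multiplicative (ZMod p)) :
    carry k b c - carry k (a * b) c + carry k a (b * c) - carry k a b = 0 := by
  obtain ⟨a, rfl⟩ := Multiplicative.ofAdd.surjective a
  obtain ⟨b, rfl⟩ := Multiplicative.ofAdd.surjective b
  obtain ⟨c, rfl⟩ := Multiplicative.ofAdd.surjective c
  simp only [carry, toAdd_mul, toAdd_ofAdd]
  -- Both groupings of `a + b + c` have the same total carry, computed in `ℕ` after multiplying by `p`.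
  have h1 := val_add_val b c
  have h2 := val_add_val (a + b) c
  have h3 := val_add_val a (b + c)
  have h4 := val_add_val a b
  rw [add_assoc] at h2
  have key : p * ((b.val + c.val) / p + (a.val + (b + c).val) / p)
      = p * (((a + b).val + c.val) / p + (a.val + b.val) / p) := by
    rw [mul_add, mul_add]; omega
  have key := Nat.eq_of_mul_eq_mul_left (NeZero.pos p) key
  have key : (_ : k) = _ := congrArg Nat.cast key
  push_cast at key
  linear_combination key

/-- The carry class pairs with the degree-2 cycle attached to `c` to give `c`: in `ℕ`, summing
`i + c = (i + c mod p) + p * carry` over all `i` gives `p * c = p * ∑ carry`. -/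
theorem sum_carry [NeZero p] (c : Multiplicative (ZMod p)) :
    ∑ i, carry k i c = ((Multiplicative.toAdd c).val : k) := by
  obtain ⟨c, rfl⟩ := Multiplicative.ofAdd.surjective c
  have e : ∑ i, carry k i (Multiplicative.ofAdd c)
      = ((∑ i : ZMod p, (i.val + c.val) / p : ℕ) : k) := by
    push_cast
    exact (Equiv.sum_comp Multiplicative.ofAdd
      (fun i => carry k i (Multiplicative.ofAdd c))).symm
  rw [e, toAdd_ofAdd]
  congr 1
  apply Nat.eq_of_mul_eq_mul_left (NeZero.pos p)
  have h : ∑ i : ZMod p, (i.val + c.val)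
      = ∑ i : ZMod p, ((i + c).val + p * ((i.val + c.val) / p)) :=
    Finset.sum_congr rfl fun i _ => val_add_val i c
  have shift : ∑ i : ZMod p, (i + c).val = ∑ i : ZMod p, i.val :=
    Equiv.sum_comp (Equiv.addRight c) (fun i : ZMod p => i.val)
  rw [Finset.sum_add_distrib, Finset.sum_add_distrib, shift, ← Finset.mul_sum] at h
  simp only [Finset.sum_const, Finset.card_univ, ZMod.card, smul_eq_mul] at h
  omega

theorem unit_cast_pow_ne_one [CharP k p] (hp : p.Prime) {c : (ZMod p)ˣ}
    (hc : ∀ u : (ZMod p)ˣ, u ∈ Subgroup.zpowers c) {m : ℕ} (h0 : 0 < m) (h1 : m ≤ p - 2) :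
    (((c : ZMod p).val : k)) ^ m ≠ 1 := by
  have : Fact p.Prime := ⟨hp⟩
  intro h
  have h' : ZMod.castHom (dvd_refl p) k ((c : ZMod p) ^ m) = ZMod.castHom (dvd_refl p) k 1 := by
    rw [map_pow, map_one, ← h, ZMod.castHom_apply, ← ZMod.natCast_val]
  have h2 : c ^ m = 1 := Units.ext (by
    simpa using (ZMod.castHom (dvd_refl p) k).injective h')
  have h3 := orderOf_dvd_of_pow_eq_one h2
  rw [orderOf_eq_card_of_forall_mem_zpowers hc, Nat.card_eq_fintype_card,
    ZMod.card_units_eq_totient, Nat.totient_prime hp] at h3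
  have := Nat.le_of_dvd h0 h3
  have := hp.two_le
  omega

end ZModp

/-! ### Dilations -/

/-- Let `k` be a field of odd prime characteristic `p` and `c` a generator of
the group of units `(ℤ/pℤ)ˣ`.  Let `ψ_c : ℤ/pℤ → ℤ/pℤ` be the automorphism `x ↦ c·x` and let
`ψ_c^*` be the induced endomorphism of `H^l(ℤ/pℤ, k)` (trivial coefficients) — i.e. the map on
cohomology induced by precomposition with `ψ_c` on the complex of inhomogeneous cochains.
Then for `0 < l ≤ 2(p−2)`, the only `ψ_c^*`-fixed vector in `H^l(ℤ/pℤ, k)` is zero. -/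
theorem no_dilation_invariants_in_cyclic_group_cohomology
    (k : Type) [Field k] (p : ℕ) (hp : p.Prime) (hodd : p ≠ 2) [CharP k p]
    (c : (ZMod p)ˣ) (hc : ∀ u : (ZMod p)ˣ, u ∈ Subgroup.zpowers c)
    (φ : inhomogeneousCochains (Rep.trivial k (Multiplicative (ZMod p)) k) ⟶
         inhomogeneousCochains (Rep.trivial k (Multiplicative (ZMod p)) k))
    (hφ : ∀ (n : ℕ) (f : (Fin n → Multiplicative (ZMod p)) → k)
        (v : Fin n → Multiplicative (ZMod p)),
        (φ.f n) f v
          = f (fun i => Multiplicative.ofAdd ((c : ZMod p) * Multiplicative.toAdd (v i))))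
    (l : ℕ) (hl : 0 < l) (hl' : l ≤ 2 * (p - 2))
    (v : groupCohomology (Rep.trivial k (Multiplicative (ZMod p)) k) l)
    (hv : HomologicalComplex.homologyMap φ l v = v) :
    v = 0 := by
  have : Fact p.Prime := ⟨hp⟩
  have hp3 : 2 < p := lt_of_le_of_ne hp.two_le hodd.symm
  have : Fact (1 < p) := ⟨hp.one_lt⟩
  let g : Multiplicative (ZMod p) := Multiplicative.ofAdd 1
  let ψ : Multiplicative (ZMod p) → Multiplicative (ZMod p) :=
    fun a => Multiplicative.ofAdd ((c : ZMod p) * Multiplicative.toAdd a)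
  have hg : ∀ x, x ∈ Subgroup.zpowers g := fun x =>
    ⟨((Multiplicative.toAdd x).val : ℤ), by
      change Multiplicative.ofAdd ((((Multiplicative.toAdd x).val : ℤ)) • (1 : ZMod p)) = x
      simp⟩
  have hG : (Fintype.card (Multiplicative (ZMod p)) : k) = 0 := by simp [ZMod.card]
  have hsum : ∑ i, carry k i g = 1 := by
    rw [sum_carry]
    simp [g, ZMod.val_one]
  -- `ψ` permutes the summation index, so only the second argument of the carry matters.
  have hsumψ : ∑ i, carry k (ψ i) (ψ g) = ((c : ZMod p).val : k) := by
    have hbij : ∑ i, carry k (ψ i) (ψ g) = ∑ i, carry k i (ψ g) :=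
      Function.Bijective.sum_comp (e := ψ) (Finite.injective_iff_bijective.1 fun a b hab =>
        Multiplicative.toAdd.injective ((Units.mul_right_inj c).1
          (Multiplicative.ofAdd.injective hab))) (fun i => carry k i (ψ g))
    rw [hbij, sum_carry]
    simp [ψ, g]
  rcases Nat.even_or_odd' l with ⟨m, rfl | rfl⟩
  · obtain ⟨m, rfl⟩ : ∃ m', m = m' + 1 := ⟨m - 1, by omega⟩
    refine eq_zero_of_fixed_even hG g hg carry_cocycle hsum ψ φ hφ m ?_ v hv
    rw [hsumψ]
    exact unit_cast_pow_ne_one hp hc (by omega) (by omega)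
  · let χ : Multiplicative (ZMod p) → k := fun a => ZMod.castHom (dvd_refl p) k a.toAdd
    have hχψ : χ (ψ g) = ((c : ZMod p).val : k) := by
      simp [χ, ψ, g]
    refine eq_zero_of_fixed_odd hG g hg (χ := χ) (fun a b => by simp [χ]) carry_cocycle
      (by simp [χ, g]) hsum ψ φ hφ m ?_ v hv
    rw [hsumψ, hχψ, ← pow_succ']
    exact unit_cast_pow_ne_one hp hc (by omega) (by omega)
end

section
/- Let k be a field of prime characteristic p and A an associative unital k-algebra (not necessarily commutative). Let [A,A] ⊆ A be the k-submodule spanned by all commutators ab − ba (a,b ∈ A). Then the p-th power map x ↦ x^p descends to a well-defined map C⁻¹ : A⧸[A,A] → A⧸[A,A] (i.e. x ≡ y mod [A,A] implies x^p ≡ y^p mod [A,A]); moreover C⁻¹ is additive and Frobenius-semilinear: C⁻¹(ξ + η) = C⁻¹(ξ) + C⁻¹(η) and C⁻¹(λ·ξ) = λ^p·C⁻¹(ξ) for all ξ, η ∈ A⧸[A,A] and λ ∈ k. -/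
/-!
The class of `x ^ p` modulo commutators is an additive function of `x`. To see this, expand
`F ^ p`, where `F = x + y X` in `A[X]`. Modulo commutators a product may be cyclically permuted, so
the derivative of `F ^ p` is congruent to `p F' F ^ (p - 1) = 0` (`mk_coeff_derivative_pow_mul_pow`).
Hence `j` times the coefficient of `X ^ j` is a sum of commutators for every `j > 0`, and for
`0 < j < p` the factor `j` is invertible in `k` (`mk_coeff_pow_eq_zero`). Evaluating at `X = 1`
leaves only the extreme coefficients `x ^ p` and `y ^ p` (`mk_add_pow`).

Finally `(a b) ^ p ≡ (b a) ^ p`, both being cyclic rotations of one word, so the additive,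
Frobenius-semilinear map `x ↦ [x ^ p]` kills every commutator, hence their span
(`mk_pow_eq_zero`), and descends to the quotient.
-/

/-- The `k`-submodule `[A,A] ⊆ A` spanned by all commutators `a*b − b*a`. -/
def commutatorSubmodule (k : Type*) [Field k] (A : Type*) [Ring A] [Algebra k A] :
    Submodule k A :=
  Submodule.span k {x : A | ∃ a b : A, x = a * b - b * a}

open Polynomial

lemma mk_mul_comm (k : Type*) [Field k] {A : Type*} [Ring A] [Algebra k A] (a b : A) :
    (commutatorSubmodule k A).mkQ (a * b) = (commutatorSubmodule k A).mkQ (b * a) := by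
  rw [← sub_eq_zero, ← map_sub, Submodule.mkQ_apply, Submodule.Quotient.mk_eq_zero]
  exact Submodule.subset_span ⟨a, b, rfl⟩

lemma mk_coeff_mul_comm (k : Type*) [Field k] {A : Type*} [Ring A] [Algebra k A]
    (f g : A[X]) (j : ℕ) :
    (commutatorSubmodule k A).mkQ ((f * g).coeff j) =
      (commutatorSubmodule k A).mkQ ((g * f).coeff j) := by
  rw [coeff_mul, coeff_mul, map_sum, map_sum, ← Finset.Nat.sum_antidiagonal_swap]
  exact Finset.sum_congr rfl fun _ _ => mk_mul_comm k _ _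

/-- Modulo commutators the power rule holds for polynomials over a noncommutative ring. The extra
factor `f ^ m` makes the induction on `n` go through. -/
lemma mk_coeff_derivative_pow_mul_pow (k : Type*) [Field k] {A : Type*} [Ring A] [Algebra k A]
    (f : A[X]) (j n m : ℕ) :
    (commutatorSubmodule k A).mkQ ((derivative (f ^ (n + 1)) * f ^ m).coeff j) =
      (n + 1) • (commutatorSubmodule k A).mkQ ((derivative f * f ^ (n + m)).coeff j) := by
  induction n generalizing m with
  | zero => simp
  | succ n ih =>
    have h : derivative (f ^ (n + 1 + 1)) * f ^ m =
        derivative (f ^ (n + 1)) * f ^ (m + 1) + f ^ (n + 1) * (derivative f * f ^ m) := by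
      rw [pow_succ f (n + 1), derivative_mul, add_mul, pow_succ' f m]
      simp only [mul_assoc]
    rw [h, coeff_add, map_add, ih, mk_coeff_mul_comm k (f ^ (n + 1)), mul_assoc, ← pow_add,
      succ_nsmul _ (n + 1)]
    congr 5 <;> ring_nf

lemma mk_coeff_pow_eq_zero (k : Type*) [Field k] {p : ℕ} (hp : p.Prime) [CharP k p]
    {A : Type*} [Ring A] [Algebra k A] (f : A[X]) {j : ℕ} (hj : j + 1 < p) :
    (commutatorSubmodule k A).mkQ ((f ^ p).coeff (j + 1)) = 0 := by
  obtain ⟨q, rfl⟩ : ∃ q, p = q + 1 := ⟨p - 1, by have := hp.pos; omega⟩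
  have h := mk_coeff_derivative_pow_mul_pow k f j q 0
  rw [pow_zero, mul_one, coeff_derivative, ← Nat.cast_smul_eq_nsmul k (q + 1), CharP.cast_eq_zero k (q + 1),
    zero_smul, ← Nat.cast_succ, ← nsmul_eq_mul', map_nsmul, ← Nat.cast_smul_eq_nsmul k] at h
  refine (smul_eq_zero.mp h).resolve_left fun h0 => ?_
  exact absurd (Nat.le_of_dvd j.succ_pos ((CharP.cast_eq_zero_iff k (q + 1) _).mp h0))
    (not_le.mpr hj)

lemma mk_add_pow (k : Type*) [Field k] {p : ℕ} (hp : p.Prime) [CharP k p]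
    {A : Type*} [Ring A] [Algebra k A] (x y : A) :
    (commutatorSubmodule k A).mkQ ((x + y) ^ p) =
      (commutatorSubmodule k A).mkQ (x ^ p) + (commutatorSubmodule k A).mkQ (y ^ p) := by
  set F : A[X] := C x + C y * X with hF
  have hdeg : F.natDegree ≤ 1 := by
    rw [hF, add_comm]; exact natDegree_linear_le
  have hdegp : (F ^ p).natDegree < p + 1 :=
    Nat.lt_succ_of_le ((natDegree_pow_le_of_le p hdeg).trans (mul_one p).le)
  -- Evaluation at `1` is multiplicative although `A` is not commutative, because `1` is central.
  have heval : (F ^ p).eval 1 = (x + y) ^ p := by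
    have h := map_pow (eval₂RingHom' (RingHom.id A) 1 fun a => Commute.one_right a) F p
    change (F ^ p).eval 1 = (F.eval 1) ^ p at h
    rw [h, hF]; simp
  have h0 : (F ^ p).coeff 0 = x ^ p := by
    rw [← constantCoeff_apply, map_pow, constantCoeff_apply, hF]; simp
  have htop : (F ^ p).coeff p = y ^ p := by
    have h := coeff_pow_of_natDegree_le (m := p) hdeg
    rw [mul_one] at h
    rw [h, hF]; simp [coeff_C]
  obtain ⟨q, rfl⟩ : ∃ q, p = q + 1 := ⟨p - 1, by have := hp.pos; omega⟩
  rw [← heval, eval_eq_sum_range' hdegp]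
  simp only [one_pow, mul_one, map_sum]
  rw [Finset.sum_range_succ, Finset.sum_range_succ', h0, htop, Finset.sum_eq_zero, zero_add]
  intro j hj
  exact mk_coeff_pow_eq_zero k hp F (Nat.succ_lt_succ (Finset.mem_range.mp hj))

lemma mk_mul_pow_comm (k : Type*) [Field k] {A : Type*} [Ring A] [Algebra k A] (a b : A) (n : ℕ) :
    (commutatorSubmodule k A).mkQ ((a * b) ^ n) = (commutatorSubmodule k A).mkQ ((b * a) ^ n) := by
  cases n with
  | zero => simp
  | succ n =>
    have h : (a * b) ^ n * a = a * (b * a) ^ n :=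
      ((show SemiconjBy a (b * a) (a * b) from (mul_assoc a b a).symm).pow_right n).symm
    rw [pow_succ, ← mul_assoc, h, mk_mul_comm, ← mul_assoc, ← pow_succ']

lemma mk_sub_pow (k : Type*) [Field k] {p : ℕ} (hp : p.Prime) [CharP k p]
    {A : Type*} [Ring A] [Algebra k A] (x y : A) :
    (commutatorSubmodule k A).mkQ ((x - y) ^ p) =
      (commutatorSubmodule k A).mkQ (x ^ p) - (commutatorSubmodule k A).mkQ (y ^ p) := by
  rw [eq_sub_iff_add_eq, ← mk_add_pow k hp, sub_add_cancel]

lemma mk_pow_eq_zero (k : Type*) [Field k] {p : ℕ} (hp : p.Prime) [CharP k p]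
    {A : Type*} [Ring A] [Algebra k A] {x : A} (hx : x ∈ commutatorSubmodule k A) :
    (commutatorSubmodule k A).mkQ (x ^ p) = 0 := by
  induction hx using Submodule.span_induction with
  | mem x h =>
    obtain ⟨a, b, rfl⟩ := h
    rw [mk_sub_pow k hp, mk_mul_pow_comm, sub_self]
  | zero => rw [zero_pow hp.ne_zero, map_zero]
  | add x y _ _ hx hy => rw [mk_add_pow k hp, hx, hy, add_zero]
  | smul c x _ hx => rw [_root_.smul_pow, map_smul, hx, smul_zero]

/-- Let `k` be a field of prime characteristic `p` and `A` an associative unital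
`k`-algebra.  Then the `p`-th power map `x ↦ x^p` descends to a well-defined map
`C⁻¹ : A⧸[A,A] → A⧸[A,A]` (i.e. `x ≡ y mod [A,A]` implies `x^p ≡ y^p mod [A,A]`); moreover
`C⁻¹` is additive and Frobenius-semilinear. -/
theorem inverse_cartier_degree_zero
    (k : Type*) [Field k] (p : ℕ) (hp : p.Prime) [CharP k p]
    (A : Type*) [Ring A] [Algebra k A] :
    (∀ x y : A, x - y ∈ commutatorSubmodule k A →
        x ^ p - y ^ p ∈ commutatorSubmodule k A) ∧
    ∃ C : (A ⧸ commutatorSubmodule k A) → (A ⧸ commutatorSubmodule k A),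
      (∀ a : A, C (Submodule.Quotient.mk a) = Submodule.Quotient.mk (a ^ p)) ∧
      (∀ ξ η : A ⧸ commutatorSubmodule k A, C (ξ + η) = C ξ + C η) ∧
      (∀ (c : k) (ξ : A ⧸ commutatorSubmodule k A), C (c • ξ) = c ^ p • C ξ) := by
  have hwd : ∀ x y : A, x - y ∈ commutatorSubmodule k A →
      x ^ p - y ^ p ∈ commutatorSubmodule k A := by
    intro x y h
    rw [← Submodule.Quotient.mk_eq_zero, ← Submodule.mkQ_apply, map_sub, ← mk_sub_pow k hp]
    exact mk_pow_eq_zero k hp h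
  refine ⟨hwd, Quotient.lift (fun a => Submodule.Quotient.mk (a ^ p)) ?_, fun a => rfl, ?_, ?_⟩
  · intro x y h
    exact (Submodule.Quotient.eq _).mpr (hwd x y ((Submodule.quotientRel_def _).mp h))
  · intro ξ η
    induction ξ using Submodule.Quotient.induction_on with | _ x
    induction η using Submodule.Quotient.induction_on with | _ y
    exact mk_add_pow k hp x y
  · intro c ξ
    induction ξ using Submodule.Quotient.induction_on with | _ x
    change (commutatorSubmodule k A).mkQ ((c • x) ^ p) =
      c ^ p • (commutatorSubmodule k A).mkQ (x ^ p)
    rw [_root_.smul_pow, map_smul]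
end

section
/- Let A be an associative unital ring in which p·1 = 0 for a prime p, and let [A,A] ⊆ A be the additive subgroup generated by all commutators ab − ba (a,b ∈ A). Then for all x, y ∈ A, the element (x+y)^p − x^p − y^p lies in [A,A]. -/
/-!
Expand `(x + t y) ^ p` in `A[t]` with `t` central. The derivation `d = d/dt` satisfies
`d (f ^ n) ≡ n f ^ (n - 1) d f` modulo commutators, since each term
`f ^ i * d f * f ^ (n - 1 - i)` of the Leibniz expansion may be rotated cyclically. For `n = p` the
right-hand side vanishes, so every coefficient `c k` of `(x + t y) ^ p` satisfies
`k * c k ∈ [A, A]`. As `p` also annihilates `c k`, coprimality of `k` and `p` gives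
`c k ∈ [A, A]` for `0 < k < p`.
The remaining coefficients are `c 0 = x ^ p` and `c p = y ^ p`, and setting `t = 1` concludes.
-/

open Polynomial

/-- An additive map with `T (a * b) = T (b * a)` sees the noncommutative derivative of a power as
the commutative one. The factor `g` commuting with `f` absorbs the trailing powers of `f` in the
induction. -/
lemma trace_derivative_pow {A B : Type*} [Ring A] [AddCommGroup B] (T : A[X] →+ B)
    (hT : ∀ a b, T (a * b) = T (b * a)) (f : A[X]) (n : ℕ) :
    ∀ g, Commute f g →
      T (derivative (f ^ (n + 1)) * g) = (n + 1) • T (g * f ^ n * derivative f) := by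
  induction n with
  | zero => intro g _; simp [hT]
  | succ n ih =>
    intro g hg
    have h1 : derivative (f ^ (n + 1 + 1)) * g
        = derivative (f ^ (n + 1)) * (f * g) + f ^ (n + 1) * derivative f * g := by
      rw [pow_succ f (n + 1), derivative_mul, add_mul, mul_assoc]
    rw [h1, map_add, ih (f * g) ((Commute.refl f).mul_right hg), hT _ g, hg.eq,
      mul_assoc g f, ← pow_succ', ← mul_assoc, succ_nsmul _ (n + 1)]

/-- If `T` kills commutators of `A`, so does `T` of a fixed coefficient on `A[X]`: each coefficient
of a commutator of polynomials is a sum of commutators of coefficients. -/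
lemma map_coeff_mul_comm {A B : Type*} [Ring A] [AddCommGroup B] (T : A →+ B)
    (hT : ∀ a b, T (a * b) = T (b * a)) (k : ℕ) (a b : A[X]) :
    T ((a * b).coeff k) = T ((b * a).coeff k) := by
  rw [coeff_mul, coeff_mul, map_sum, map_sum,
    ← Finset.Nat.sum_antidiagonal_swap]
  exact Finset.sum_congr rfl fun _ _ => hT _ _

lemma natDegree_C_add_C_mul_X_pow_le {A : Type*} [Ring A] (x y : A) (n : ℕ) :
    ((C x + C y * X) ^ n).natDegree ≤ n := by
  refine (natDegree_pow_le_of_le n (m := 1) ?_).trans (by simp)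
  rw [add_comm]
  exact natDegree_linear_le

lemma coeff_C_add_C_mul_X_pow_self {A : Type*} [Ring A] (x y : A) (n : ℕ) :
    ((C x + C y * X) ^ n).coeff n = y ^ n := by
  have h : (C x + C y * X).natDegree ≤ 1 := by
    rw [add_comm]
    exact natDegree_linear_le
  simpa using coeff_pow_of_natDegree_le (m := n) h

/-- Here `T` is in effect the projection `A → A ⧸ [A, A]`. The previous lemmas show that `k` kills
the image of the `k`-th coefficient, and `p`, coprime to `k`, kills it as well. -/
lemma map_coeff_pow_eq_zero {A B : Type*} [Ring A] [AddCommGroup B] {p : ℕ} (hp : p.Prime)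
    (hchar : (p : A) = 0) (T : A →+ B) (hT : ∀ a b, T (a * b) = T (b * a)) (f : A[X])
    {k : ℕ} (hk : 0 < k) (hkp : k < p) : T ((f ^ p).coeff k) = 0 := by
  have hpB : ∀ a, p • T a = 0 := fun a => by
    rw [← map_nsmul, nsmul_eq_mul, hchar, zero_mul, map_zero]
  obtain ⟨k, rfl⟩ := Nat.exists_eq_add_of_lt hk
  obtain ⟨n, rfl⟩ : ∃ n, p = n + 1 := ⟨p - 1, by omega⟩
  rw [zero_add] at hkp ⊢
  have h := trace_derivative_pow (T.comp (lcoeff A k).toAddMonoidHom)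
    (map_coeff_mul_comm T hT k) f n 1 (Commute.one_right f)
  have h2 : (k + 1) • T ((f ^ (n + 1)).coeff (k + 1)) = 0 := by
    rw [← map_nsmul, nsmul_eq_mul, Nat.cast_comm]
    simpa [coeff_derivative, hpB] using h
  have hcop : (k + 1).Coprime (n + 1) :=
    (Nat.coprime_of_lt_prime (by omega) hkp hp).symm
  have hd := Nat.dvd_gcd (addOrderOf_dvd_of_nsmul_eq_zero h2)
    (addOrderOf_dvd_of_nsmul_eq_zero (hpB ((f ^ (n + 1)).coeff (k + 1))))
  rw [hcop.gcd_eq_one, Nat.dvd_one] at hd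
  exact AddMonoid.addOrderOf_eq_one_iff.mp hd

/-- Let `A` be an associative unital ring in which `p·1 = 0` for a prime `p`,
and let `[A,A] ⊆ A` be the additive subgroup generated by all commutators `a*b − b*a`.
Then for all `x, y ∈ A`, the element `(x+y)^p − x^p − y^p` lies in `[A,A]`. -/
theorem add_pow_char_sub_mem_commutator_subgroup
    (p : ℕ) (hp : p.Prime) (A : Type*) [Ring A] (hchar : (p : A) = 0) (x y : A) :
    (x + y) ^ p - x ^ p - y ^ p ∈
      AddSubgroup.closure {z : A | ∃ a b : A, z = a * b - b * a} := by
  set S := AddSubgroup.closure {z : A | ∃ a b : A, z = a * b - b * a} with hS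
  let T : A →+ A ⧸ S := QuotientAddGroup.mk' S
  have hT : ∀ a b, T (a * b) = T (b * a) := fun a b => by
    rw [← sub_eq_zero, ← map_sub]
    exact (QuotientAddGroup.eq_zero_iff _).mpr (AddSubgroup.subset_closure ⟨a, b, rfl⟩)
  -- Evaluation at `1` is multiplicative on `A[X]` because `1` is central.
  have heval : (x + y) ^ p = ((C x + C y * X) ^ p).eval 1 := by
    have := map_pow (eval₂RingHom' (RingHom.id A) 1 fun a => Commute.one_right a) (C x + C y * X) p
    simpa [eval₂RingHom', eval₂_id] using this.symm
  rw [eval_eq_sum_range' (Nat.lt_succ_of_le (natDegree_C_add_C_mul_X_pow_le x y p)),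
    Finset.sum_range_succ, coeff_C_add_C_mul_X_pow_self,
    ← Nat.sub_add_cancel hp.one_le, Finset.sum_range_succ', Nat.sub_add_cancel hp.one_le] at heval
  have h0 : ((C x + C y * X) ^ p).coeff 0 = x ^ p := by
    have := map_pow (constantCoeff (R := A)) (C x + C y * X) p
    simpa using this
  refine (QuotientAddGroup.eq_zero_iff _).mp (show T _ = 0 from ?_)
  simp only [one_pow, mul_one, h0] at heval
  rw [heval, add_sub_right_comm, add_sub_cancel_right, add_sub_cancel_right, map_sum]
  refine Finset.sum_eq_zero fun k hk => ?_
  have := Finset.mem_range.mp hk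
  exact map_coeff_pow_eq_zero hp hchar T hT _ k.succ_pos (by omega)
end

section
/- Let A be an associative unital ring in which p·1 = 0 for a prime p, and let [A,A] ⊆ A be the additive subgroup generated by all commutators ab − ba (a,b ∈ A). Then for every element c ∈ [A,A], the p-th power c^p again lies in [A,A]. -/
/-!
Modulo `[A,A]` products may be permuted cyclically, and the key fact is that `x ↦ x ^ p` becomes
additive there (`commMk_add_pow`). To see it, expand `(x + t y) ^ p` in `A[t]`: for any additive `φ`
with `φ (f g) = φ (g f)`, the derivative satisfies `φ (d(P ^ p)) = p • φ (P ^ (p - 1) * dP)`, which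
vanishes in characteristic `p`. Read coefficientwise modulo `[A,A]`, this says that `k` times the
coefficient of `t ^ k` lies in `[A,A]`, so for `0 < k < p` the coefficient itself does, and only
`x ^ p` and `y ^ p` survive at `t = 1`. Hence `{x | x ^ p ∈ [A,A]}` is an additive subgroup, and it
contains every `a b - b a` because `(a b) ^ p` and `(b a) ^ p` agree modulo `[A,A]`.
-/

open Polynomial in
/-- The chain rule for powers, valid after applying a trace `φ`; the extra factor `P ^ m` makes the
induction on `n` go through. -/
lemma trace_derivative_pow_mul {A M : Type*} [Ring A] [AddCommGroup M] (φ : A[X] →+ M)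
    (hφ : ∀ f g, φ (f * g) = φ (g * f)) (P : A[X]) (n : ℕ) :
    ∀ m, φ (derivative (P ^ n) * P ^ m) = n • φ (P ^ (n + m - 1) * derivative P) := by
  induction n with
  | zero => simp
  | succ n ih =>
    intro m
    have h1 : derivative (P ^ (n + 1)) * P ^ m
        = derivative (P ^ n) * P ^ (m + 1) + P ^ n * (derivative P * P ^ m) := by
      rw [pow_succ P n, derivative_mul, pow_succ' P m]
      noncomm_ring
    have h2 : φ (P ^ n * (derivative P * P ^ m)) = φ (P ^ (n + m) * derivative P) := by
      rw [← mul_assoc, hφ, ← mul_assoc, ← pow_add, add_comm m n]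
    rw [h1, map_add, ih, h2, succ_nsmul]
    congr 4 <;> congr 1 <;> omega

/-- The additive subgroup `[A,A]` generated by all commutators. -/
abbrev commSub (A : Type*) [Ring A] : AddSubgroup A :=
  AddSubgroup.closure {z : A | ∃ a b : A, z = a * b - b * a}

/-- The universal trace `A → A / [A,A]`. -/
abbrev commMk (A : Type*) [Ring A] : A →+ A ⧸ commSub A := QuotientAddGroup.mk' _

lemma commMk_mul_comm {A : Type*} [Ring A] (a b : A) : commMk A (a * b) = commMk A (b * a) := by
  rw [← sub_eq_zero, ← map_sub]
  exact (QuotientAddGroup.eq_zero_iff _).2 (AddSubgroup.subset_closure ⟨a, b, rfl⟩)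

open Polynomial in
lemma commMk_coeff_mul_comm {A : Type*} [Ring A] (k : ℕ) (f g : A[X]) :
    commMk A ((f * g).coeff k) = commMk A ((g * f).coeff k) := by
  rw [coeff_mul, coeff_mul, map_sum, map_sum, ← Finset.Nat.sum_antidiagonal_swap]
  exact Finset.sum_congr rfl fun _ _ => commMk_mul_comm _ _

open Polynomial in
/-- In characteristic `p`, the coefficients of a `p`-th power in degrees prime to `p` are sums of
commutators. -/
lemma commMk_coeff_pow {A : Type*} [Ring A] {p : ℕ} (hchar : (p : A) = 0) (P : A[X]) {k : ℕ}
    (hk : p.Coprime (k + 1)) : commMk A ((P ^ p).coeff (k + 1)) = 0 := by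
  have hp0 (a : A) : p • commMk A a = 0 := by
    rw [← map_nsmul, nsmul_eq_mul, hchar, zero_mul, map_zero]
  have h := trace_derivative_pow_mul ((commMk A).comp (lcoeff A k).toAddMonoidHom)
    (commMk_coeff_mul_comm k) P p 0
  simp only [pow_zero, mul_one, AddMonoidHom.comp_apply, LinearMap.toAddMonoidHom_coe,
    lcoeff_apply, hp0, coeff_derivative] at h
  rw [← Nat.cast_succ, ← nsmul_eq_mul', map_nsmul] at h
  -- the order of the coefficient modulo `[A,A]` divides both `p` and `k + 1`
  have hd := Nat.dvd_gcd (addOrderOf_dvd_of_nsmul_eq_zero (hp0 ((P ^ p).coeff (k + 1))))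
    (addOrderOf_dvd_of_nsmul_eq_zero h)
  rw [hk.gcd_eq_one, Nat.dvd_one] at hd
  exact AddMonoid.addOrderOf_eq_one_iff.1 hd

open Polynomial in
lemma commMk_add_pow {A : Type*} [Ring A] {p : ℕ} (hp : p.Prime) (hchar : (p : A) = 0) (x y : A) :
    commMk A ((x + y) ^ p) = commMk A (x ^ p) + commMk A (y ^ p) := by
  set P : A[X] := C y * X + C x with hP
  have hdeg : P.natDegree ≤ 1 := natDegree_linear_le
  -- evaluation at a central element is a ring homomorphism even though `A` is not commutative
  let ev := eval₂RingHom' (RingHom.id A) 1 fun a => Commute.one_right a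
  have hev (f : A[X]) : ev f = f.eval 1 := rfl
  have h1 : (x + y) ^ p = (P ^ p).eval 1 := by
    rw [← hev, map_pow, hev]
    simp [hP, add_comm]
  have hc0 : (P ^ p).coeff 0 = x ^ p := by
    rw [← constantCoeff_apply, map_pow]
    simp [hP]
  have hcp : (P ^ p).coeff p = y ^ p := by
    have h := coeff_pow_of_natDegree_le (m := p) hdeg
    rw [mul_one] at h
    rw [h]
    simp [hP]
  have hlt : (P ^ p).natDegree < p + 1 := by
    have := natDegree_pow_le_of_le p hdeg
    omega
  rw [h1, eval_eq_sum_range' hlt, Finset.sum_range_succ, map_add, map_sum]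
  simp only [one_pow, mul_one, hcp]
  congr 1
  rw [Finset.sum_eq_single_of_mem 0 (Finset.mem_range.2 hp.pos), hc0]
  intro k hk hk0
  obtain ⟨j, rfl⟩ := Nat.exists_eq_succ_of_ne_zero hk0
  exact commMk_coeff_pow hchar P
    ((Nat.coprime_of_lt_prime (Nat.succ_ne_zero j) (Finset.mem_range.1 hk) hp))

lemma commMk_mul_pow_comm {A : Type*} [Ring A] (a b : A) (n : ℕ) :
    commMk A ((a * b) ^ n) = commMk A ((b * a) ^ n) := by
  cases n with
  | zero => simp
  | succ n =>
    have h : a * (b * a) ^ n = (a * b) ^ n * a :=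
      (SemiconjBy.pow_right (show a * (b * a) = a * b * a from (mul_assoc ..).symm) n)
    rw [pow_succ, ← mul_assoc, ← h, mul_assoc, commMk_mul_comm, mul_assoc, pow_succ]

/-- Let `A` be an associative unital ring in which `p·1 = 0` for a prime `p`,
and let `[A,A] ⊆ A` be the additive subgroup generated by all commutators `a*b − b*a`.
Then for every `c ∈ [A,A]`, the `p`-th power `c^p` again lies in `[A,A]`. -/
theorem pow_char_mem_commutator_subgroup_of_mem
    (p : ℕ) (hp : p.Prime) (A : Type*) [Ring A] (hchar : (p : A) = 0) (c : A)
    (hc : c ∈ AddSubgroup.closure {z : A | ∃ a b : A, z = a * b - b * a}) :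
    c ^ p ∈ AddSubgroup.closure {z : A | ∃ a b : A, z = a * b - b * a} := by
  let F : A →+ A ⧸ commSub A :=
    AddMonoidHom.mk' (fun x => commMk A (x ^ p)) (commMk_add_pow hp hchar)
  have hF : commSub A ≤ F.ker := by
    rw [AddSubgroup.closure_le]
    rintro _ ⟨a, b, rfl⟩
    change F (a * b - b * a) = 0
    rw [map_sub, sub_eq_zero]
    exact commMk_mul_pow_comm a b p
  exact (QuotientAddGroup.eq_zero_iff _).1 (hF hc)
end

section
/- Let k be a perfect field of prime characteristic p and A an associative unital k-algebra. Let W = A^{⊗p} be the p-fold tensor power of A over k, an associative unital k-algebra under factorwise multiplication, and let σ : W → W be the cyclic permutation of tensor factors (a k-algebra automorphism) with norm operator N = 1 + σ + … + σ^{p−1}. Then: (a) the invariants W^σ = ker(σ−1) form a unital subalgebra of W and N(W) is a two-sided ideal of W^σ; (b) the map e : A → W^σ⧸N(W) sending a to the class of a⊗a⊗…⊗a is additive, multiplicative (e(ab) = e(a)e(b)), unital, bijective, and Frobenius-semilinear: e(λ·a) = λ^p·e(a) for all λ ∈ k, a ∈ A. -/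
/-!
A basis `(b_i)` of `A` gives the basis `b_{f 0} ⊗ … ⊗ b_{f (p-1)}` of `W = A^{⊗p}`, indexed by
`f : Fin p → ι`, and `σ` acts on coordinates by precomposing the index `f` with the rotation of
`Fin p`. The constant indices are the fixed points of this action, and `N` multiplies the
coordinates there by `p = 0`. So every element of `N(W)` has zero coordinates at the constant
indices. Conversely, `mem_range_normOpAlg_iff` says that an invariant `w` with zero coordinates at
the constant indices is a norm.

For this converse it is enough to find a function `c` on indices whose sum over the rotations of
any nonconstant `f` is `1`: then `w = N (c w)`. Rather than choosing orbit representatives, pick,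
depending only on the multiset of values of `f`, a value `j` of `f`. Let `m` be its multiplicity
and put `c f = m⁻¹` if `f 0 = j` and `c f = 0` otherwise. Over the rotations of `f` the condition
holds exactly `m` times, and `0 < m < p` makes `m` invertible in `k`
(`exists_sum_rotate_eq_one`).

The coordinate of `a ⊗ … ⊗ a` at the constant index `i` is the `p`-th power of the `i`-th coordinate
of `a`. Hence the diagonal map modulo norms is, in coordinates, the Frobenius of `k`, which is
additive, and bijective because `k` is perfect.
-/

open scoped TensorProduct

/-- The cyclic permutation `σ` of the `p`-fold tensor power `A^{⊗p}`, sending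
`a₁⊗…⊗a_p` to `a_p⊗a₁⊗…⊗a_{p−1}`. -/
noncomputable def cycPermAlg (k : Type*) [CommSemiring k] (p : ℕ) (A : Type*)
    [Ring A] [Algebra k A] :
    (⨂[k] _ : Fin p, A) →ₗ[k] (⨂[k] _ : Fin p, A) :=
  (PiTensorProduct.reindex k (fun _ : Fin p => A) (finRotate p)).toLinearMap

/-- The norm operator `N = 1 + σ + … + σ^{p−1}` on `A^{⊗p}`. -/
noncomputable def normOpAlg (k : Type*) [CommSemiring k] (p : ℕ) (A : Type*)
    [Ring A] [Algebra k A] :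
    (⨂[k] _ : Fin p, A) →ₗ[k] (⨂[k] _ : Fin p, A) :=
  ∑ i ∈ Finset.range p, (cycPermAlg k p A) ^ i

/-- The diagonal tensor `a ⊗ a ⊗ … ⊗ a ∈ A^{⊗p}`. -/
noncomputable def diagTensorAlg (k : Type*) [CommSemiring k] (p : ℕ) (A : Type*)
    [Ring A] [Algebra k A] (a : A) : ⨂[k] _ : Fin p, A :=
  PiTensorProduct.tprod k (fun _ : Fin p => a)

section DiagonalFrobenius

open Module

variable {k : Type*} [Field k] {p : ℕ} {A : Type*} [Ring A] [Algebra k A]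

lemma cycPermAlg_tprod (x : Fin p → A) :
    cycPermAlg k p A (PiTensorProduct.tprod k x)
      = PiTensorProduct.tprod k (fun i => x ((finRotate p).symm i)) := by
  simp [cycPermAlg]

lemma cycPermAlg_one : cycPermAlg k p A 1 = 1 := by
  rw [PiTensorProduct.one_def, cycPermAlg_tprod]; rfl

lemma cycPermAlg_mul (x y : ⨂[k] _ : Fin p, A) :
    cycPermAlg k p A (x * y) = cycPermAlg k p A x * cycPermAlg k p A y := by
  induction x using PiTensorProduct.induction_on with
  | add x x' hx hx' => rw [add_mul, map_add, map_add, add_mul, hx, hx']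
  | smul_tprod r x =>
    induction y using PiTensorProduct.induction_on with
    | add y y' hy hy' => rw [mul_add, map_add, map_add, mul_add, hy, hy']
    | smul_tprod s y =>
      rw [PiTensorProduct.smul_tprod_mul_smul_tprod, map_smul, map_smul, map_smul,
        cycPermAlg_tprod, cycPermAlg_tprod, cycPermAlg_tprod,
        PiTensorProduct.smul_tprod_mul_smul_tprod]
      rfl

lemma cycPermAlg_pow_mul (i : ℕ) (x y : ⨂[k] _ : Fin p, A) :
    (cycPermAlg k p A ^ i) (x * y) = (cycPermAlg k p A ^ i) x * (cycPermAlg k p A ^ i) y := by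
  induction i with
  | zero => simp
  | succ n ih => simp only [pow_succ', Module.End.mul_apply, ih, cycPermAlg_mul]

lemma cycPermAlg_pow_of_invariant {x : ⨂[k] _ : Fin p, A} (hx : cycPermAlg k p A x = x) (i : ℕ) :
    (cycPermAlg k p A ^ i) x = x := by
  induction i with
  | zero => simp
  | succ n ih => rw [pow_succ', Module.End.mul_apply, ih, hx]

lemma normOpAlg_apply (w : ⨂[k] _ : Fin p, A) :
    normOpAlg k p A w = ∑ i ∈ Finset.range p, (cycPermAlg k p A ^ i) w := by
  simp [normOpAlg]

lemma mul_normOpAlg {x : ⨂[k] _ : Fin p, A} (hx : cycPermAlg k p A x = x)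
    (w : ⨂[k] _ : Fin p, A) : x * normOpAlg k p A w = normOpAlg k p A (x * w) := by
  simp only [normOpAlg_apply, Finset.mul_sum, cycPermAlg_pow_mul, cycPermAlg_pow_of_invariant hx]

lemma normOpAlg_mul {x : ⨂[k] _ : Fin p, A} (hx : cycPermAlg k p A x = x)
    (w : ⨂[k] _ : Fin p, A) : normOpAlg k p A w * x = normOpAlg k p A (w * x) := by
  simp only [normOpAlg_apply, Finset.sum_mul, cycPermAlg_pow_mul, cycPermAlg_pow_of_invariant hx]

lemma cycPermAlg_diagTensorAlg (a : A) :
    cycPermAlg k p A (diagTensorAlg k p A a) = diagTensorAlg k p A a := by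
  rw [diagTensorAlg, cycPermAlg_tprod]

lemma diagTensorAlg_mul (a b : A) :
    diagTensorAlg k p A (a * b) = diagTensorAlg k p A a * diagTensorAlg k p A b := by
  simp only [diagTensorAlg, PiTensorProduct.tprod_mul_tprod]; rfl

lemma diagTensorAlg_smul (c : k) (a : A) :
    diagTensorAlg k p A (c • a) = c ^ p • diagTensorAlg k p A a := by
  have h := (PiTensorProduct.tprod k (s := fun _ : Fin p => A)).map_smul_univ
    (fun _ => c) (fun _ => a)
  simpa [diagTensorAlg] using h

/-- Iterated rotations carry `0` to each element of `Fin (n + 1)` exactly once. -/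
lemma sum_range_finRotate_pow {M : Type*} [AddCommMonoid M] (n : ℕ) (g : Fin (n + 1) → M) :
    ∑ i ∈ Finset.range (n + 1), g ((finRotate (n + 1) ^ i) 0) = ∑ t, g t := by
  have h : ∀ i : Fin (n + 1), (finRotate (n + 1) ^ (i : ℕ)) 0 = i := by
    intro i
    have := congrFun (finCycle_eq_finRotate_iterate (k := i)) 0
    rw [← Equiv.Perm.coe_pow] at this
    simpa using this.symm
  rw [Finset.sum_range]
  simp only [h]

/-- A weight on indices whose sum over the rotations of any nonconstant index is `1`. -/
lemma exists_sum_rotate_eq_one (hp : p.Prime) [CharP k p] (ι : Type*) :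
    ∃ c : (Fin p → ι) → k, ∀ f : Fin p → ι, (∀ j, f ≠ fun _ => j) →
      ∑ i ∈ Finset.range p, c (f ∘ (finRotate p ^ i : Equiv.Perm (Fin p))) = 1 := by
  classical
  obtain ⟨n, rfl⟩ : ∃ n, p = n + 1 := ⟨p - 1, by have := hp.pos; omega⟩
  let s : (Fin (n + 1) → ι) → Multiset ι := fun f => Finset.univ.val.map f
  have hs : ∀ (f : Fin (n + 1) → ι) (e : Equiv.Perm (Fin (n + 1))), s (f ∘ e) = s f := by
    intro f e
    simp only [s]
    rw [← Multiset.map_map, Multiset.map_univ_val_equiv]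
  cases isEmpty_or_nonempty ι with
  | inl hι => exact ⟨0, fun f => isEmptyElim (f 0)⟩
  | inr hι =>
  -- the chosen value `j` depends on `f` only through its multiset of values
  let j : (Fin (n + 1) → ι) → ι := fun f => Classical.epsilon fun x => x ∈ s f
  have hj : ∀ f, j f ∈ s f := fun f => Classical.epsilon_spec ⟨f 0, by simp [s]⟩
  have hje : ∀ (f : Fin (n + 1) → ι) (e : Equiv.Perm (Fin (n + 1))), j (f ∘ e) = j f := by
    intro f e
    simp only [j, hs]
  refine ⟨fun f => if f 0 = j f then (((s f).count (j f) : ℕ) : k)⁻¹ else 0, fun f hf => ?_⟩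
  have hcard : (s f).card = n + 1 := by simp [s]
  have hpos : 0 < (s f).count (j f) := Multiset.count_pos.2 (hj f)
  have hlt : (s f).count (j f) < n + 1 := by
    refine lt_of_le_of_ne (hcard ▸ Multiset.count_le_card _ _) fun h => hf (j f) ?_
    funext t
    exact (Multiset.count_eq_card.1 (h.trans hcard.symm) (f t)
      (Multiset.mem_map_of_mem f (Finset.mem_univ t))).symm
  have hm : (((s f).count (j f) : ℕ) : k) ≠ 0 := by
    rw [Ne, CharP.cast_eq_zero_iff k (n + 1)]
    exact Nat.not_dvd_of_pos_of_lt hpos hlt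
  have hcount : (s f).count (j f) = (Finset.univ.filter fun t => f t = j f).card := by
    simp only [s, Multiset.count_map, Finset.card_def, Finset.filter_val, eq_comm]
  simp only [hje, hs, Function.comp_apply]
  rw [sum_range_finRotate_pow n fun t =>
    if f t = j f then (((s f).count (j f) : ℕ) : k)⁻¹ else 0]
  rw [← Finset.sum_filter, Finset.sum_const, ← hcount, nsmul_eq_mul, mul_inv_cancel₀ hm]

section Coordinates

variable {ι : Type*} (B : Basis ι k A)

variable (p) in
/-- The basis of `A^{⊗p}` formed by the tensors `b_{f 0} ⊗ … ⊗ b_{f (p-1)}`. -/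
noncomputable def tensorPowerBasis : Basis (Fin p → ι) k (⨂[k] _ : Fin p, A) :=
  Basis.piTensorProduct fun _ => B

lemma tensorPowerBasis_repr_cycPermAlg (w : ⨂[k] _ : Fin p, A) (f : Fin p → ι) :
    (tensorPowerBasis p B).repr (cycPermAlg k p A w) f
      = (tensorPowerBasis p B).repr w (f ∘ finRotate p) := by
  induction w using PiTensorProduct.induction_on with
  | add x y hx hy => simp only [map_add, Finsupp.add_apply, hx, hy]
  | smul_tprod r x =>
    simp only [map_smul, Finsupp.smul_apply, cycPermAlg_tprod, tensorPowerBasis,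
      Basis.piTensorProduct_repr_tprod_apply]
    congr 1
    exact Fintype.prod_equiv (finRotate p).symm _ _ fun i => by
      simp only [Function.comp_apply, Equiv.apply_symm_apply]

lemma tensorPowerBasis_repr_cycPermAlg_pow (i : ℕ) (w : ⨂[k] _ : Fin p, A) (f : Fin p → ι) :
    (tensorPowerBasis p B).repr ((cycPermAlg k p A ^ i) w) f
      = (tensorPowerBasis p B).repr w (f ∘ (finRotate p ^ i : Equiv.Perm (Fin p))) := by
  induction i generalizing f with
  | zero => rfl
  | succ n ih =>
    rw [pow_succ', Module.End.mul_apply, tensorPowerBasis_repr_cycPermAlg, ih, pow_succ']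
    rfl

lemma tensorPowerBasis_repr_normOpAlg (w : ⨂[k] _ : Fin p, A) (f : Fin p → ι) :
    (tensorPowerBasis p B).repr (normOpAlg k p A w) f = ∑ i ∈ Finset.range p,
      (tensorPowerBasis p B).repr w (f ∘ (finRotate p ^ i : Equiv.Perm (Fin p))) := by
  simp only [normOpAlg_apply, map_sum, Finsupp.finsetSum_apply,
    tensorPowerBasis_repr_cycPermAlg_pow]

lemma tensorPowerBasis_repr_diagTensorAlg (a : A) (j : ι) :
    (tensorPowerBasis p B).repr (diagTensorAlg k p A a) (fun _ => j) = B.repr a j ^ p := by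
  simp [tensorPowerBasis, diagTensorAlg]

/-- An invariant tensor is a norm exactly when its coordinates at the constant indices vanish. -/
lemma mem_range_normOpAlg_iff (hp : p.Prime) [CharP k p] {w : ⨂[k] _ : Fin p, A}
    (hw : cycPermAlg k p A w = w) :
    w ∈ LinearMap.range (normOpAlg k p A)
      ↔ ∀ j, (tensorPowerBasis p B).repr w (fun _ => j) = 0 := by
  constructor
  · rintro ⟨u, rfl⟩ j
    rw [tensorPowerBasis_repr_normOpAlg]
    simp [Function.comp_def]
  · intro h
    obtain ⟨c, hc⟩ := exists_sum_rotate_eq_one (k := k) hp ι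
    refine ⟨(tensorPowerBasis p B).repr.symm
      (Finsupp.onFinset ((tensorPowerBasis p B).repr w).support
        (fun f => c f * (tensorPowerBasis p B).repr w f) ?_),
      (tensorPowerBasis p B).ext_elem fun f => ?_⟩
    · intro f hf
      exact Finsupp.mem_support_iff.2 (right_ne_zero_of_mul hf)
    · rw [tensorPowerBasis_repr_normOpAlg]
      simp only [LinearEquiv.apply_symm_apply, Finsupp.onFinset_apply]
      -- the coordinates of `w` are constant along rotations, so only `c` is summed
      simp only [← tensorPowerBasis_repr_cycPermAlg_pow, cycPermAlg_pow_of_invariant hw]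
      rw [← Finset.sum_mul]
      by_cases hf : ∃ j, f = fun _ => j
      · obtain ⟨j, rfl⟩ := hf
        rw [h j, mul_zero]
      · rw [hc f fun j hj => hf ⟨j, hj⟩, one_mul]

end Coordinates

end DiagonalFrobenius

/-- Let `k` be a perfect field of prime characteristic `p` and `A` an
associative unital `k`-algebra; let `W = A^{⊗p}` with its factorwise multiplication, `σ` the
cyclic permutation of factors and `N = 1 + σ + … + σ^{p−1}`.  Then:
(a) the invariants `W^σ = ker(σ−1)` form a unital subalgebra of `W` and `N(W)` is a two-sided
ideal of `W^σ`;
(b) the map `e : A → W^σ⧸N(W)`, `a ↦ [a⊗…⊗a]`, is additive, multiplicative, unital, bijective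
and Frobenius-semilinear (`e(λ·a) = λ^p·e(a)`).  All statements about the quotient
`W^σ⧸N(W)` are expressed below on representatives, modulo `N(W) = range N`. -/
theorem diagonal_frobenius_algebra_iso
    (k : Type*) [Field k] [PerfectField k] (p : ℕ) (hp : p.Prime) [CharP k p]
    (A : Type*) [Ring A] [Algebra k A] :
    -- (a) the invariants form a unital subalgebra ...
    (∀ x y : ⨂[k] _ : Fin p, A,
        cycPermAlg k p A x = x → cycPermAlg k p A y = y →
        cycPermAlg k p A (x * y) = x * y) ∧
    (cycPermAlg k p A (1 : ⨂[k] _ : Fin p, A) = 1) ∧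
    (∀ c : k, cycPermAlg k p A (algebraMap k (⨂[k] _ : Fin p, A) c)
        = algebraMap k (⨂[k] _ : Fin p, A) c) ∧
    -- ... and `N(W)` is a two-sided ideal of it
    (∀ (x w : ⨂[k] _ : Fin p, A), cycPermAlg k p A x = x →
        (∃ u, x * normOpAlg k p A w = normOpAlg k p A u) ∧
        (∃ u, normOpAlg k p A w * x = normOpAlg k p A u)) ∧
    -- (b) `e` is well defined on `W^σ ⧸ N(W)` ...
    (∀ a : A, cycPermAlg k p A (diagTensorAlg k p A a) = diagTensorAlg k p A a) ∧
    -- ... additive, multiplicative, unital, Frobenius-semilinear ...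
    (∀ a b : A, diagTensorAlg k p A (a + b) - (diagTensorAlg k p A a + diagTensorAlg k p A b)
        ∈ LinearMap.range (normOpAlg k p A)) ∧
    (∀ a b : A, diagTensorAlg k p A (a * b) - diagTensorAlg k p A a * diagTensorAlg k p A b
        ∈ LinearMap.range (normOpAlg k p A)) ∧
    (diagTensorAlg k p A (1 : A) - 1 ∈ LinearMap.range (normOpAlg k p A)) ∧
    (∀ (c : k) (a : A), diagTensorAlg k p A (c • a) - c ^ p • diagTensorAlg k p A a
        ∈ LinearMap.range (normOpAlg k p A)) ∧
    -- ... and bijective: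
    (∀ a b : A, diagTensorAlg k p A a - diagTensorAlg k p A b
        ∈ LinearMap.range (normOpAlg k p A) → a = b) ∧
    (∀ w : ⨂[k] _ : Fin p, A, cycPermAlg k p A w = w →
        ∃ a : A, w - diagTensorAlg k p A a ∈ LinearMap.range (normOpAlg k p A)) := by
  have : ExpChar k p := ExpChar.prime hp
  have : Fact p.Prime := ⟨hp⟩
  let B := Module.Basis.ofVectorSpace k A
  have hdiag := fun a => cycPermAlg_diagTensorAlg (k := k) (p := p) (A := A) a
  refine ⟨fun x y hx hy => by rw [cycPermAlg_mul, hx, hy], cycPermAlg_one, fun c => ?_,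
    fun x w hx => ⟨⟨_, mul_normOpAlg hx w⟩, ⟨_, normOpAlg_mul hx w⟩⟩, hdiag, fun a b => ?_,
    fun a b => ?_, ?_, fun c a => ?_, fun a b hab => ?_, fun w hw => ?_⟩
  · rw [Algebra.algebraMap_eq_smul_one, map_smul, cycPermAlg_one]
  · rw [mem_range_normOpAlg_iff B hp (by simp only [map_sub, map_add, hdiag])]
    intro j
    simp only [map_sub, map_add, Finsupp.sub_apply, Finsupp.add_apply,
      tensorPowerBasis_repr_diagTensorAlg, add_pow_char, sub_self]
  · rw [diagTensorAlg_mul, sub_self]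
    exact zero_mem _
  · have h : diagTensorAlg k p A 1 = 1 := rfl
    rw [h, sub_self]
    exact zero_mem _
  · rw [diagTensorAlg_smul, sub_self]
    exact zero_mem _
  · rw [mem_range_normOpAlg_iff B hp (by simp only [map_sub, hdiag])] at hab
    refine B.ext_elem fun j => frobenius_inj k p ?_
    simpa only [map_sub, Finsupp.sub_apply, tensorPowerBasis_repr_diagTensorAlg, sub_eq_zero,
      frobenius_def] using hab j
  · -- the coordinates of `a` are the `p`-th roots of those of `w` at the constant indices
    refine ⟨B.repr.symm ((Finsupp.comapDomain (fun j (_ : Fin p) => j)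
      ((tensorPowerBasis p B).repr w)
      (Function.Injective.injOn fun i j h => congrFun h ⟨0, hp.pos⟩)).mapRange (frobeniusEquiv k p).symm
        (map_zero _)), ?_⟩
    rw [mem_range_normOpAlg_iff B hp (by simp only [map_sub, hdiag, hw])]
    intro j
    rw [map_sub, Finsupp.sub_apply, tensorPowerBasis_repr_diagTensorAlg,
      LinearEquiv.apply_symm_apply, Finsupp.mapRange_apply, Finsupp.comapDomain_apply,
      frobeniusEquiv_symm_pow_p, sub_self]
end

section
/- For positive integers m, n, let M(m,n) be the set of monotone (order-preserving) maps f : ℤ → ℤ satisfying f(a+m) = f(a)+n for all a ∈ ℤ (the morphism set Λ_∞([m],[n]) of the category Λ_∞). Then: (a) for every f ∈ M(m,n) and every a ∈ ℤ, the set {b ∈ ℤ : f(b) ≤ a} is nonempty and bounded above, so D(f)(a) := max{b ∈ ℤ : f(b) ≤ a} is well-defined, and one has the adjunction f(b) ≤ a ⟺ b ≤ D(f)(a); (b) D(f) ∈ M(n,m); (c) for f ∈ M(m,n) and g ∈ M(n,q), D(g∘f) = D(f)∘D(g); (d) for every f ∈ M(m,n) and a ∈ ℤ, D(D(f))(a)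 = f(a+1) − 1, so that D is a duality of Λ_∞ with the opposite category (D∘D agrees with f up to composition with the invertible shift a ↦ a+1). -/
/-!
The sublevel sets `{b | f b ≤ a}` are nonempty and bounded above because
`f (k m) = f 0 + k n` for every integer `k` and `n > 0`. Their suprema are therefore maxima, and by
monotonicity `dualMap f` is an upper (right) adjoint of `f`. Everything else follows from uniqueness
of adjoints: adjoints compose, giving contravariance, and negating the adjunction on both sides
(`dualMap f b ≤ a` iff `b < f (a + 1)`) shows that `a ↦ f (a + 1) - 1` is an upper adjoint of
`dualMap f`. Periodicity of `dualMap f` is the periodicity of `f` read through the adjunction.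
-/

/-- The morphism set `Λ_∞([m],[n])`: monotone maps `f : ℤ → ℤ` with `f (a+m) = f a + n`. -/
def IsCyclicCover (m n : ℕ) (f : ℤ → ℤ) : Prop :=
  Monotone f ∧ ∀ a : ℤ, f (a + (m : ℤ)) = f a + (n : ℤ)

/-- The dual map `D(f)(a) = max {b : ℤ | f b ≤ a}`, implemented as a supremum in `ℤ`. -/
noncomputable def dualMap (f : ℤ → ℤ) : ℤ → ℤ := fun a => sSup {b : ℤ | f b ≤ a}

theorem IsCyclicCover.map_int_mul {m n : ℕ} {f : ℤ → ℤ} (hf : IsCyclicCover m n f) (k : ℤ) :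
    f (k * m) = f 0 + k * n := by
  induction k using Int.induction_on with
  | zero => simp
  | succ i ih =>
    rw [add_mul, one_mul, hf.2, ih]
    ring
  | pred i ih =>
    have h := hf.2 ((-(i : ℤ) - 1) * m)
    rw [show (-(i : ℤ) - 1) * m + m = -(i : ℤ) * m by ring, ih] at h
    linarith

theorem IsCyclicCover.nonempty_sublevel {m n : ℕ} {f : ℤ → ℤ} (hn : 0 < n)
    (hf : IsCyclicCover m n f) (a : ℤ) : {b : ℤ | f b ≤ a}.Nonempty := by
  have hn' : (1 : ℤ) ≤ n := by exact_mod_cast hn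
  refine ⟨-(|f 0| + |a|) * m, ?_⟩
  rw [Set.mem_ofPred_eq, hf.map_int_mul]
  have h := mul_le_mul_of_nonneg_left hn' (add_nonneg (abs_nonneg (f 0)) (abs_nonneg a))
  linarith [le_abs_self (f 0), neg_abs_le a]

theorem IsCyclicCover.bddAbove_sublevel {m n : ℕ} {f : ℤ → ℤ} (hn : 0 < n)
    (hf : IsCyclicCover m n f) (a : ℤ) : BddAbove {b : ℤ | f b ≤ a} := by
  have hn' : (1 : ℤ) ≤ n := by exact_mod_cast hn
  refine ⟨(|f 0| + |a| + 1) * m, fun b hb => ?_⟩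
  by_contra! hlt
  have hmono := (hf.1 hlt.le).trans hb
  rw [hf.map_int_mul] at hmono
  have h := mul_le_mul_of_nonneg_left hn'
    (by positivity : 0 ≤ |f 0| + |a| + 1)
  linarith [neg_abs_le (f 0), le_abs_self a]

theorem IsCyclicCover.isGreatest_dualMap {m n : ℕ} {f : ℤ → ℤ} (hn : 0 < n)
    (hf : IsCyclicCover m n f) (a : ℤ) : IsGreatest {b : ℤ | f b ≤ a} (dualMap f a) :=
  ⟨Int.csSup_mem (hf.nonempty_sublevel hn a) (hf.bddAbove_sublevel hn a),
    fun _ hb => le_csSup (hf.bddAbove_sublevel hn a) hb⟩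

theorem IsCyclicCover.gc_dualMap {m n : ℕ} {f : ℤ → ℤ} (hn : 0 < n)
    (hf : IsCyclicCover m n f) : GaloisConnection f (dualMap f) := fun _ a =>
  ⟨fun h => (hf.isGreatest_dualMap hn a).2 h,
    fun h => (hf.1 h).trans (hf.isGreatest_dualMap hn a).1⟩

/-- An upper adjoint of `f`, if there is one, is `dualMap f`: the set `{b | f b ≤ a}` is then
`Set.Iic (u a)`. -/
theorem dualMap_eq_of_gc {f u : ℤ → ℤ} (h : GaloisConnection f u) : dualMap f = u := by
  funext a
  have hs : {b : ℤ | f b ≤ a} = Set.Iic (u a) := Set.ext fun b => h b a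
  rw [dualMap, hs, csSup_Iic]

theorem IsCyclicCover.isCyclicCover_dualMap {m n : ℕ} {f : ℤ → ℤ} (hn : 0 < n)
    (hf : IsCyclicCover m n f) : IsCyclicCover n m (dualMap f) := by
  have gc := hf.gc_dualMap hn
  refine ⟨gc.monotone_u, fun a => eq_of_forall_le_iff fun b => ?_⟩
  have hb := hf.2 (b - m)
  rw [sub_add_cancel] at hb
  rw [← gc b, hb, add_le_add_iff_right, gc (b - m), sub_le_iff_le_add]

/-- Over `ℤ`, negating the adjunction `f ⊣ dualMap f` produces an upper adjoint of `dualMap f`. -/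
theorem IsCyclicCover.gc_dualMap_shift {m n : ℕ} {f : ℤ → ℤ} (hn : 0 < n)
    (hf : IsCyclicCover m n f) :
    GaloisConnection (dualMap f) (fun a => f (a + 1) - 1) := fun b a => by
  have h := hf.gc_dualMap hn (a + 1) b
  dsimp only
  omega

/-- For positive integers `m, n`, let `M(m,n)` be the set of monotone maps
`f : ℤ → ℤ` with `f(a+m) = f(a)+n` (the morphisms `Λ_∞([m],[n])`).  Then:
(a) for `f ∈ M(m,n)` and `a ∈ ℤ` the set `{b | f b ≤ a}` is nonempty and bounded above, so
`D(f)(a) = max {b | f b ≤ a}` is well-defined (it is the greatest element of that set), and one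
has the adjunction `f b ≤ a ⟺ b ≤ D(f)(a)`;
(b) `D(f) ∈ M(n,m)`;
(c) for `f ∈ M(m,n)`, `g ∈ M(n,q)` one has `D(g∘f) = D(f)∘D(g)`;
(d) `D(D(f))(a) = f(a+1) − 1`, so `D` is a duality of `Λ_∞` with its opposite category. -/
theorem lambdaInfty_duality (m n q : ℕ) (hm : 0 < m) (hn : 0 < n) (hq : 0 < q) :
    -- (a)
    (∀ f : ℤ → ℤ, IsCyclicCover m n f → ∀ a : ℤ,
        {b : ℤ | f b ≤ a}.Nonempty ∧ BddAbove {b : ℤ | f b ≤ a} ∧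
        IsGreatest {b : ℤ | f b ≤ a} (dualMap f a) ∧
        (∀ b : ℤ, f b ≤ a ↔ b ≤ dualMap f a)) ∧
    -- (b)
    (∀ f : ℤ → ℤ, IsCyclicCover m n f → IsCyclicCover n m (dualMap f)) ∧
    -- (c)
    (∀ f g : ℤ → ℤ, IsCyclicCover m n f → IsCyclicCover n q g →
        dualMap (g ∘ f) = dualMap f ∘ dualMap g) ∧
    -- (d)
    (∀ f : ℤ → ℤ, IsCyclicCover m n f → ∀ a : ℤ,
        dualMap (dualMap f) a = f (a + 1) - 1) := by
  exact ⟨fun f hf a => ⟨hf.nonempty_sublevel hn a, hf.bddAbove_sublevel hn a,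
      hf.isGreatest_dualMap hn a, fun b => hf.gc_dualMap hn b a⟩,
    fun f hf => hf.isCyclicCover_dualMap hn,
    fun f g hf hg => dualMap_eq_of_gc ((hf.gc_dualMap hn).compose (hg.gc_dualMap hq)),
    fun f hf a => congrFun (dualMap_eq_of_gc (hf.gc_dualMap_shift hn)) a⟩
end
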